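/- Weighted fractional interpolation inequality on Euclidean space (Theorem 1.4): Let n ≥ 1 be an integer, s ∈ (0, n), q⋆ = 2n/(n−s), q ∈ (2, q⋆), β = 2n(1 − q/q⋆), and κ_{n,s} = Γ((n−s)/2)/Γ((n+s)/2). Set a = ((q−2)/(q⋆−2)) · κ_{n,s} · 2^{n(2/q⋆ − 2/q)} · |Sⁿ|^{2/q − 1} and b = ((q⋆−q)/(q⋆−2)) · 2^{n(1 − 2/q)} · |Sⁿ|^{2/q − 1}. Then for every real-valued Schwartz function f on ℝⁿ, ( ∫_{ℝⁿ} |f(x)|^q (1+|x|²)^{−β/2} dx )^{2/q} ≤ a · ‖f‖²_{Ḣ^{s/2}} + b · ∫_{ℝⁿ} |f(x)|² (1+|x|²)^{−s} dx. -/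

import Mathlib

open MeasureTheory Real SchwartzMap
open scoped FourierTransform

/-- The homogeneous Sobolev seminorm squared `‖f‖²_{Ḣ^{s/2}}` of a Schwartz function
`f` on `ℝⁿ`, written via the Fourier transform. -/
noncomputable def homogSobolevNormSq (n : ℕ) (s : ℝ)
    (f : SchwartzMap (EuclideanSpace ℝ (Fin n)) ℝ) : ℝ :=
  ∫ ξ : EuclideanSpace ℝ (Fin n),
    (2 * π * ‖ξ‖) ^ s * ‖𝓕 (fun x => (f x : ℂ)) ξ‖ ^ 2

/-!
Stereographic projection turns the inequality into Beckner's interpolation inequality on `Sⁿ`,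
which is proved in dual form. The quadratic form of the kernel `|ω - η|^(-2a)` on `Sⁿ` is
invariant under the conformal group; infinitesimally, translations and dilations act on spherical
polynomials by a triangular recursion, which gives the Funk–Hecke eigenvalues. Comparing these at
the exponents `a = n/q` and `a = n/q⋆` bounds one form by the other. The two ends of the comparison
are the sharp Hardy–Littlewood–Sobolev inequality at `n/q` and, through the Fourier transform of
`|x|^(-2a)`, the duality with the Sobolev seminorm at `n/q⋆`. For the sharp inequality, a
near-maximiser is moved by a conformal map so that its centre of mass vanishes; the second variation
in the directions of the coordinate functions, together with the spectral gap of the form, then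
leaves only constants.
-/

namespace FractionalInterpolation

section Lintegral

theorem lintegral_rpow_mul_exp_neg_mul_Ioi {r b : ℝ} (hr : 0 < r) (hb : 0 < b) :
    ∫⁻ t in Set.Ioi (0 : ℝ), ENNReal.ofReal (t ^ (r - 1) * exp (-(b * t)))
      = ENNReal.ofReal (Gamma r * b ^ (-r)) := by
  have h := Real.integral_rpow_mul_exp_neg_mul_Ioi hr hb
  have hint : IntegrableOn (fun t : ℝ => t ^ (r - 1) * exp (-(b * t))) (Set.Ioi 0) := by
    refine Integrable.of_integral_ne_zero (h.trans_ne ?_)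
    have := Gamma_pos_of_pos hr
    positivity
  rw [← ofReal_integral_eq_lintegral_ofReal hint, h, one_div, inv_rpow hb.le, rpow_neg hb.le,
    mul_comm]
  filter_upwards [ae_restrict_mem measurableSet_Ioi] with t (ht : 0 < t)
  positivity

variable {V : Type*} [NormedAddCommGroup V] [InnerProductSpace ℝ V] [FiniteDimensional ℝ V]
  [MeasurableSpace V] [BorelSpace V]

theorem integrable_exp_neg_mul_sq_norm {b : ℝ} (hb : 0 < b) :
    Integrable fun x : V => exp (-(b * ‖x‖ ^ 2)) := by
  refine Integrable.of_integral_ne_zero ?_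
  simp only [← neg_mul, GaussianFourier.integral_rexp_neg_mul_sq_norm hb]
  positivity

theorem lintegral_exp_neg_mul_sq_norm {b : ℝ} (hb : 0 < b) :
    ∫⁻ x : V, ENNReal.ofReal (exp (-(b * ‖x‖ ^ 2)))
      = ENNReal.ofReal ((π / b) ^ ((Module.finrank ℝ V : ℝ) / 2)) := by
  rw [← GaussianFourier.integral_rexp_neg_mul_sq_norm (V := V) hb]
  simp only [neg_mul]
  rw [ofReal_integral_eq_lintegral_ofReal (integrable_exp_neg_mul_sq_norm hb)
    (ae_of_all _ fun x => by positivity)]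

theorem lintegral_one_add_norm_sq_rpow_neg {r : ℝ} (hr : (Module.finrank ℝ V : ℝ) / 2 < r) :
    ∫⁻ x : V, ENNReal.ofReal ((1 + ‖x‖ ^ 2) ^ (-r))
      = ENNReal.ofReal (π ^ ((Module.finrank ℝ V : ℝ) / 2)
          * Gamma (r - Module.finrank ℝ V / 2) / Gamma r) := by
  set d := (Module.finrank ℝ V : ℝ)
  have hd : 0 ≤ d / 2 := by positivity
  have hr0 : 0 < r := by linarith
  have hGamma := Gamma_pos_of_pos hr0
  have hGauss : ∀ t > 0, ∫⁻ x : V, ENNReal.ofReal (t ^ (r - 1) * exp (-((1 + ‖x‖ ^ 2) * t)))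
      = ENNReal.ofReal (π ^ (d / 2)) * ENNReal.ofReal (t ^ (r - d / 2 - 1) * exp (-(1 * t))) := by
    intro t ht
    have hsplit (x : V) : ENNReal.ofReal (t ^ (r - 1) * exp (-((1 + ‖x‖ ^ 2) * t)))
        = ENNReal.ofReal (t ^ (r - 1) * exp (-t)) * ENNReal.ofReal (exp (-(t * ‖x‖ ^ 2))) := by
      rw [← ENNReal.ofReal_mul (by positivity), mul_assoc, ← exp_add]
      ring_nf
    simp only [hsplit]
    rw [lintegral_const_mul _ (by fun_prop), lintegral_exp_neg_mul_sq_norm ht,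
      ← ENNReal.ofReal_mul (by positivity), ← ENNReal.ofReal_mul (by positivity),
      div_rpow pi_pos.le ht.le, show r - d / 2 - 1 = r - 1 - d / 2 by ring, rpow_sub ht (r - 1)]
    ring_nf
    rfl
  have key : ENNReal.ofReal (Gamma r) * ∫⁻ x : V, ENNReal.ofReal ((1 + ‖x‖ ^ 2) ^ (-r))
      = ENNReal.ofReal (π ^ (d / 2) * Gamma (r - d / 2)) := by
    calc _ = ∫⁻ x : V, ∫⁻ t in Set.Ioi (0 : ℝ),
          ENNReal.ofReal (t ^ (r - 1) * exp (-((1 + ‖x‖ ^ 2) * t))) := by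
          rw [← lintegral_const_mul _ (by fun_prop)]
          congr with x
          rw [lintegral_rpow_mul_exp_neg_mul_Ioi hr0 (by positivity),
            ENNReal.ofReal_mul hGamma.le]
      _ = ∫⁻ t in Set.Ioi (0 : ℝ), ∫⁻ x : V,
          ENNReal.ofReal (t ^ (r - 1) * exp (-((1 + ‖x‖ ^ 2) * t))) :=
        lintegral_lintegral_swap (by fun_prop)
      _ = _ := by
        rw [setLIntegral_congr_fun measurableSet_Ioi fun t ht => hGauss t ht,
          lintegral_const_mul _ (by fun_prop),
          lintegral_rpow_mul_exp_neg_mul_Ioi (by linarith) one_pos,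
          ← ENNReal.ofReal_mul (by positivity), one_rpow, mul_one]
  rw [ENNReal.ofReal_div_of_pos hGamma,
    ENNReal.eq_div_iff (by simpa using hGamma) ENNReal.ofReal_ne_top, key]

open EuclideanGeometry in
theorem lintegral_eq_lintegral_inversion [Nontrivial V] (μ : Measure V) [μ.IsAddHaarMeasure]
    (x : V) {R : ℝ} (hR : R ≠ 0) (F : V → ENNReal) :
    ∫⁻ y, F y ∂μ = ∫⁻ y, ENNReal.ofReal (((R / dist y x) ^ 2) ^ Module.finrank ℝ V)
      * F (inversion x R y) ∂μ := by
  have himage : inversion x R '' {x}ᶜ = {x}ᶜ := by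
    have hmaps : ∀ y ∈ ({x}ᶜ : Set V), inversion x R y ∈ ({x}ᶜ : Set V) := fun y hy => by
      simpa [inversion_eq_center, hR] using hy
    exact (Set.mapsTo_iff_image_subset.1 hmaps).antisymm fun y hy =>
      ⟨_, hmaps y hy, inversion_inversion x hR y⟩
  have hdet (y : V) : |((R / dist y x) ^ 2 • ((ℝ ∙ (y - x))ᗮ.reflection : V →L[ℝ] V)).det|
      = ((R / dist y x) ^ 2) ^ Module.finrank ℝ V := by
    have hrefl : (((ℝ ∙ (y - x))ᗮ.reflection : V →L[ℝ] V) : V →ₗ[ℝ] V).det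
        = (-1) ^ Module.finrank ℝ ((ℝ ∙ (y - x))ᗮᗮ : Submodule ℝ V) :=
      Submodule.det_reflection _
    rw [ContinuousLinearMap.det, ContinuousLinearMap.toLinearMap_smul, LinearMap.det_smul,
      hrefl, abs_mul, abs_neg_one_pow, mul_one, abs_of_nonneg (by positivity)]
  have huniv : ({x}ᶜ : Set V) =ᵐ[μ] Set.univ := ae_eq_univ.2 (by simp)
  have hchange := lintegral_image_eq_lintegral_abs_det_fderiv_mul μ
    (measurableSet_singleton x).compl
    (fun y (hy : y ≠ x) => (hasFDerivAt_inversion (R := R) hy).hasFDerivWithinAt)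
    (inversion_injective x hR).injOn F
  rwa [himage, setLIntegral_congr huniv, setLIntegral_univ, setLIntegral_congr huniv,
    setLIntegral_univ, funext fun y => congrArg (fun d => ENNReal.ofReal d * _) (hdet y)] at hchange

end Lintegral

local notation "𝔼" n:max => EuclideanSpace ℝ (Fin n)

variable {n : ℕ}

/-- The conformal factor of inverse stereographic projection `ℝⁿ → Sⁿ ⊆ ℝⁿ⁺¹`: the round metric
pulls back to `ρ² |dx|²`. -/
noncomputable def conformalFactor (x : 𝔼 n) : ℝ := 2 / (1 + ‖x‖ ^ 2)

local notation "ρ" => conformalFactor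

/-- The surface measure of `Sⁿ` in stereographic coordinates. -/
noncomputable def sphereMeasure (n : ℕ) : Measure (𝔼 n) :=
  volume.withDensity (fun x => ENNReal.ofReal (ρ x ^ n))

local notation "σ" => sphereMeasure

/-- The power `|ω - η|^(-2a)` of the chordal distance on `Sⁿ`, in stereographic coordinates. -/
noncomputable def chordalKernel (a : ℝ) (x y : 𝔼 n) : ℝ := (‖x - y‖ ^ 2 * (ρ x * ρ y)) ^ (-a)

/-- The integral of `|ω - η|^(-2a)` over `η ∈ Sⁿ`, for `a < n / 2`. -/
noncomputable def chordalMass (n : ℕ) (a : ℝ) : ℝ :=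
  2 ^ (n - 2 * a) * (π ^ ((n : ℝ) / 2) * Gamma (n - a - n / 2) / Gamma (n - a))

theorem conformalFactor_pos (x : 𝔼 n) : 0 < ρ x := by unfold conformalFactor; positivity

theorem conformalFactor_le_two (x : 𝔼 n) : ρ x ≤ 2 :=
  div_le_self two_pos.le (by simp)

@[fun_prop]
theorem continuous_conformalFactor : Continuous (ρ : 𝔼 n → ℝ) :=
  Continuous.div (by fun_prop) (by fun_prop) fun x => by positivity

@[fun_prop]
theorem measurable_conformalFactor : Measurable (ρ : 𝔼 n → ℝ) :=
  continuous_conformalFactor.measurable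

theorem chordalKernel_nonneg (a : ℝ) (x y : 𝔼 n) : 0 ≤ chordalKernel a x y := by
  have := conformalFactor_pos x
  have := conformalFactor_pos y
  unfold chordalKernel
  positivity

theorem chordalKernel_comm (a : ℝ) (x y : 𝔼 n) : chordalKernel a x y = chordalKernel a y x := by
  unfold chordalKernel
  rw [norm_sub_rev, mul_comm (ρ x)]

theorem measurable_chordalKernel (a : ℝ) :
    Measurable (fun z : 𝔼 n × 𝔼 n => chordalKernel a z.1 z.2) := by
  unfold chordalKernel
  fun_prop

theorem chordalMass_pos {a : ℝ} (ha : a < n / 2) : 0 < chordalMass n a := by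
  have : (0 : ℝ) ≤ n := by positivity
  have := Gamma_pos_of_pos (show 0 < (n : ℝ) - a - n / 2 by linarith)
  have := Gamma_pos_of_pos (show 0 < (n : ℝ) - a by linarith)
  unfold chordalMass
  positivity

theorem conformalFactor_inversion {x y : 𝔼 n} (hxy : y ≠ x) :
    ρ (EuclideanGeometry.inversion x √(1 + ‖x‖ ^ 2) y)
      = ρ y * (dist y x ^ 2 / (1 + ‖x‖ ^ 2)) := by
  have hdist : 0 < dist y x := dist_pos.2 hxy
  have hnorm : ‖EuclideanGeometry.inversion x √(1 + ‖x‖ ^ 2) y‖ ^ 2 + 1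
      = (1 + ‖x‖ ^ 2) / dist y x ^ 2 * (1 + ‖y‖ ^ 2) := by
    have hy : ‖y‖ ^ 2 = dist y x ^ 2 + 2 * inner ℝ (y - x) x + ‖x‖ ^ 2 := by
      rw [dist_eq_norm, ← norm_add_sq_real, sub_add_cancel]
    rw [EuclideanGeometry.inversion, vsub_eq_sub, vadd_eq_add, div_pow, sq_sqrt (by positivity),
      norm_add_sq_real, norm_smul, real_inner_smul_left, mul_pow, norm_of_nonneg (by positivity),
      hy, ← dist_eq_norm]
    field_simp
    ring
  unfold conformalFactor
  rw [add_comm, hnorm]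
  field_simp

theorem chordalKernel_inversion (a : ℝ) {x y : 𝔼 n} (hxy : y ≠ x) :
    chordalKernel a x (EuclideanGeometry.inversion x √(1 + ‖x‖ ^ 2) y) = (2 * ρ y) ^ (-a) := by
  have hdist : 0 < dist y x := dist_pos.2 hxy
  have hnorm : ‖x - EuclideanGeometry.inversion x √(1 + ‖x‖ ^ 2) y‖
      = (1 + ‖x‖ ^ 2) / dist y x := by
    rw [← dist_eq_norm, dist_comm, EuclideanGeometry.dist_inversion_center,
      sq_sqrt (by positivity)]
  unfold chordalKernel
  rw [hnorm, conformalFactor_inversion hxy]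
  congr 1
  unfold conformalFactor
  field_simp

-- The inversion centred at `x` with radius `√(1 + ‖x‖²)` is an isometry of the sphere taking `x`
-- to the north pole, where the kernel only depends on the conformal factor.
theorem lintegral_chordalKernel_mul_pow [NeZero n] {a : ℝ} (ha : a < n / 2) (x : 𝔼 n) :
    ∫⁻ y, ENNReal.ofReal (chordalKernel a x y * ρ y ^ n) = ENNReal.ofReal (chordalMass n a) := by
  set R := √(1 + ‖x‖ ^ 2)
  have hR : R ^ 2 = 1 + ‖x‖ ^ 2 := sq_sqrt (by positivity)
  have hR0 : R ≠ 0 := (sqrt_pos.2 (by positivity)).ne'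
  have hpullback : ∀ y ≠ x, ENNReal.ofReal (((R / dist y x) ^ 2) ^ n)
      * ENNReal.ofReal (chordalKernel a x (EuclideanGeometry.inversion x R y)
          * ρ (EuclideanGeometry.inversion x R y) ^ n)
      = ENNReal.ofReal (2 ^ (n - 2 * a)) * ENNReal.ofReal ((1 + ‖y‖ ^ 2) ^ (-(n - a))) := by
    intro y hxy
    have hdist : 0 < dist y x := dist_pos.2 hxy
    have hρ := conformalFactor_pos y
    have hcancel : ((R / dist y x) ^ 2) ^ n
        * ((2 * ρ y) ^ (-a) * (ρ y * (dist y x ^ 2 / R ^ 2)) ^ n)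
        = (2 * ρ y) ^ (-a) * ρ y ^ n := by
      rw [mul_left_comm, ← mul_pow]
      congr 2
      field_simp
    rw [chordalKernel_inversion a hxy, conformalFactor_inversion hxy, ← hR,
      ← ENNReal.ofReal_mul (by positivity), ← ENNReal.ofReal_mul (by positivity), hcancel,
      ← rpow_natCast, mul_rpow two_pos.le hρ.le, mul_assoc, ← rpow_add hρ,
      show ρ y = 2 * (1 + ‖y‖ ^ 2)⁻¹ from div_eq_mul_inv _ _,
      mul_rpow two_pos.le (by positivity), ← mul_assoc, ← rpow_add two_pos,
      inv_rpow (by positivity), ← rpow_neg (by positivity)]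
    ring_nf
  have hdim : (Module.finrank ℝ (𝔼 n) : ℝ) = n := by simp
  rw [lintegral_eq_lintegral_inversion volume x hR0, finrank_euclideanSpace_fin,
    lintegral_congr_ae ((Measure.ae_ne volume x).mono hpullback),
    lintegral_const_mul _ (by fun_prop),
    lintegral_one_add_norm_sq_rpow_neg (by rw [hdim]; linarith), hdim,
    ← ENNReal.ofReal_mul (by positivity), chordalMass]

theorem lintegral_sphereMeasure {F : 𝔼 n → ENNReal} (hF : Measurable F) :
    ∫⁻ x, F x ∂(σ n) = ∫⁻ x, ENNReal.ofReal (ρ x ^ n) * F x := by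
  rw [sphereMeasure, lintegral_withDensity_eq_lintegral_mul _ (by fun_prop) hF]
  rfl

theorem integral_sphereMeasure (F : 𝔼 n → ℝ) :
    ∫ x, F x ∂(σ n) = ∫ x, F x * ρ x ^ n := by
  rw [sphereMeasure, integral_withDensity_eq_integral_toReal_smul (by fun_prop) (by simp)]
  congr with x
  rw [ENNReal.toReal_ofReal (pow_nonneg (conformalFactor_pos x).le n), smul_eq_mul, mul_comm]

theorem integrable_sphereMeasure_iff {F : 𝔼 n → ℝ} :
    Integrable F (σ n) ↔ Integrable (fun x => F x * ρ x ^ n) := by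
  rw [sphereMeasure, integrable_withDensity_iff (by fun_prop) (by simp)]
  simp only [ENNReal.toReal_ofReal (pow_nonneg (conformalFactor_pos _).le n)]

theorem lintegral_chordalKernel [NeZero n] {a : ℝ} (ha : a < n / 2) (x : 𝔼 n) :
    ∫⁻ y, ENNReal.ofReal (chordalKernel a x y) ∂(σ n) = ENNReal.ofReal (chordalMass n a) := by
  rw [lintegral_sphereMeasure (by unfold chordalKernel; fun_prop),
    ← lintegral_chordalKernel_mul_pow ha x]
  congr with y
  rw [mul_comm, ENNReal.ofReal_mul (chordalKernel_nonneg a x y)]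

theorem natCast_half_pos [NeZero n] : (0 : ℝ) < n / 2 := by
  have := NeZero.pos n
  positivity

theorem sphereMeasure_univ [NeZero n] : σ n Set.univ = ENNReal.ofReal (chordalMass n 0) := by
  rw [← lintegral_chordalKernel natCast_half_pos (0 : 𝔼 n)]
  simp [chordalKernel]

instance : SFinite (σ n) := by
  unfold sphereMeasure
  infer_instance

instance [NeZero n] : IsFiniteMeasure (σ n) := ⟨by simp [sphereMeasure_univ]⟩

theorem sphereMeasure_real_univ [NeZero n] : (σ n).real Set.univ = chordalMass n 0 := by
  rw [Measure.real, sphereMeasure_univ,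
    ENNReal.toReal_ofReal (chordalMass_pos natCast_half_pos).le]

theorem sphereMeasure_absolutelyContinuous : σ n ≪ volume :=
  withDensity_absolutelyContinuous _ _

theorem absolutelyContinuous_sphereMeasure : volume ≪ σ n := by
  refine withDensity_absolutelyContinuous' (by fun_prop) (ae_of_all _ fun x => ?_)
  simpa using pow_pos (conformalFactor_pos x) n

theorem integrable_chordalKernel [NeZero n] {a : ℝ} (ha : a < n / 2) (x : 𝔼 n) :
    Integrable (chordalKernel a x) (σ n) := by
  refine ⟨((measurable_chordalKernel a).comp measurable_prodMk_left).aestronglyMeasurable, ?_⟩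
  rw [hasFiniteIntegral_iff_ofReal (ae_of_all _ (chordalKernel_nonneg a x)),
    lintegral_chordalKernel ha x]
  exact ENNReal.ofReal_lt_top

theorem integral_chordalKernel [NeZero n] {a : ℝ} (ha : a < n / 2) (x : 𝔼 n) :
    ∫ y, chordalKernel a x y ∂(σ n) = chordalMass n a := by
  rw [integral_eq_lintegral_of_nonneg_ae (ae_of_all _ (chordalKernel_nonneg a x))
    (integrable_chordalKernel ha x).1, lintegral_chordalKernel ha x,
    ENNReal.toReal_ofReal (chordalMass_pos ha).le]

section RieszForm

theorem integrable_fst_mul_chordalKernel [NeZero n] {a : ℝ} (ha : a < n / 2) {F : 𝔼 n → ℝ}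
    (hF : Integrable F (σ n)) :
    Integrable (fun z : 𝔼 n × 𝔼 n => F z.1 * chordalKernel a z.1 z.2) ((σ n).prod (σ n)) := by
  have hmeas : AEStronglyMeasurable (fun z : 𝔼 n × 𝔼 n => F z.1 * chordalKernel a z.1 z.2)
      ((σ n).prod (σ n)) :=
    hF.1.comp_fst.mul (measurable_chordalKernel a).aestronglyMeasurable
  have hnorm (x : 𝔼 n) :
      ∫ y, ‖F x * chordalKernel a x y‖ ∂(σ n) = ‖F x‖ * chordalMass n a := by
    simp_rw [norm_mul, norm_of_nonneg (chordalKernel_nonneg a x _)]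
    rw [integral_const_mul, integral_chordalKernel ha]
  rw [integrable_prod_iff hmeas]
  constructor
  · filter_upwards with x using (integrable_chordalKernel ha x).const_mul _
  · simp only [hnorm]
    exact hF.norm.mul_const _

theorem integral_fst_mul_chordalKernel [NeZero n] {a : ℝ} (ha : a < n / 2) {F : 𝔼 n → ℝ}
    (hF : Integrable F (σ n)) :
    ∫ z : 𝔼 n × 𝔼 n, F z.1 * chordalKernel a z.1 z.2 ∂((σ n).prod (σ n))
      = chordalMass n a * ∫ x, F x ∂(σ n) := by
  rw [integral_prod _ (integrable_fst_mul_chordalKernel ha hF)]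
  simp only [integral_const_mul, integral_chordalKernel ha]
  rw [integral_mul_const, mul_comm]

theorem integrable_snd_mul_chordalKernel [NeZero n] {a : ℝ} (ha : a < n / 2) {F : 𝔼 n → ℝ}
    (hF : Integrable F (σ n)) :
    Integrable (fun z : 𝔼 n × 𝔼 n => F z.2 * chordalKernel a z.1 z.2) ((σ n).prod (σ n)) :=
  (integrable_fst_mul_chordalKernel ha hF).swap.congr
    (ae_of_all _ fun z => by simp [chordalKernel_comm a z.2 z.1])

theorem integral_snd_mul_chordalKernel [NeZero n] {a : ℝ} (ha : a < n / 2) {F : 𝔼 n → ℝ}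
    (hF : Integrable F (σ n)) :
    ∫ z : 𝔼 n × 𝔼 n, F z.2 * chordalKernel a z.1 z.2 ∂((σ n).prod (σ n))
      = chordalMass n a * ∫ x, F x ∂(σ n) := by
  rw [← integral_fst_mul_chordalKernel ha hF, ← integral_prod_swap]
  simp only [Prod.fst_swap, Prod.snd_swap, chordalKernel_comm a (Prod.snd _)]

/-- The Riesz form `∬ f(ω) g(η) |ω - η|^(-2a) dω dη` on the sphere. -/
noncomputable def rieszForm (a : ℝ) (f g : 𝔼 n → ℝ) : ℝ :=
  ∫ z : 𝔼 n × 𝔼 n, f z.1 * g z.2 * chordalKernel a z.1 z.2 ∂((σ n).prod (σ n))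

theorem rieszForm_comm (a : ℝ) (f g : 𝔼 n → ℝ) : rieszForm a f g = rieszForm a g f := by
  unfold rieszForm
  rw [← integral_prod_swap]
  congr with z
  rw [Prod.fst_swap, Prod.snd_swap, chordalKernel_comm a z.2 z.1, mul_comm (f z.2)]

theorem rieszForm_congr_ae {a : ℝ} {f f' g g' : 𝔼 n → ℝ} (hf : f =ᵐ[σ n] f')
    (hg : g =ᵐ[σ n] g') :
    rieszForm a f g = rieszForm a f' g' := by
  refine integral_congr_ae ?_
  filter_upwards [Measure.quasiMeasurePreserving_fst.ae_eq_comp hf,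
    Measure.quasiMeasurePreserving_snd.ae_eq_comp hg] with z hfz hgz
  simp only [Function.comp_apply] at hfz hgz
  rw [hfz, hgz]

theorem rieszForm_smul_left (a c : ℝ) (f g : 𝔼 n → ℝ) :
    rieszForm a (c • f) g = c * rieszForm a f g := by
  unfold rieszForm
  rw [← integral_const_mul]
  simp only [Pi.smul_apply, smul_eq_mul, mul_assoc]

theorem rieszForm_smul_right (a c : ℝ) (f g : 𝔼 n → ℝ) :
    rieszForm a f (c • g) = c * rieszForm a f g := by
  rw [rieszForm_comm, rieszForm_smul_left, rieszForm_comm]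

theorem abs_mul_mul_chordalKernel_le (a : ℝ) (f g : 𝔼 n → ℝ) {c : ℝ} (hc : 0 < c) (x y : 𝔼 n) :
    ‖f x * g y * chordalKernel a x y‖ ≤ c / 2 * (f x ^ 2 * chordalKernel a x y)
      + c⁻¹ / 2 * (g y ^ 2 * chordalKernel a x y) := by
  have hsq : c / 2 * f x ^ 2 + c⁻¹ / 2 * g y ^ 2 - |f x| * |g y|
      = c⁻¹ / 2 * (c * |f x| - |g y|) ^ 2 := by
    rw [← sq_abs (f x), ← sq_abs (g y)]
    field_simp
    ring
  have hsq_nonneg : 0 ≤ c⁻¹ / 2 * (c * |f x| - |g y|) ^ 2 := by positivity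
  rw [norm_mul, norm_of_nonneg (chordalKernel_nonneg a x y), norm_eq_abs, abs_mul, ← mul_assoc,
    ← mul_assoc, ← add_mul]
  exact mul_le_mul_of_nonneg_right (by linarith) (chordalKernel_nonneg a x y)

section

variable [NeZero n] {a : ℝ} {f f' g g' : 𝔼 n → ℝ}

theorem integrable_rieszForm (ha : a < n / 2) (hf : MemLp f 2 (σ n)) (hg : MemLp g 2 (σ n)) :
    Integrable (fun z : 𝔼 n × 𝔼 n => f z.1 * g z.2 * chordalKernel a z.1 z.2)
      ((σ n).prod (σ n)) :=
  (((integrable_fst_mul_chordalKernel ha hf.integrable_sq).const_mul _).add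
    ((integrable_snd_mul_chordalKernel ha hg.integrable_sq).const_mul _)).mono'
    ((hf.1.comp_fst.mul hg.1.comp_snd).mul (measurable_chordalKernel a).aestronglyMeasurable)
    (ae_of_all _ fun z => abs_mul_mul_chordalKernel_le a f g one_pos z.1 z.2)

theorem abs_rieszForm_le (ha : a < n / 2) (hf : MemLp f 2 (σ n)) (hg : MemLp g 2 (σ n)) {c : ℝ}
    (hc : 0 < c) :
    |rieszForm a f g|
      ≤ chordalMass n a * (c * ∫ x, f x ^ 2 ∂(σ n) + c⁻¹ * ∫ x, g x ^ 2 ∂(σ n)) / 2 := by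
  have hf2 := (integrable_fst_mul_chordalKernel ha hf.integrable_sq).const_mul (c / 2)
  have hg2 := (integrable_snd_mul_chordalKernel ha hg.integrable_sq).const_mul (c⁻¹ / 2)
  refine (norm_integral_le_of_norm_le (hf2.add hg2)
    (ae_of_all _ fun z => abs_mul_mul_chordalKernel_le a f g hc z.1 z.2)).trans_eq ?_
  rw [integral_add' hf2 hg2, integral_const_mul, integral_const_mul,
    integral_fst_mul_chordalKernel ha hf.integrable_sq,
    integral_snd_mul_chordalKernel ha hg.integrable_sq]
  ring

theorem rieszForm_add_left (ha : a < n / 2) (hf : MemLp f 2 (σ n)) (hf' : MemLp f' 2 (σ n))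
    (hg : MemLp g 2 (σ n)) : rieszForm a (f + f') g = rieszForm a f g + rieszForm a f' g := by
  unfold rieszForm
  rw [← integral_add (integrable_rieszForm ha hf hg) (integrable_rieszForm ha hf' hg)]
  simp only [Pi.add_apply, add_mul]

theorem rieszForm_add_right (ha : a < n / 2) (hf : MemLp f 2 (σ n)) (hg : MemLp g 2 (σ n))
    (hg' : MemLp g' 2 (σ n)) : rieszForm a f (g + g') = rieszForm a f g + rieszForm a f g' := by
  rw [rieszForm_comm, rieszForm_add_left ha hg hg' hf, rieszForm_comm a g, rieszForm_comm a g']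

theorem rieszForm_sub_left (ha : a < n / 2) (hf : MemLp f 2 (σ n)) (hf' : MemLp f' 2 (σ n))
    (hg : MemLp g 2 (σ n)) : rieszForm a (f - f') g = rieszForm a f g - rieszForm a f' g := by
  rw [sub_eq_add_neg, ← neg_one_smul ℝ f', rieszForm_add_left ha hf (hf'.const_smul _) hg,
    rieszForm_smul_left]
  ring

theorem rieszForm_sub_right (ha : a < n / 2) (hf : MemLp f 2 (σ n)) (hg : MemLp g 2 (σ n))
    (hg' : MemLp g' 2 (σ n)) : rieszForm a f (g - g') = rieszForm a f g - rieszForm a f g' := by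
  rw [rieszForm_comm, rieszForm_sub_left ha hg hg' hf, rieszForm_comm a g, rieszForm_comm a g']

end

theorem integral_sq_eq_norm_sq {α : Type*} {m : MeasurableSpace α} {μ : Measure α}
    (f : Lp ℝ 2 μ) : ∫ x, f x ^ 2 ∂μ = ‖f‖ ^ 2 := by
  rw [← real_inner_self_eq_norm_sq, L2.inner_def]
  simp [sq]

variable [NeZero n] {a : ℝ}

theorem abs_rieszForm_le_mul_norm (ha : a < n / 2) (f g : Lp ℝ 2 (σ n)) :
    |rieszForm a f g| ≤ chordalMass n a * ‖f‖ * ‖g‖ := by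
  have hbound (c : ℝ) (hc : 0 < c) := abs_rieszForm_le ha (Lp.memLp f) (Lp.memLp g) hc
  simp only [integral_sq_eq_norm_sq] at hbound
  rcases eq_or_ne f 0 with rfl | hf
  · rw [rieszForm_congr_ae (Lp.coeFn_zero ℝ 2 (σ n)) (ae_eq_refl g)]
    simp [rieszForm]
  rcases eq_or_ne g 0 with rfl | hg
  · rw [rieszForm_congr_ae (ae_eq_refl f) (Lp.coeFn_zero ℝ 2 (σ n))]
    simp [rieszForm]
  have : 0 < ‖f‖ := norm_pos_iff.2 hf
  have : 0 < ‖g‖ := norm_pos_iff.2 hg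
  refine (hbound (‖g‖ / ‖f‖) (by positivity)).trans_eq ?_
  field_simp
  ring

/-- The Riesz form as a continuous bilinear form on `L²(Sⁿ)`. -/
noncomputable def rieszFormL2 (n : ℕ) [NeZero n] {a : ℝ} (ha : a < n / 2) :
    Lp ℝ 2 (σ n) →L[ℝ] Lp ℝ 2 (σ n) →L[ℝ] ℝ :=
  LinearMap.mkContinuous₂
    (LinearMap.mk₂ ℝ (fun f g => rieszForm a f g)
      (fun f f' g => by
        rw [← rieszForm_add_left ha (Lp.memLp f) (Lp.memLp f') (Lp.memLp g)]
        exact rieszForm_congr_ae (Lp.coeFn_add f f') (ae_eq_refl _))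
      (fun c f g => by
        rw [smul_eq_mul, ← rieszForm_smul_left]
        exact rieszForm_congr_ae (Lp.coeFn_smul c f) (ae_eq_refl _))
      (fun f g g' => by
        rw [← rieszForm_add_right ha (Lp.memLp f) (Lp.memLp g) (Lp.memLp g')]
        exact rieszForm_congr_ae (ae_eq_refl _) (Lp.coeFn_add g g'))
      (fun c f g => by
        rw [smul_eq_mul, ← rieszForm_smul_right]
        exact rieszForm_congr_ae (ae_eq_refl _) (Lp.coeFn_smul c g)))
    (chordalMass n a) (abs_rieszForm_le_mul_norm ha)

theorem rieszFormL2_toLp (ha : a < n / 2) {f g : 𝔼 n → ℝ} (hf : MemLp f 2 (σ n))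
    (hg : MemLp g 2 (σ n)) : rieszFormL2 n ha (hf.toLp f) (hg.toLp g) = rieszForm a f g :=
  rieszForm_congr_ae hf.coeFn_toLp hg.coeFn_toLp

theorem rieszFormL2_comm (ha : a < n / 2) (f g : Lp ℝ 2 (σ n)) :
    rieszFormL2 n ha f g = rieszFormL2 n ha g f :=
  rieszForm_comm a f g

end RieszForm

/-- The coordinate functions of `Sⁿ ⊆ ℝⁿ × ℝ` in stereographic coordinates; the last coordinate is
indexed by `none`. -/
noncomputable def sphereCoord (i : Option (Fin n)) (x : 𝔼 n) : ℝ :=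
  i.elim (1 - ρ x) fun j => ρ x * x j

local notation "ω" => sphereCoord

/-- The generators of the dilations (`none`) and of the translations (`some j`) of `ℝⁿ`. Together
with the rotations they span the affine conformal vector fields. -/
noncomputable def conformalField (i : Option (Fin n)) (x : 𝔼 n) : 𝔼 n :=
  i.elim x fun j => EuclideanSpace.single j 1

/-- The derivative of `P` along `conformalField i`. -/
noncomputable def conformalDeriv (i : Option (Fin n)) (P : 𝔼 n → ℝ) (x : 𝔼 n) : ℝ :=
  fderiv ℝ P x (conformalField i x)

local notation "D" => conformalDeriv

@[simp]
theorem sphereCoord_none (x : 𝔼 n) : ω none x = 1 - ρ x := rfl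

@[simp]
theorem sphereCoord_some (j : Fin n) (x : 𝔼 n) : ω (some j) x = ρ x * x j := rfl

theorem conformalFactor_mul_norm_sq (x : 𝔼 n) : ρ x * ‖x‖ ^ 2 = 2 - ρ x := by
  unfold conformalFactor
  field_simp
  ring

theorem hasFDerivAt_conformalFactor (x : 𝔼 n) :
    HasFDerivAt (ρ : 𝔼 n → ℝ) (-(ρ x ^ 2) • innerSL ℝ x) x := by
  have hdenom : HasFDerivAt (fun x : 𝔼 n => 1 + ‖x‖ ^ 2) (2 • innerSL ℝ x) x :=
    (hasStrictFDerivAt_norm_sq x).hasFDerivAt.const_add 1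
  have hinv := ((hasDerivAt_inv (x := 1 + ‖x‖ ^ 2) (by positivity)).comp_hasFDerivAt x
    hdenom).const_mul 2
  refine (hinv.congr_fderiv ?_).congr_of_eventuallyEq
    (.of_forall fun y => by simp [conformalFactor, div_eq_mul_inv])
  ext v
  simp only [smul_apply, smul_eq_mul, innerSL_apply_apply, conformalFactor, nsmul_eq_mul]
  push_cast
  field_simp

theorem contDiff_conformalFactor : ContDiff ℝ 1 (ρ : 𝔼 n → ℝ) :=
  contDiff_const.div (contDiff_const.add (contDiff_norm_sq ℝ)) fun x => by positivity

theorem contDiff_coord (j : Fin n) : ContDiff ℝ 1 (fun x : 𝔼 n => x j) :=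
  (EuclideanSpace.proj (𝕜 := ℝ) j).contDiff

theorem contDiff_sphereCoord (i : Option (Fin n)) : ContDiff ℝ 1 (ω i) := by
  cases i with
  | none => exact contDiff_const.sub contDiff_conformalFactor
  | some j => exact contDiff_conformalFactor.mul (contDiff_coord j)

theorem sum_sphereCoord_mul (x y : 𝔼 n) :
    ∑ i, ω i x * ω i y = 1 - ‖x - y‖ ^ 2 * (ρ x * ρ y) / 2 := by
  have hinner : ∑ j, ρ x * x j * (ρ y * y j) = ρ x * ρ y * inner ℝ x y := by
    rw [PiLp.inner_apply, Finset.mul_sum]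
    exact Finset.sum_congr rfl fun j _ => by simp; ring
  rw [Fintype.sum_option]
  simp only [sphereCoord_none, sphereCoord_some]
  rw [hinner, norm_sub_sq_real]
  linear_combination (ρ y / 2) * conformalFactor_mul_norm_sq x
    + (ρ x / 2) * conformalFactor_mul_norm_sq y

theorem sum_sphereCoord_sq (x : 𝔼 n) : ∑ i, ω i x ^ 2 = 1 := by
  simpa [sq] using sum_sphereCoord_mul x x

theorem abs_sphereCoord_le_one (i : Option (Fin n)) (x : 𝔼 n) : |ω i x| ≤ 1 := by
  rw [← sq_le_one_iff_abs_le_one, ← sum_sphereCoord_sq x]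
  exact Finset.single_le_sum (f := fun i => ω i x ^ 2) (fun i _ => sq_nonneg _)
    (Finset.mem_univ i)

theorem conformalDeriv_some_conformalFactor (j : Fin n) (x : 𝔼 n) :
    D (some j) ρ x = -ρ x * ω (some j) x := by
  rw [conformalDeriv, (hasFDerivAt_conformalFactor x).fderiv]
  simp [conformalField, PiLp.inner_apply]
  ring

theorem conformalDeriv_none_conformalFactor (x : 𝔼 n) : D none ρ x = -ρ x * (1 + ω none x) := by
  rw [conformalDeriv, (hasFDerivAt_conformalFactor x).fderiv]
  simp only [conformalField, Option.elim_none, smul_apply, innerSL_apply_apply, smul_eq_mul,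
    real_inner_self_eq_norm_sq, sphereCoord_none]
  linear_combination (-ρ x) * conformalFactor_mul_norm_sq x

theorem conformalDeriv_mul {P Q : 𝔼 n → ℝ} (hP : ContDiff ℝ 1 P) (hQ : ContDiff ℝ 1 Q)
    (i : Option (Fin n)) : D i (P * Q) = P * D i Q + D i P * Q := by
  ext x
  rw [conformalDeriv, fderiv_mul (hP.differentiable one_ne_zero).differentiableAt
    (hQ.differentiable one_ne_zero).differentiableAt]
  simp [conformalDeriv, mul_comm]

theorem conformalDeriv_add {P Q : 𝔼 n → ℝ} (hP : ContDiff ℝ 1 P) (hQ : ContDiff ℝ 1 Q)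
    (i : Option (Fin n)) : D i (P + Q) = D i P + D i Q := by
  ext x
  rw [conformalDeriv, fderiv_add (hP.differentiable one_ne_zero).differentiableAt
    (hQ.differentiable one_ne_zero).differentiableAt]
  rfl

theorem conformalDeriv_smul {P : 𝔼 n → ℝ} (hP : ContDiff ℝ 1 P) (c : ℝ) (i : Option (Fin n)) :
    D i (c • P) = c • D i P := by
  ext x
  rw [conformalDeriv, fderiv_const_smul (hP.differentiable one_ne_zero).differentiableAt]
  rfl

theorem conformalDeriv_const (c : ℝ) (i : Option (Fin n)) : D i (fun _ => c) = 0 := by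
  ext x
  simp [conformalDeriv]

theorem conformalDeriv_coord (i : Option (Fin n)) (j : Fin n) (x : 𝔼 n) :
    D i (fun x => x j) x = conformalField i x j := by
  change fderiv ℝ (EuclideanSpace.proj (𝕜 := ℝ) j) x (conformalField i x) = _
  rw [ContinuousLinearMap.fderiv]
  rfl

theorem conformalDeriv_sphereCoord_none (i : Option (Fin n)) (x : 𝔼 n) :
    D i (ω none) x = -D i ρ x := by
  change fderiv ℝ (fun x => 1 - ρ x) x _ = _
  rw [fderiv_const_sub]
  rfl

theorem conformalDeriv_sphereCoord_some (i : Option (Fin n)) (j : Fin n) (x : 𝔼 n) :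
    D i (ω (some j)) x = ρ x * conformalField i x j + D i ρ x * x j := by
  rw [← conformalDeriv_coord]
  exact congrFun (conformalDeriv_mul contDiff_conformalFactor (contDiff_coord j) i) x

/-- The restrictions to `Sⁿ` of the affine functions on `ℝⁿ⁺¹`. -/
noncomputable def sphericalAffine (n : ℕ) : Submodule ℝ (𝔼 n → ℝ) :=
  Submodule.span ℝ (insert 1 (Set.range sphereCoord))

/-- The restrictions to `Sⁿ` of the polynomials of degree at most `k` on `ℝⁿ⁺¹`. -/
noncomputable def sphericalPoly (n k : ℕ) : Submodule ℝ (𝔼 n → ℝ) := sphericalAffine n ^ k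

theorem one_mem_sphericalAffine : 1 ∈ sphericalAffine n :=
  Submodule.subset_span (Set.mem_insert _ _)

theorem sphereCoord_mem_sphericalAffine (i : Option (Fin n)) : ω i ∈ sphericalAffine n :=
  Submodule.subset_span (Set.mem_insert_of_mem _ ⟨i, rfl⟩)

theorem const_mem_sphericalAffine (c : ℝ) : (fun _ => c) ∈ sphericalAffine n := by
  convert (sphericalAffine n).smul_mem c one_mem_sphericalAffine
  simp

theorem sphericalPoly_mono : Monotone (sphericalPoly n) := fun _ _ hkl =>
  pow_right_mono₀ (Submodule.one_le.2 one_mem_sphericalAffine) hkl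

theorem sphericalPoly_le_succ (k : ℕ) : sphericalPoly n k ≤ sphericalPoly n (k + 1) :=
  sphericalPoly_mono k.le_succ

theorem mul_mem_sphericalPoly {k l : ℕ} {P Q : 𝔼 n → ℝ} (hP : P ∈ sphericalPoly n k)
    (hQ : Q ∈ sphericalPoly n l) : P * Q ∈ sphericalPoly n (k + l) := by
  rw [sphericalPoly, pow_add]
  exact Submodule.mul_mem_mul hP hQ

theorem sphereCoord_mul_mem {k : ℕ} {P : 𝔼 n → ℝ} (hP : P ∈ sphericalPoly n k)
    (i : Option (Fin n)) : ω i * P ∈ sphericalPoly n (k + 1) := by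
  rw [sphericalPoly, pow_succ']
  exact Submodule.mul_mem_mul (sphereCoord_mem_sphericalAffine i) hP

theorem one_mem_sphericalPoly (k : ℕ) : 1 ∈ sphericalPoly n k :=
  sphericalPoly_mono k.zero_le (Submodule.one_le.1 (pow_zero _).ge)

theorem mem_sphericalPoly_zero {P : 𝔼 n → ℝ} : P ∈ sphericalPoly n 0 ↔ ∃ c : ℝ, c • 1 = P := by
  rw [sphericalPoly, pow_zero, Submodule.one_eq_span, Submodule.mem_span_singleton]

theorem sphereCoord_mem_sphericalPoly_one (i : Option (Fin n)) : ω i ∈ sphericalPoly n 1 := by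
  rw [sphericalPoly, pow_one]
  exact sphereCoord_mem_sphericalAffine i

theorem fg_sphericalPoly (k : ℕ) : (sphericalPoly n k).FG :=
  .pow (Submodule.fg_span ((Set.finite_range _).insert 1)) k

theorem sphericalPoly_le_adjoin (k : ℕ) :
    sphericalPoly n k ≤ (Algebra.adjoin ℝ (Set.range (sphereCoord (n := n)))).toSubmodule := by
  have haffine : sphericalAffine n ≤ (Algebra.adjoin ℝ (Set.range sphereCoord)).toSubmodule :=
    Submodule.span_le.2 (Set.insert_subset (Subalgebra.one_mem _) Algebra.subset_adjoin)
  induction k with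
  | zero => exact Submodule.one_le.2 (Subalgebra.one_mem _)
  | succ k ih =>
    rw [sphericalPoly, pow_succ]
    exact Submodule.mul_le.2 fun P hP Q hQ => Subalgebra.mul_mem _ (ih hP) (haffine hQ)

theorem contDiff_of_mem_sphericalPoly {k : ℕ} {P : 𝔼 n → ℝ} (hP : P ∈ sphericalPoly n k) :
    ContDiff ℝ 1 P := by
  replace hP := sphericalPoly_le_adjoin k hP
  induction hP using Algebra.adjoin_induction with
  | mem f hf =>
    obtain ⟨i, rfl⟩ := hf
    exact contDiff_sphereCoord i
  | algebraMap c => exact contDiff_const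
  | add f g _ _ hf hg => exact hf.add hg
  | mul f g _ _ hf hg => exact hf.mul hg

theorem exists_abs_le_of_mem_sphericalPoly {k : ℕ} {P : 𝔼 n → ℝ} (hP : P ∈ sphericalPoly n k) :
    ∃ C, ∀ x, |P x| ≤ C := by
  replace hP := sphericalPoly_le_adjoin k hP
  induction hP using Algebra.adjoin_induction with
  | mem f hf =>
    obtain ⟨i, rfl⟩ := hf
    exact ⟨1, abs_sphereCoord_le_one i⟩
  | algebraMap c => exact ⟨|c|, fun x => le_rfl⟩
  | add f g _ _ hf hg =>
    obtain ⟨⟨C, hC⟩, ⟨C', hC'⟩⟩ := And.intro hf hg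
    exact ⟨C + C', fun x => (abs_add_le _ _).trans (add_le_add (hC x) (hC' x))⟩
  | mul f g _ _ hf hg =>
    obtain ⟨⟨C, hC⟩, ⟨C', hC'⟩⟩ := And.intro hf hg
    refine ⟨C * C', fun x => (abs_mul _ _).trans_le ?_⟩
    exact mul_le_mul (hC x) (hC' x) (abs_nonneg _) ((abs_nonneg _).trans (hC x))

theorem memLp_of_mem_sphericalPoly [NeZero n] {k : ℕ} {P : 𝔼 n → ℝ}
    (hP : P ∈ sphericalPoly n k) (p : ENNReal) : MemLp P p (σ n) :=
  have ⟨C, hC⟩ := exists_abs_le_of_mem_sphericalPoly hP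
  .of_bound (contDiff_of_mem_sphericalPoly hP).continuous.aestronglyMeasurable C (ae_of_all _ hC)

theorem conformalDeriv_sphereCoord_add_mem (i j : Option (Fin n)) :
    D i (ω j) + ω i * ω j ∈ sphericalAffine n := by
  match i, j with
  | none, none =>
    convert const_mem_sphericalAffine (n := n) 1 using 1
    ext x
    simp only [Pi.add_apply, Pi.mul_apply, conformalDeriv_sphereCoord_none,
      conformalDeriv_none_conformalFactor, sphereCoord_none]
    ring
  | none, some j =>
    convert const_mem_sphericalAffine (n := n) 0 using 1
    ext x
    simp only [Pi.add_apply, Pi.mul_apply, conformalDeriv_sphereCoord_some,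
      conformalDeriv_none_conformalFactor, sphereCoord_none, sphereCoord_some, conformalField,
      Option.elim_none]
    ring
  | some i, none =>
    convert sphereCoord_mem_sphericalAffine (some i) using 1
    ext x
    simp only [Pi.add_apply, Pi.mul_apply, conformalDeriv_sphereCoord_none,
      conformalDeriv_some_conformalFactor, sphereCoord_none, sphereCoord_some]
    ring
  | some i, some j =>
    convert (sphericalAffine n).smul_mem (if j = i then 1 else 0)
      ((sphericalAffine n).sub_mem one_mem_sphericalAffine (sphereCoord_mem_sphericalAffine none))
      using 1
    ext x
    simp only [Pi.add_apply, Pi.mul_apply, conformalDeriv_sphereCoord_some,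
      conformalDeriv_some_conformalFactor, sphereCoord_none, sphereCoord_some, conformalField,
      Option.elim_some, PiLp.single_apply, Pi.smul_apply, Pi.sub_apply, Pi.one_apply,
      smul_eq_mul]
    ring

theorem conformalDeriv_add_mem_sphericalAffine (i : Option (Fin n)) {P : 𝔼 n → ℝ}
    (hP : P ∈ sphericalAffine n) : ContDiff ℝ 1 P ∧ D i P + ω i * P ∈ sphericalAffine n := by
  induction hP using Submodule.span_induction with
  | mem P hP =>
    rcases hP with rfl | ⟨j, rfl⟩
    · refine ⟨contDiff_const, ?_⟩
      rw [mul_one, show D i 1 = 0 from conformalDeriv_const 1 i, zero_add]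
      exact sphereCoord_mem_sphericalAffine i
    · exact ⟨contDiff_sphereCoord j, conformalDeriv_sphereCoord_add_mem i j⟩
  | zero =>
    refine ⟨contDiff_const, ?_⟩
    rw [mul_zero, show D i 0 = 0 from conformalDeriv_const 0 i, zero_add]
    exact zero_mem _
  | add P Q _ _ hP hQ =>
    refine ⟨hP.1.add hQ.1, ?_⟩
    rw [conformalDeriv_add hP.1 hQ.1, mul_add, add_add_add_comm]
    exact add_mem hP.2 hQ.2
  | smul c P _ hP =>
    refine ⟨contDiff_const.smul hP.1, ?_⟩
    rw [conformalDeriv_smul hP.1, mul_smul_comm, ← smul_add]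
    exact Submodule.smul_mem _ c hP.2

theorem conformalDeriv_add_smul_mem (i : Option (Fin n)) {k : ℕ} {P : 𝔼 n → ℝ}
    (hP : P ∈ sphericalPoly n k) : D i P + (k : ℝ) • (ω i * P) ∈ sphericalPoly n k := by
  induction k generalizing P with
  | zero =>
    obtain ⟨c, rfl⟩ := mem_sphericalPoly_zero.1 hP
    rw [conformalDeriv_smul (P := 1) contDiff_const, show D i 1 = 0 from conformalDeriv_const 1 i]
    simp
  | succ k ih =>
    rw [sphericalPoly, pow_succ] at hP
    suffices ContDiff ℝ 1 P ∧ D i P + ((k + 1 : ℕ) : ℝ) • (ω i * P) ∈ sphericalPoly n (k + 1)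
      from this.2
    induction hP using Submodule.mul_induction_on' with
    | mem_mul_mem Q hQ L hL =>
      obtain ⟨hLdiff, hLmem⟩ := conformalDeriv_add_mem_sphericalAffine i hL
      have hQdiff := contDiff_of_mem_sphericalPoly hQ
      refine ⟨hQdiff.mul hLdiff, ?_⟩
      have hleibniz : D i (Q * L) + ((k + 1 : ℕ) : ℝ) • (ω i * (Q * L))
          = (D i Q + (k : ℝ) • (ω i * Q)) * L + Q * (D i L + ω i * L) := by
        rw [conformalDeriv_mul hQdiff hLdiff, Nat.cast_succ, add_smul, one_smul, add_mul,
          smul_mul_assoc, mul_assoc (ω i)]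
        ring
      rw [hleibniz, sphericalPoly, pow_succ]
      exact add_mem (Submodule.mul_mem_mul (ih hQ) hL) (Submodule.mul_mem_mul hQ hLmem)
    | add P _ Q _ hP hQ =>
      refine ⟨hP.1.add hQ.1, ?_⟩
      rw [conformalDeriv_add hP.1 hQ.1, mul_add, smul_add, add_add_add_comm]
      exact add_mem hP.2 hQ.2

theorem conformalDeriv_mem_sphericalPoly (i : Option (Fin n)) {k : ℕ} {P : 𝔼 n → ℝ}
    (hP : P ∈ sphericalPoly n k) : D i P ∈ sphericalPoly n (k + 1) := by
  simpa using sub_mem (sphericalPoly_le_succ k (conformalDeriv_add_smul_mem i hP))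
    (Submodule.smul_mem _ (k : ℝ) (sphereCoord_mul_mem hP i))

/-- The Riesz kernel `|x - y|^(-2a)` on `ℝⁿ`. -/
noncomputable def rieszKernel (a : ℝ) (x y : 𝔼 n) : ℝ := (‖x - y‖ ^ 2) ^ (-a)

/-- The weight `ρ^(n-a)` that intertwines the Riesz forms on `Sⁿ` and on `ℝⁿ`. -/
noncomputable def conformalWeight (a : ℝ) (x : 𝔼 n) : ℝ := ρ x ^ ((n : ℝ) - a)

/-- The Riesz form `∬ f(x) g(y) |x - y|^(-2a) dx dy` on `ℝⁿ`. -/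
noncomputable def euclideanRieszForm (a : ℝ) (f g : 𝔼 n → ℝ) : ℝ :=
  ∫ z : 𝔼 n × 𝔼 n, f z.1 * g z.2 * rieszKernel a z.1 z.2

theorem rieszKernel_nonneg (a : ℝ) (x y : 𝔼 n) : 0 ≤ rieszKernel a x y := by
  unfold rieszKernel
  positivity

theorem measurable_rieszKernel (a : ℝ) :
    Measurable (fun z : 𝔼 n × 𝔼 n => rieszKernel a z.1 z.2) := by
  unfold rieszKernel
  fun_prop

theorem conformalWeight_pos (a : ℝ) (x : 𝔼 n) : 0 < conformalWeight a x :=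
  rpow_pos_of_pos (conformalFactor_pos x) _

theorem contDiff_conformalWeight (a : ℝ) : ContDiff ℝ 1 (conformalWeight a : 𝔼 n → ℝ) :=
  contDiff_conformalFactor.rpow_const_of_ne fun x => (conformalFactor_pos x).ne'

@[fun_prop]
theorem measurable_conformalWeight (a : ℝ) : Measurable (conformalWeight a : 𝔼 n → ℝ) :=
  (contDiff_conformalWeight a).continuous.measurable

theorem chordalKernel_mul_pow (a : ℝ) (x y : 𝔼 n) :
    chordalKernel a x y * (ρ x ^ n * ρ y ^ n)
      = conformalWeight a x * conformalWeight a y * rieszKernel a x y := by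
  have hx := conformalFactor_pos x
  have hy := conformalFactor_pos y
  unfold chordalKernel conformalWeight rieszKernel
  rw [mul_rpow (by positivity) (by positivity), mul_rpow hx.le hy.le, rpow_sub hx, rpow_sub hy,
    rpow_neg hx.le, rpow_neg hy.le, rpow_natCast, rpow_natCast]
  field_simp

theorem sphereMeasure_prod_sphereMeasure :
    (σ n).prod (σ n) = (volume : Measure (𝔼 n × 𝔼 n)).withDensity
      fun z => ENNReal.ofReal (ρ z.1 ^ n * ρ z.2 ^ n) := by
  unfold sphereMeasure
  rw [prod_withDensity (by fun_prop) (by fun_prop)]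
  simp only [← ENNReal.ofReal_mul (pow_nonneg (conformalFactor_pos _).le n)]
  rfl

theorem pow_conformalFactor_mul_pow_nonneg (z : 𝔼 n × 𝔼 n) : 0 ≤ ρ z.1 ^ n * ρ z.2 ^ n :=
  mul_nonneg (pow_nonneg (conformalFactor_pos _).le n) (pow_nonneg (conformalFactor_pos _).le n)

theorem integral_sphereMeasure_prod (F : 𝔼 n × 𝔼 n → ℝ) :
    ∫ z, F z ∂((σ n).prod (σ n)) = ∫ z : 𝔼 n × 𝔼 n, F z * (ρ z.1 ^ n * ρ z.2 ^ n) := by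
  rw [sphereMeasure_prod_sphereMeasure,
    integral_withDensity_eq_integral_toReal_smul (by fun_prop) (by simp)]
  congr with z
  rw [ENNReal.toReal_ofReal (pow_conformalFactor_mul_pow_nonneg z), smul_eq_mul, mul_comm]

theorem integrable_sphereMeasure_prod_iff {F : 𝔼 n × 𝔼 n → ℝ} :
    Integrable F ((σ n).prod (σ n))
      ↔ Integrable fun z : 𝔼 n × 𝔼 n => F z * (ρ z.1 ^ n * ρ z.2 ^ n) := by
  rw [sphereMeasure_prod_sphereMeasure, integrable_withDensity_iff (by fun_prop) (by simp)]
  simp only [ENNReal.toReal_ofReal (pow_conformalFactor_mul_pow_nonneg _)]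

theorem rieszForm_eq_euclideanRieszForm (a : ℝ) (f g : 𝔼 n → ℝ) :
    rieszForm a f g = euclideanRieszForm a (f * conformalWeight a) (g * conformalWeight a) := by
  rw [rieszForm, integral_sphereMeasure_prod]
  unfold euclideanRieszForm
  congr with z
  rw [mul_assoc, chordalKernel_mul_pow]
  simp only [Pi.mul_apply]
  ring

theorem integrable_conformalWeight_mul_rieszKernel [NeZero n] {a : ℝ} (ha : a < n / 2) :
    Integrable fun z : 𝔼 n × 𝔼 n =>
      conformalWeight a z.1 * conformalWeight a z.2 * rieszKernel a z.1 z.2 := by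
  have hone : MemLp (fun _ : 𝔼 n => (1 : ℝ)) 2 (σ n) := memLp_const 1
  refine (integrable_sphereMeasure_prod_iff.1 (integrable_rieszForm ha hone hone)).congr
    (ae_of_all _ fun z => ?_)
  simp only [one_mul, chordalKernel_mul_pow]

/-- Measurable functions that decay at infinity at least as fast as `conformalWeight a`. -/
structure ConformalDecay (a : ℝ) (r : 𝔼 n → ℝ) : Prop where
  measurable : Measurable r
  exists_abs_le : ∃ C, ∀ x, |r x| ≤ C * conformalWeight a x

theorem ConformalDecay.integrable_rieszKernel [NeZero n] {a : ℝ} (ha : a < n / 2) {r p : 𝔼 n → ℝ}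
    (hr : ConformalDecay a r) (hp : ConformalDecay a p) :
    Integrable fun z : 𝔼 n × 𝔼 n => r z.1 * p z.2 * rieszKernel a z.1 z.2 := by
  obtain ⟨C, hC⟩ := hr.exists_abs_le
  obtain ⟨C', hC'⟩ := hp.exists_abs_le
  have hmeas := ((hr.measurable.comp measurable_fst).mul (hp.measurable.comp measurable_snd)).mul
    (measurable_rieszKernel (n := n) a)
  refine ((integrable_conformalWeight_mul_rieszKernel ha).const_mul (C * C')).mono'
    hmeas.aestronglyMeasurable (ae_of_all _ fun z => ?_)
  change ‖r z.1 * p z.2 * rieszKernel a z.1 z.2‖ ≤ _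
  calc ‖r z.1 * p z.2 * rieszKernel a z.1 z.2‖
      = |r z.1| * |p z.2| * rieszKernel a z.1 z.2 := by
        rw [norm_mul, norm_mul, norm_of_nonneg (rieszKernel_nonneg _ _ _), norm_eq_abs, norm_eq_abs]
    _ ≤ C * conformalWeight a z.1 * (C' * conformalWeight a z.2) * rieszKernel a z.1 z.2 :=
        mul_le_mul_of_nonneg_right
          (mul_le_mul (hC z.1) (hC' z.2) (abs_nonneg _) ((abs_nonneg _).trans (hC z.1)))
          (rieszKernel_nonneg _ _ _)
    _ = _ := by ring

/-- The flow of `conformalField i`. -/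
noncomputable def conformalFlow (i : Option (Fin n)) (t : ℝ) (x : 𝔼 n) : 𝔼 n :=
  i.elim (exp t • x) fun j => x + t • EuclideanSpace.single j 1

/-- The rate at which `conformalFlow i` expands lengths. -/
noncomputable def expansionRate (i : Option (Fin n)) : ℝ := i.elim 1 fun _ => 0

@[fun_prop]
theorem measurable_conformalFlow (i : Option (Fin n)) (t : ℝ) : Measurable (conformalFlow i t) :=
  match i with
  | none => measurable_id.const_smul (exp t)
  | some _ => measurable_id.add_const _

theorem conformalFlow_zero (i : Option (Fin n)) (x : 𝔼 n) : conformalFlow i 0 x = x := by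
  cases i <;> simp [conformalFlow]

theorem norm_conformalFlow_sub (i : Option (Fin n)) (t : ℝ) (x y : 𝔼 n) :
    ‖conformalFlow i t x - conformalFlow i t y‖ = exp (expansionRate i * t) * ‖x - y‖ := by
  cases i <;> simp [conformalFlow, expansionRate, ← smul_sub, norm_smul]

theorem rieszKernel_conformalFlow (a : ℝ) (i : Option (Fin n)) (t : ℝ) (x y : 𝔼 n) :
    rieszKernel a (conformalFlow i t x) (conformalFlow i t y)
      = exp (-(2 * a) * expansionRate i * t) * rieszKernel a x y := by
  rw [rieszKernel, norm_conformalFlow_sub, mul_pow, mul_rpow (by positivity) (by positivity),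
    ← exp_nat_mul, ← exp_mul, rieszKernel]
  push_cast
  ring_nf

theorem integral_comp_conformalFlow (G : 𝔼 n × 𝔼 n → ℝ) (i : Option (Fin n)) (t : ℝ) :
    ∫ z : 𝔼 n × 𝔼 n, G (conformalFlow i t z.1, conformalFlow i t z.2)
      = exp (-(2 * n) * expansionRate i * t) * ∫ z, G z := by
  cases i with
  | none =>
    have hscale := Measure.integral_comp_smul
      ((volume : Measure (𝔼 n)).prod (volume : Measure (𝔼 n))) G (exp t)
    rw [Module.finrank_prod, finrank_euclideanSpace_fin, ← exp_nat_mul, ← exp_neg, abs_exp,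
      smul_eq_mul] at hscale
    have hexp :
        -(((n + n : ℕ) : ℝ) * t) = -(2 * n) * expansionRate (none : Option (Fin n)) * t := by
      simp only [expansionRate, Option.elim_none]
      push_cast
      ring
    rw [← hexp]
    exact hscale
  | some j =>
    have hshift := integral_add_right_eq_self
      (μ := (volume : Measure (𝔼 n)).prod (volume : Measure (𝔼 n))) G
      (t • EuclideanSpace.single j 1, t • EuclideanSpace.single j 1)
    simp only [expansionRate, Option.elim_some, mul_zero, zero_mul, exp_zero, one_mul]
    exact hshift

theorem hasDerivAt_comp_conformalFlow {f : 𝔼 n → ℝ} (hf : ContDiff ℝ 1 f) (i : Option (Fin n))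
    (x : 𝔼 n) (t : ℝ) :
    HasDerivAt (fun t => f (conformalFlow i t x)) (D i f (conformalFlow i t x)) t := by
  have hflow : HasDerivAt (fun t => conformalFlow i t x)
      (conformalField i (conformalFlow i t x)) t := by
    cases i with
    | none => exact (hasDerivAt_exp t).smul_const x
    | some j =>
      have hline := ((hasDerivAt_id t).smul_const (EuclideanSpace.single j (1 : ℝ))).const_add x
      rw [one_smul] at hline
      exact hline
  exact (hf.differentiable one_ne_zero _).hasFDerivAt.comp_hasDerivAt t hflow

theorem conformalFactor_conformalFlow_le (i : Option (Fin n)) {t : ℝ} (ht : |t| ≤ 1 / 2)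
    (x : 𝔼 n) : ρ (conformalFlow i t x) ≤ 4 * ρ x := by
  have hnorm : ‖x‖ ^ 2 ≤ 4 * ‖conformalFlow i t x‖ ^ 2 + 3 := by
    cases i with
    | none =>
      have hexp : 1 / 2 ≤ exp t := by linarith [add_one_le_exp t, neg_abs_le t]
      rw [conformalFlow, Option.elim_none, norm_smul, norm_of_nonneg (exp_pos t).le]
      nlinarith [mul_le_mul_of_nonneg_right hexp (norm_nonneg x), norm_nonneg x]
    | some j =>
      have htri := norm_sub_le (conformalFlow (some j) t x) (t • EuclideanSpace.single j 1)
      rw [norm_smul, norm_eq_abs] at htri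
      simp only [conformalFlow, Option.elim_some, add_sub_cancel_right, PiLp.norm_single,
        norm_one, mul_one] at htri ⊢
      nlinarith [norm_nonneg x, sq_nonneg (‖x + t • EuclideanSpace.single j (1 : ℝ)‖ - 1)]
  unfold conformalFactor
  rw [← mul_div_assoc, div_le_div_iff₀ (by positivity) (by positivity)]
  linarith

theorem ConformalDecay.exists_abs_comp_conformalFlow_le [NeZero n] {a : ℝ} (ha : a < n / 2)
    {r : 𝔼 n → ℝ} (hr : ConformalDecay a r) (i : Option (Fin n)) :
    ∃ C, ∀ t, |t| ≤ 1 / 2 → ∀ x, |r (conformalFlow i t x)| ≤ C * conformalWeight a x := by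
  have hn := natCast_half_pos (n := n)
  obtain ⟨C, hC⟩ := hr.exists_abs_le
  have hC0 : 0 ≤ C := nonneg_of_mul_nonneg_left ((abs_nonneg _).trans (hC 0))
    (conformalWeight_pos a 0)
  refine ⟨C * 4 ^ ((n : ℝ) - a), fun t ht x => (hC _).trans ?_⟩
  rw [mul_assoc, conformalWeight, conformalWeight,
    ← mul_rpow four_pos.le (conformalFactor_pos x).le]
  have hexponent : 0 ≤ (n : ℝ) - a := by linarith
  gcongr
  · exact (conformalFactor_pos _).le
  · exact conformalFactor_conformalFlow_le i ht x

/-- The integrand of `euclideanRieszForm a r p` transported by `conformalFlow i`, normalised so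
that its integral does not depend on the time `t`. -/
noncomputable def flowIntegrand (a : ℝ) (i : Option (Fin n)) (r p : 𝔼 n → ℝ) (t : ℝ)
    (z : 𝔼 n × 𝔼 n) : ℝ :=
  exp (2 * (n - a) * expansionRate i * t)
    * (r (conformalFlow i t z.1) * p (conformalFlow i t z.2)) * rieszKernel a z.1 z.2

theorem integral_flowIntegrand (a : ℝ) (i : Option (Fin n)) (r p : 𝔼 n → ℝ) (t : ℝ) :
    ∫ z, flowIntegrand a i r p t z = euclideanRieszForm a r p := by
  have hcomp := integral_comp_conformalFlow
    (fun z => r z.1 * p z.2 * rieszKernel a z.1 z.2) i t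
  rw [euclideanRieszForm, ← inv_mul_eq_iff_eq_mul₀ (exp_pos _).ne' |>.2 hcomp, ← exp_neg,
    ← integral_const_mul]
  congr with z
  rw [rieszKernel_conformalFlow, flowIntegrand,
    show 2 * (n - a) * expansionRate i * t
      = -(-(2 * n) * expansionRate i * t) + -(2 * a) * expansionRate i * t by ring, exp_add]
  ring

theorem flowIntegrand_zero (a : ℝ) (i : Option (Fin n)) (r p : 𝔼 n → ℝ) :
    flowIntegrand a i r p 0 = fun z => r z.1 * p z.2 * rieszKernel a z.1 z.2 := by
  ext z
  simp [flowIntegrand, conformalFlow_zero]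

theorem measurable_flowIntegrand (a : ℝ) (i : Option (Fin n)) {r p : 𝔼 n → ℝ}
    (hr : Measurable r) (hp : Measurable p) (t : ℝ) : Measurable (flowIntegrand a i r p t) := by
  have := measurable_rieszKernel (n := n) a
  unfold flowIntegrand
  fun_prop

theorem ConformalDecay.exists_abs_flowIntegrand_le [NeZero n] {a : ℝ} (ha : a < n / 2)
    {r p : 𝔼 n → ℝ} (hr : ConformalDecay a r) (hp : ConformalDecay a p) (i : Option (Fin n)) :
    ∃ C, ∀ t, |t| ≤ 1 / 2 → ∀ z, |flowIntegrand a i r p t z|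
      ≤ C * (conformalWeight a z.1 * conformalWeight a z.2 * rieszKernel a z.1 z.2) := by
  obtain ⟨C, hC⟩ := hr.exists_abs_comp_conformalFlow_le ha i
  obtain ⟨C', hC'⟩ := hp.exists_abs_comp_conformalFlow_le ha i
  set m := 2 * (n - a) * expansionRate i
  refine ⟨exp (|m| * (1 / 2)) * (C * C'), fun t ht z => ?_⟩
  have hexp : exp (m * t) ≤ exp (|m| * (1 / 2)) :=
    exp_le_exp.2 ((le_abs_self _).trans (by rw [abs_mul]; gcongr))
  calc |flowIntegrand a i r p t z|
      = exp (m * t) * (|r (conformalFlow i t z.1)| * |p (conformalFlow i t z.2)|)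
          * rieszKernel a z.1 z.2 := by
        rw [flowIntegrand, abs_mul, abs_mul, abs_mul, abs_exp,
          abs_of_nonneg (rieszKernel_nonneg a _ _)]
    _ ≤ exp (|m| * (1 / 2)) * (C * conformalWeight a z.1 * (C' * conformalWeight a z.2))
          * rieszKernel a z.1 z.2 :=
        mul_le_mul_of_nonneg_right
          (mul_le_mul hexp
            (mul_le_mul (hC t ht _) (hC' t ht _) (abs_nonneg _) ((abs_nonneg _).trans (hC t ht _)))
            (by positivity) (exp_pos _).le)
          (rieszKernel_nonneg a _ _)
    _ = _ := by ring

theorem hasDerivAt_flowIntegrand (a : ℝ) (i : Option (Fin n)) {r p : 𝔼 n → ℝ}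
    (hr : ContDiff ℝ 1 r) (hp : ContDiff ℝ 1 p) (z : 𝔼 n × 𝔼 n) (t : ℝ) :
    HasDerivAt (flowIntegrand a i r p · z)
      (2 * (n - a) * expansionRate i * flowIntegrand a i r p t z
        + (flowIntegrand a i (D i r) p t z + flowIntegrand a i r (D i p) t z)) t := by
  have hexp := ((hasDerivAt_id t).const_mul (2 * (n - a) * expansionRate i)).exp
  have hprod := (hasDerivAt_comp_conformalFlow hr i z.1 t).mul
    (hasDerivAt_comp_conformalFlow hp i z.2 t)
  refine ((hexp.mul hprod).mul_const (rieszKernel a z.1 z.2)).congr_deriv ?_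
  simp only [flowIntegrand, id_eq, Pi.mul_apply]
  ring

theorem euclideanRieszForm_conformalDeriv [NeZero n] {a : ℝ} (ha : a < n / 2) {r p : 𝔼 n → ℝ}
    (i : Option (Fin n)) (hr : ConformalDecay a r) (hp : ConformalDecay a p)
    (hr1 : ContDiff ℝ 1 r) (hp1 : ContDiff ℝ 1 p) (hr' : ConformalDecay a (D i r))
    (hp' : ConformalDecay a (D i p)) :
    2 * (n - a) * expansionRate i * euclideanRieszForm a r p
      + (euclideanRieszForm a (D i r) p + euclideanRieszForm a r (D i p)) = 0 := by
  set m := 2 * (n - a) * expansionRate i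
  obtain ⟨C₀, h₀⟩ := hr.exists_abs_flowIntegrand_le ha hp i
  obtain ⟨C₁, h₁⟩ := hr'.exists_abs_flowIntegrand_le ha hp i
  obtain ⟨C₂, h₂⟩ := hr.exists_abs_flowIntegrand_le ha hp' i
  have hint {u v : 𝔼 n → ℝ} (hu : ConformalDecay a u) (hv : ConformalDecay a v) :
      Integrable (flowIntegrand a i u v 0) := by
    rw [flowIntegrand_zero]
    exact hu.integrable_rieszKernel ha hv
  have hint' : Integrable fun z =>
      flowIntegrand a i (D i r) p 0 z + flowIntegrand a i r (D i p) 0 z :=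
    (hint hr' hp).add (hint hr hp')
  have hmeas (t : ℝ) := measurable_flowIntegrand a i hr.measurable hp.measurable t
  have hderiv := (hasDerivAt_integral_of_dominated_loc_of_deriv_le
    (F := flowIntegrand a i r p) (x₀ := 0)
    (F' := fun t z => m * flowIntegrand a i r p t z
      + (flowIntegrand a i (D i r) p t z + flowIntegrand a i r (D i p) t z))
    (bound := fun z => (|m| * C₀ + (C₁ + C₂))
      * (conformalWeight a z.1 * conformalWeight a z.2 * rieszKernel a z.1 z.2))
    (Metric.ball_mem_nhds 0 one_half_pos) (.of_forall fun t => (hmeas t).aestronglyMeasurable)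
    (hint hr hp)
    (((hint hr hp).const_mul m).add hint').aestronglyMeasurable
    (ae_of_all _ fun z t ht => by
      have ht : |t| ≤ 1 / 2 := by simpa using (mem_ball_zero_iff.1 ht).le
      calc _ ≤ |m| * |flowIntegrand a i r p t z|
            + (|flowIntegrand a i (D i r) p t z| + |flowIntegrand a i r (D i p) t z|) := by
            rw [norm_eq_abs, ← abs_mul]
            exact (abs_add_le _ _).trans (by gcongr; exact abs_add_le _ _)
        _ ≤ _ := by
            linarith [mul_le_mul_of_nonneg_left (h₀ t ht z) (abs_nonneg m), h₁ t ht z, h₂ t ht z])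
    ((integrable_conformalWeight_mul_rieszKernel ha).const_mul _)
    (ae_of_all _ fun z t _ => hasDerivAt_flowIntegrand a i hr1 hp1 z t)).2
  simp only [integral_flowIntegrand] at hderiv
  have hzero := hderiv.unique (hasDerivAt_const _ _)
  rwa [integral_add ((hint hr hp).const_mul m) hint',
    integral_add (hint hr' hp) (hint hr hp'), integral_const_mul, integral_flowIntegrand,
    integral_flowIntegrand, integral_flowIntegrand] at hzero

theorem conformalDeriv_conformalFactor (i : Option (Fin n)) (x : 𝔼 n) :
    D i ρ x = -ρ x * (expansionRate i + ω i x) := by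
  cases i with
  | none => exact conformalDeriv_none_conformalFactor x
  | some j => simpa [expansionRate] using conformalDeriv_some_conformalFactor j x

theorem conformalDeriv_conformalWeight (a : ℝ) (i : Option (Fin n)) (x : 𝔼 n) :
    D i (conformalWeight a) x = -(n - a) * (expansionRate i + ω i x) * conformalWeight a x := by
  have hρ := (conformalFactor_pos x).ne'
  have hpow := ((contDiff_conformalFactor.differentiable one_ne_zero x).hasFDerivAt).rpow_const
    (p := (n : ℝ) - a) (Or.inl hρ)
  change fderiv ℝ (fun x => ρ x ^ ((n : ℝ) - a)) x _ = _
  rw [hpow.fderiv, smul_apply, smul_eq_mul]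
  change _ * D i ρ x = _
  rw [conformalDeriv_conformalFactor, rpow_sub_one hρ, conformalWeight]
  field_simp

theorem conformalDeriv_mul_conformalWeight (a : ℝ) (i : Option (Fin n)) {P : 𝔼 n → ℝ}
    (hP : ContDiff ℝ 1 P) :
    D i (P * conformalWeight a)
      = (D i P - ((n : ℝ) - a) • (ω i * P) - ((n - a) * expansionRate i) • P)
        * conformalWeight a := by
  rw [conformalDeriv_mul hP (contDiff_conformalWeight a)]
  ext x
  simp only [Pi.add_apply, Pi.mul_apply, conformalDeriv_conformalWeight, Pi.sub_apply,
    Pi.smul_apply, smul_eq_mul]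
  ring

theorem conformalDecay_mul_conformalWeight (a : ℝ) {k : ℕ} {P : 𝔼 n → ℝ}
    (hP : P ∈ sphericalPoly n k) : ConformalDecay a (P * conformalWeight a) := by
  obtain ⟨C, hC⟩ := exists_abs_le_of_mem_sphericalPoly hP
  refine ⟨(contDiff_of_mem_sphericalPoly hP).continuous.measurable.mul
    (measurable_conformalWeight a), C, fun x => ?_⟩
  rw [Pi.mul_apply, abs_mul, abs_of_pos (conformalWeight_pos a x)]
  exact mul_le_mul_of_nonneg_right (hC x) (conformalWeight_pos a x).le

theorem rieszForm_conformalDeriv_add [NeZero n] {a : ℝ} (ha : a < n / 2) (i : Option (Fin n))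
    {k l : ℕ} {R P : 𝔼 n → ℝ} (hR : R ∈ sphericalPoly n k) (hP : P ∈ sphericalPoly n l) :
    rieszForm a (D i R) P + rieszForm a R (D i P)
      = (n - a) * (rieszForm a (ω i * R) P + rieszForm a R (ω i * P)) := by
  have hmem {m : ℕ} {Q : 𝔼 n → ℝ} (hQ : Q ∈ sphericalPoly n m) :
      D i Q - ((n : ℝ) - a) • (ω i * Q) - ((n - a) * expansionRate i) • Q
        ∈ sphericalPoly n (m + 1) :=
    sub_mem (sub_mem (conformalDeriv_mem_sphericalPoly i hQ)
      (Submodule.smul_mem _ _ (sphereCoord_mul_mem hQ i)))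
      (Submodule.smul_mem _ _ (sphericalPoly_le_succ m hQ))
  have hmemLp {m : ℕ} {Q : 𝔼 n → ℝ} (hQ : Q ∈ sphericalPoly n m) : MemLp Q 2 (σ n) :=
    memLp_of_mem_sphericalPoly hQ 2
  have hRdiff := contDiff_of_mem_sphericalPoly hR
  have hPdiff := contDiff_of_mem_sphericalPoly hP
  have hflow := euclideanRieszForm_conformalDeriv ha i (conformalDecay_mul_conformalWeight a hR)
    (conformalDecay_mul_conformalWeight a hP) (hRdiff.mul (contDiff_conformalWeight a))
    (hPdiff.mul (contDiff_conformalWeight a))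
    (by
      rw [conformalDeriv_mul_conformalWeight a i hRdiff]
      exact conformalDecay_mul_conformalWeight a (hmem hR))
    (by
      rw [conformalDeriv_mul_conformalWeight a i hPdiff]
      exact conformalDecay_mul_conformalWeight a (hmem hP))
  have hDR := hmemLp (conformalDeriv_mem_sphericalPoly i hR)
  have hDP := hmemLp (conformalDeriv_mem_sphericalPoly i hP)
  have hωR := (hmemLp (sphereCoord_mul_mem hR i)).const_smul ((n : ℝ) - a)
  have hωP := (hmemLp (sphereCoord_mul_mem hP i)).const_smul ((n : ℝ) - a)
  have hcR := (hmemLp hR).const_smul ((n - a) * expansionRate i)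
  have hcP := (hmemLp hP).const_smul ((n - a) * expansionRate i)
  rw [conformalDeriv_mul_conformalWeight a i hRdiff, conformalDeriv_mul_conformalWeight a i hPdiff,
    ← rieszForm_eq_euclideanRieszForm, ← rieszForm_eq_euclideanRieszForm,
    ← rieszForm_eq_euclideanRieszForm, rieszForm_sub_left ha (hDR.sub hωR) hcR (hmemLp hP),
    rieszForm_sub_left ha hDR hωR (hmemLp hP), rieszForm_sub_right ha (hmemLp hR) (hDP.sub hωP) hcP,
    rieszForm_sub_right ha (hmemLp hR) hDP hωP] at hflow
  simp only [rieszForm_smul_left, rieszForm_smul_right] at hflow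
  linarith

/-- The inner product of `L²(Sⁿ)`, on functions. -/
noncomputable def sphereInner (f g : 𝔼 n → ℝ) : ℝ := ∫ x, f x * g x ∂(σ n)

theorem sphereInner_add_right {f g g' : 𝔼 n → ℝ} (hf : MemLp f 2 (σ n)) (hg : MemLp g 2 (σ n))
    (hg' : MemLp g' 2 (σ n)) : sphereInner f (g + g') = sphereInner f g + sphereInner f g' := by
  have hfg : Integrable (fun x => f x * g x) (σ n) := hf.integrable_mul hg
  have hfg' : Integrable (fun x => f x * g' x) (σ n) := hf.integrable_mul hg'
  rw [sphereInner, sphereInner, sphereInner, ← integral_add hfg hfg']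
  simp only [Pi.add_apply, mul_add]

theorem sphereInner_smul_right (c : ℝ) (f g : 𝔼 n → ℝ) :
    sphereInner f (c • g) = c * sphereInner f g := by
  rw [sphereInner, sphereInner, ← integral_const_mul]
  simp only [Pi.smul_apply, smul_eq_mul, mul_left_comm]

theorem sphereInner_mul_left (h f g : 𝔼 n → ℝ) :
    sphereInner (h * f) g = sphereInner f (h * g) := by
  unfold sphereInner
  simp only [Pi.mul_apply, mul_assoc, mul_left_comm]

theorem rieszForm_zero (f g : 𝔼 n → ℝ) :
    rieszForm 0 f g = (∫ x, f x ∂(σ n)) * ∫ x, g x ∂(σ n) := by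
  rw [rieszForm, ← integral_prod_mul]
  simp [chordalKernel]

theorem integral_sphereCoord [NeZero n] (i : Option (Fin n)) : ∫ x, ω i x ∂(σ n) = 0 := by
  have hn : (0 : ℝ) < n := by linarith [natCast_half_pos (n := n)]
  have hmass : 0 < (σ n).real Set.univ := by
    rw [sphereMeasure_real_univ]
    exact chordalMass_pos natCast_half_pos
  have hinv := rieszForm_conformalDeriv_add natCast_half_pos i (one_mem_sphericalPoly (n := n) 0)
    (one_mem_sphericalPoly (n := n) 0)
  rw [show D i 1 = 0 from conformalDeriv_const 1 i] at hinv
  simp only [rieszForm_zero, mul_one, Pi.zero_apply, integral_zero, zero_mul, mul_zero, add_zero,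
    Pi.one_apply, integral_const, smul_eq_mul, sub_zero] at hinv
  have : (n * (σ n).real Set.univ) * ∫ x, ω i x ∂(σ n) = 0 := by linarith
  exact (mul_eq_zero.1 this).resolve_left (by positivity)

theorem integral_conformalDeriv [NeZero n] (i : Option (Fin n)) {k : ℕ} {P : 𝔼 n → ℝ}
    (hP : P ∈ sphericalPoly n k) :
    ∫ x, D i P x ∂(σ n) = n * ∫ x, ω i x * P x ∂(σ n) := by
  have hmass : 0 < (σ n).real Set.univ := by
    rw [sphereMeasure_real_univ]
    exact chordalMass_pos natCast_half_pos
  have hinv := rieszForm_conformalDeriv_add natCast_half_pos i hP (one_mem_sphericalPoly (n := n) 0)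
  rw [show D i 1 = 0 from conformalDeriv_const 1 i] at hinv
  simp only [rieszForm_zero, mul_one, Pi.zero_apply, integral_zero, mul_zero, add_zero,
    Pi.one_apply, integral_const, smul_eq_mul, sub_zero, integral_sphereCoord, Pi.mul_apply,
    ← mul_assoc] at hinv
  exact mul_right_cancel₀ hmass.ne' hinv

theorem sphereInner_conformalDeriv [NeZero n] (i : Option (Fin n)) {k l : ℕ} {R P : 𝔼 n → ℝ}
    (hR : R ∈ sphericalPoly n k) (hP : P ∈ sphericalPoly n l) :
    sphereInner (D i R) P + sphereInner R (D i P) = n * sphereInner R (ω i * P) := by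
  have hint {m m' : ℕ} {Q Q' : 𝔼 n → ℝ} (hQ : Q ∈ sphericalPoly n m)
      (hQ' : Q' ∈ sphericalPoly n m') : Integrable (Q * Q') (σ n) :=
    (memLp_of_mem_sphericalPoly hQ 2).integrable_mul (memLp_of_mem_sphericalPoly hQ' 2)
  have hdiv := integral_conformalDeriv i (mul_mem_sphericalPoly hR hP)
  rw [conformalDeriv_mul (contDiff_of_mem_sphericalPoly hR) (contDiff_of_mem_sphericalPoly hP),
    integral_add' (hint hR (conformalDeriv_mem_sphericalPoly i hP))
      (hint (conformalDeriv_mem_sphericalPoly i hR) hP)] at hdiv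
  simp only [Pi.mul_apply, mul_left_comm (ω i _)] at hdiv
  simp only [sphereInner, Pi.mul_apply]
  linarith

/-- The Funk–Hecke eigenvalue of the kernel `|ω - η|^(-2a)` on spherical harmonics of degree `k`. -/
noncomputable def rieszEigenvalue (n : ℕ) (a : ℝ) : ℕ → ℝ
  | 0 => chordalMass n a
  | k + 1 => (k + a) / (k + n - a) * rieszEigenvalue n a k

theorem rieszEigenvalue_succ (n : ℕ) (a : ℝ) (k : ℕ) :
    rieszEigenvalue n a (k + 1) = (k + a) / (k + n - a) * rieszEigenvalue n a k := rfl

/-- The restrictions to `Sⁿ` of the polynomials of degree less than `k` on `ℝⁿ⁺¹`. -/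
noncomputable def sphericalPolyLT (n : ℕ) : ℕ → Submodule ℝ (𝔼 n → ℝ)
  | 0 => ⊥
  | k + 1 => sphericalPoly n k

theorem sphericalPolyLT_le (k : ℕ) : sphericalPolyLT n k ≤ sphericalPoly n k := by
  cases k with
  | zero => exact bot_le
  | succ k => exact sphericalPoly_le_succ k

theorem sphereCoord_mul_mem_of_mem_sphericalPolyLT {k : ℕ} {P : 𝔼 n → ℝ}
    (hP : P ∈ sphericalPolyLT n k) (i : Option (Fin n)) : ω i * P ∈ sphericalPoly n k := by
  cases k with
  | zero =>
    obtain rfl := (Submodule.mem_bot ℝ).1 hP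
    simp
  | succ k => exact sphereCoord_mul_mem hP i

theorem conformalDeriv_mem_of_mem_sphericalPolyLT {k : ℕ} {P : 𝔼 n → ℝ}
    (hP : P ∈ sphericalPolyLT n k) (i : Option (Fin n)) : D i P ∈ sphericalPoly n k := by
  cases k with
  | zero =>
    obtain rfl := (Submodule.mem_bot ℝ).1 hP
    rw [show D i 0 = 0 from conformalDeriv_const 0 i]
    exact zero_mem _
  | succ k => exact conformalDeriv_mem_sphericalPoly i hP

/-- The Riesz operator maps `P` to `rieszEigenvalue n a k • P`, up to a spherical polynomial of
degree less than `k`. -/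
def IsRieszTriangular (a : ℝ) (k : ℕ) (P : 𝔼 n → ℝ) : Prop :=
  ∃ P' ∈ sphericalPolyLT n k, ∀ ⦃l⦄, ∀ R ∈ sphericalPoly n l,
    rieszForm a R P = rieszEigenvalue n a k * sphereInner R P + sphereInner R P'

theorem isRieszTriangular_zero [NeZero n] {a : ℝ} (ha : a < n / 2) {P : 𝔼 n → ℝ}
    (hP : P ∈ sphericalPoly n 0) : IsRieszTriangular a 0 P := by
  obtain ⟨c, rfl⟩ := mem_sphericalPoly_zero.1 hP
  refine ⟨0, zero_mem _, fun l R hR => ?_⟩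
  have hone : rieszForm a R 1 = chordalMass n a * ∫ x, R x ∂(σ n) := by
    rw [← integral_fst_mul_chordalKernel ha ((memLp_of_mem_sphericalPoly hR 1).integrable le_rfl)]
    simp [rieszForm]
  rw [rieszForm_smul_right, hone, sphereInner_smul_right]
  simp only [sphereInner, rieszEigenvalue, Pi.one_apply, mul_one, Pi.zero_apply, mul_zero,
    integral_zero, add_zero]
  ring

theorem IsRieszTriangular.add [NeZero n] {a : ℝ} (ha : a < n / 2) {k : ℕ} {P Q : 𝔼 n → ℝ}
    (hPLp : MemLp P 2 (σ n)) (hQLp : MemLp Q 2 (σ n)) (hP : IsRieszTriangular a k P)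
    (hQ : IsRieszTriangular a k Q) : IsRieszTriangular a k (P + Q) := by
  obtain ⟨P', hP', hPR⟩ := hP
  obtain ⟨Q', hQ', hQR⟩ := hQ
  refine ⟨P' + Q', add_mem hP' hQ', fun l R hR => ?_⟩
  have hRLp := memLp_of_mem_sphericalPoly hR 2
  rw [rieszForm_add_right ha hRLp hPLp hQLp, sphereInner_add_right hRLp hPLp hQLp,
    sphereInner_add_right hRLp (memLp_of_mem_sphericalPoly (sphericalPolyLT_le k hP') 2)
      (memLp_of_mem_sphericalPoly (sphericalPolyLT_le k hQ') 2), hPR R hR, hQR R hR]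
  ring

theorem IsRieszTriangular.succ [NeZero n] {a : ℝ} {k : ℕ} {P : 𝔼 n → ℝ}
    (hPk : P ∈ sphericalPoly n k) (hP : IsRieszTriangular a k P) :
    IsRieszTriangular a (k + 1) P := by
  obtain ⟨P', hP', hPR⟩ := hP
  have hPmem := Submodule.smul_mem _ (rieszEigenvalue n a k - rieszEigenvalue n a (k + 1)) hPk
  have hP'mem := sphericalPolyLT_le k hP'
  refine ⟨_, add_mem hPmem hP'mem, fun l R hR => ?_⟩
  rw [hPR R hR, sphereInner_add_right (memLp_of_mem_sphericalPoly hR 2)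
    (memLp_of_mem_sphericalPoly hPmem 2) (memLp_of_mem_sphericalPoly hP'mem 2),
    sphereInner_smul_right]
  ring

-- Invariance under `D i` determines the eigenvalue on `ω i * P`, since the top order part of
-- `D i P` is `-k ω i P`.
theorem isRieszTriangular_sphereCoord_mul [NeZero n] {a : ℝ} (ha : a < n / 2) {k : ℕ}
    (hk : ∀ P ∈ sphericalPoly n k, IsRieszTriangular a k P) (i : Option (Fin n)) {P : 𝔼 n → ℝ}
    (hP : P ∈ sphericalPoly n k) : IsRieszTriangular a (k + 1) (ω i * P) := by
  have hQ := conformalDeriv_add_smul_mem i hP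
  obtain ⟨P', hP', hPR⟩ := hk P hP
  obtain ⟨Q', hQ', hQR⟩ := hk _ hQ
  have hP'k := sphericalPolyLT_le k hP'
  have hωP' := Submodule.smul_mem _ a (sphereCoord_mul_mem_of_mem_sphericalPolyLT hP' i)
  have hDP' := Submodule.smul_mem _ (-1 : ℝ) (conformalDeriv_mem_of_mem_sphericalPolyLT hP' i)
  have hQ'k := sphericalPolyLT_le k hQ'
  refine ⟨_, Submodule.smul_mem _ ((n : ℝ) - a + k)⁻¹ (add_mem (add_mem hωP' hDP') hQ'k),
    fun l R hR => ?_⟩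
  have hmemLp {m : ℕ} {S : 𝔼 n → ℝ} (hS : S ∈ sphericalPoly n m) : MemLp S 2 (σ n) :=
    memLp_of_mem_sphericalPoly hS 2
  have hDP := hmemLp (conformalDeriv_mem_sphericalPoly i hP)
  have hkωP := (hmemLp (sphereCoord_mul_mem hP i)).const_smul (k : ℝ)
  have hformQ := rieszForm_add_right ha (hmemLp hR) hDP hkωP
  have hinnerQ := sphereInner_add_right (hmemLp hR) hDP hkωP
  have hωR := hPR _ (sphereCoord_mul_mem hR i)
  rw [rieszForm_smul_right] at hformQ
  rw [sphereInner_smul_right] at hinnerQ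
  rw [sphereInner_mul_left, sphereInner_mul_left] at hωR
  have key : (n - a + k) * rieszForm a R (ω i * P)
      = (k + a) * rieszEigenvalue n a k * sphereInner R (ω i * P)
        + (a * sphereInner R (ω i * P') + -1 * sphereInner R (D i P') + sphereInner R Q') := by
    linear_combination -rieszForm_conformalDeriv_add ha i hR hP
      + hPR _ (conformalDeriv_mem_sphericalPoly i hR) - (n - a) * hωR + hQR R hR - hformQ
      + rieszEigenvalue n a k * hinnerQ
      + rieszEigenvalue n a k * sphereInner_conformalDeriv i hR hP
      + sphereInner_conformalDeriv i hR hP'k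
  have hpos : 0 < (n : ℝ) - a + k := by
    linarith [natCast_half_pos (n := n), k.cast_nonneg (α := ℝ)]
  have hpos' : (k : ℝ) + n - a ≠ 0 := by linarith
  rw [sphereInner_smul_right, sphereInner_add_right (hmemLp hR) (hmemLp (add_mem hωP' hDP'))
    (hmemLp hQ'k), sphereInner_add_right (hmemLp hR) (hmemLp hωP') (hmemLp hDP'),
    sphereInner_smul_right, sphereInner_smul_right, ← mul_right_inj' hpos.ne', key,
    rieszEigenvalue_succ]
  field_simp
  ring

theorem isRieszTriangular_of_mem_sphericalPoly [NeZero n] {a : ℝ} (ha : a < n / 2) {k : ℕ}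
    {P : 𝔼 n → ℝ} (hP : P ∈ sphericalPoly n k) : IsRieszTriangular a k P := by
  induction k generalizing P with
  | zero => exact isRieszTriangular_zero ha hP
  | succ k ih =>
    have hle {Q : 𝔼 n → ℝ} (hQ : Q ∈ sphericalPoly n k) : IsRieszTriangular a (k + 1) Q :=
      (ih hQ).succ hQ
    have hmul {L Q : 𝔼 n → ℝ} (hL : L ∈ sphericalAffine n) (hQ : Q ∈ sphericalPoly n k) :
        MemLp (L * Q) 2 (σ n) :=
      memLp_of_mem_sphericalPoly (k := k + 1)
        (by rw [sphericalPoly, pow_succ']; exact Submodule.mul_mem_mul hL hQ) 2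
    rw [sphericalPoly, pow_succ'] at hP
    induction hP using Submodule.mul_induction_on' with
    | add P hP Q hQ ihP ihQ =>
      rw [← pow_succ'] at hP hQ
      exact ihP.add ha (memLp_of_mem_sphericalPoly hP 2) (memLp_of_mem_sphericalPoly hQ 2) ihQ
    | mem_mul_mem L hL Q hQ =>
      induction hL using Submodule.span_induction generalizing Q with
      | mem L hL =>
        rcases hL with rfl | ⟨i, rfl⟩
        · rw [one_mul]
          exact hle hQ
        · exact isRieszTriangular_sphereCoord_mul ha (fun _ => ih) i hQ
      | zero =>
        rw [zero_mul]
        exact hle (zero_mem _)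
      | add L L' hL hL' ihL ihL' =>
        rw [add_mul]
        exact (ihL Q hQ).add ha (hmul hL hQ) (hmul hL' hQ) (ihL' Q hQ)
      | smul c L _ ihL =>
        rw [smul_mul_assoc, ← mul_smul_comm]
        exact ihL _ (Submodule.smul_mem _ c hQ)

section Diagonalization

variable {H : Type*} [NormedAddCommGroup H] [InnerProductSpace ℝ H] {W : ℕ → Submodule ℝ H}
  {B B' : H →L[ℝ] H →L[ℝ] ℝ} {e e' : ℕ → ℝ}

/-- `w` is pure of degree `k` in the filtration `W`: it lies in `W k` and is orthogonal to the lower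
levels, like a spherical harmonic of degree `k` among the spherical polynomials. -/
def IsPure (W : ℕ → Submodule ℝ H) (k : ℕ) (w : H) : Prop :=
  w ∈ W k ∧ ∀ j < k, w ∈ (W j)ᗮ

/-- `B` acts on the pure vectors of degree `k` as `e k` times the inner product. -/
def IsDiagonal (W : ℕ → Submodule ℝ H) (B : H →L[ℝ] H →L[ℝ] ℝ) (e : ℕ → ℝ) : Prop :=
  ∀ k w, IsPure W k w → ∀ v, B v w = e k * inner ℝ v w

theorem IsDiagonal.smul (hB : IsDiagonal W B e) (c : ℝ) : IsDiagonal W (c • B) (c • e) := by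
  intro k w hw v
  simp only [smul_apply, Pi.smul_apply, smul_eq_mul, hB k w hw v, mul_assoc]

theorem IsDiagonal.add (hB : IsDiagonal W B e) (hB' : IsDiagonal W B' e') :
    IsDiagonal W (B + B') (e + e') := by
  intro k w hw v
  simp only [add_apply, Pi.add_apply, hB k w hw v, hB' k w hw v, add_mul]

theorem apply_eq_of_forall_mem (hW : Monotone W)
    (hdense : ⊤ ≤ (⨆ k, W k).topologicalClosure) {c : ℝ} {w w' : H}
    (h : ∀ l, ∀ v ∈ W l, B v w = c * inner ℝ v w + inner ℝ v w') (v : H) :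
    B v w = c * inner ℝ v w + inner ℝ v w' := by
  have hdense' : Dense ((⨆ k, W k : Submodule ℝ H) : Set H) :=
    Submodule.dense_iff_topologicalClosure_eq_top.2 (top_le_iff.1 hdense)
  refine congrFun (Continuous.ext_on hdense' (f := fun v => B v w)
    (g := fun v => c * inner ℝ v w + inner ℝ v w') (by fun_prop) (by fun_prop) fun v hv => ?_) v
  obtain ⟨l, hl⟩ := (Submodule.mem_iSup_of_directed _ hW.directed_le).1 hv
  exact h l v hl

theorem isDiagonal_of_triangular (hW : Monotone W)
    (hdense : ⊤ ≤ (⨆ k, W k).topologicalClosure) (hsymm : ∀ u v, B u v = B v u)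
    (htri : ∀ k, ∀ w ∈ W k, ∃ w', (w' = 0 ∨ ∃ j < k, w' ∈ W j) ∧
      ∀ l, ∀ v ∈ W l, B v w = e k * inner ℝ v w + inner ℝ v w') : IsDiagonal W B e := by
  rintro k w ⟨hwk, hw⟩ v
  obtain ⟨w', hw', hB⟩ := htri k w hwk
  have hzero : w' = 0 := by
    rcases hw' with hw' | ⟨j, hj, hw'⟩
    · exact hw'
    have horth : inner ℝ w' w = 0 := hw j hj w' hw'
    have hBw' : B w' w = inner ℝ w' w' := by
      rw [apply_eq_of_forall_mem hW hdense hB, horth, mul_zero, zero_add]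
    obtain ⟨w'', hw'', hB'⟩ := htri j w' hw'
    have hBw : B w w' = 0 := by
      rw [apply_eq_of_forall_mem hW hdense hB', real_inner_comm, horth, mul_zero, zero_add,
        real_inner_comm]
      rcases hw'' with rfl | ⟨i, hi, hw''⟩
      · exact inner_zero_left _
      · exact hw i (hi.trans hj) w'' hw''
    rw [hsymm, hBw] at hBw'
    exact inner_self_eq_zero.1 hBw'.symm
  rw [apply_eq_of_forall_mem hW hdense hB, hzero, inner_zero_right, add_zero]

variable [∀ k, (W k).HasOrthogonalProjection]

/-- The component of `u` that is pure of degree `k` in the filtration `W`. -/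
noncomputable def pureComponent (W : ℕ → Submodule ℝ H) [∀ k, (W k).HasOrthogonalProjection]
    (u : H) : ℕ → H
  | 0 => (W 0).starProjection u
  | k + 1 => (W (k + 1)).starProjection u - (W k).starProjection u

theorem isPure_pureComponent (hW : Monotone W) (u : H) (k : ℕ) :
    IsPure W k (pureComponent W u k) := by
  cases k with
  | zero => exact ⟨Submodule.starProjection_apply_mem _ _, fun j hj => absurd hj j.not_lt_zero⟩
  | succ k =>
    refine ⟨Submodule.sub_mem _ (Submodule.starProjection_apply_mem _ _)
      (hW k.le_succ (Submodule.starProjection_apply_mem _ _)), fun j hj v hv => ?_⟩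
    have hvk : v ∈ W k := hW (Nat.lt_succ_iff.1 hj) hv
    rw [pureComponent, inner_sub_right, ← Submodule.inner_starProjection_left_eq_right,
      ← Submodule.inner_starProjection_left_eq_right,
      Submodule.starProjection_eq_self_iff.2 hvk,
      Submodule.starProjection_eq_self_iff.2 (hW k.le_succ hvk), sub_self]

theorem sum_pureComponent (u : H) (K : ℕ) :
    ∑ k ∈ Finset.range (K + 1), pureComponent W u k = (W K).starProjection u := by
  induction K with
  | zero => simp [pureComponent]
  | succ K ih => rw [Finset.sum_range_succ, ih, pureComponent]; abel

theorem inner_pureComponent_pureComponent (hW : Monotone W) (u : H) {j k : ℕ} (h : j ≠ k) :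
    inner ℝ (pureComponent W u j) (pureComponent W u k) = 0 := by
  rcases lt_or_gt_of_ne h with h | h
  · exact (isPure_pureComponent hW u k).2 j h _ (isPure_pureComponent hW u j).1
  · rw [real_inner_comm]
    exact (isPure_pureComponent hW u j).2 k h _ (isPure_pureComponent hW u k).1

theorem inner_pureComponent_self (hW : Monotone W) (u : H) (k : ℕ) :
    inner ℝ u (pureComponent W u k) = ‖pureComponent W u k‖ ^ 2 := by
  have hproj := Submodule.starProjection_eq_self_iff.2 (isPure_pureComponent hW u k).1
  calc inner ℝ u (pureComponent W u k)
      = inner ℝ ((W k).starProjection u) (pureComponent W u k) := by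
        rw [Submodule.inner_starProjection_left_eq_right, hproj]
    _ = inner ℝ (pureComponent W u k) (pureComponent W u k) := by
        rw [← sum_pureComponent, sum_inner, Finset.sum_range_succ, Finset.sum_eq_zero, zero_add]
        exact fun j hj =>
          inner_pureComponent_pureComponent hW u (Finset.mem_range.1 hj).ne
    _ = ‖pureComponent W u k‖ ^ 2 := real_inner_self_eq_norm_sq _

theorem inner_sum_smul_pureComponent (hW : Monotone W) (u : H) (α : ℕ → ℝ) (K : ℕ) :
    inner ℝ u (∑ k ∈ Finset.range K, α k • pureComponent W u k)
      = ∑ k ∈ Finset.range K, α k * ‖pureComponent W u k‖ ^ 2 := by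
  simp only [inner_sum, real_inner_smul_right, inner_pureComponent_self hW]

theorem tendsto_sum_pureComponent (hW : Monotone W)
    (hdense : ⊤ ≤ (⨆ k, W k).topologicalClosure) (u : H) :
    Filter.Tendsto (fun K => ∑ k ∈ Finset.range (K + 1), pureComponent W u k) Filter.atTop
      (nhds u) := by
  simp_rw [sum_pureComponent]
  exact Submodule.starProjection_tendsto_self W hW u hdense

theorem sum_norm_pureComponent_sq_le (hW : Monotone W) (u : H) (K : ℕ) :
    ∑ k ∈ Finset.range (K + 1), ‖pureComponent W u k‖ ^ 2 ≤ ‖u‖ ^ 2 := by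
  have hsum := inner_sum_smul_pureComponent hW u 1 (K + 1)
  simp only [Pi.one_apply, one_smul, one_mul, sum_pureComponent] at hsum
  calc _ = inner ℝ u ((W K).starProjection u) := hsum.symm
    _ ≤ ‖u‖ * ‖(W K).starProjection u‖ := real_inner_le_norm _ _
    _ ≤ ‖u‖ * ‖u‖ := by gcongr; exact Submodule.norm_starProjection_apply_le _ _
    _ = ‖u‖ ^ 2 := (sq _).symm

theorem IsDiagonal.apply_sum_smul (hB : IsDiagonal W B e) (hW : Monotone W) (u : H)
    (α : ℕ → ℝ) (K : ℕ) :
    B (∑ k ∈ Finset.range K, α k • pureComponent W u k)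
        (∑ k ∈ Finset.range K, α k • pureComponent W u k)
      = ∑ k ∈ Finset.range K, e k * α k ^ 2 * ‖pureComponent W u k‖ ^ 2 := by
  rw [map_sum]
  refine Finset.sum_congr rfl fun k hk => ?_
  rw [map_smul, hB k _ (isPure_pureComponent hW u k), sum_inner,
    Finset.sum_eq_single_of_mem k hk fun j _ hj => by
      rw [real_inner_smul_left, inner_pureComponent_pureComponent hW u hj, mul_zero],
    real_inner_smul_left, real_inner_self_eq_norm_sq, smul_eq_mul]
  ring

theorem IsDiagonal.apply_sum_inv_smul (hB : IsDiagonal W B e) (hW : Monotone W)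
    (he : ∀ k, 0 < e k) (u : H) (K : ℕ) :
    B (∑ k ∈ Finset.range K, (e k)⁻¹ • pureComponent W u k)
        (∑ k ∈ Finset.range K, (e k)⁻¹ • pureComponent W u k)
      = ∑ k ∈ Finset.range K, (e k)⁻¹ * ‖pureComponent W u k‖ ^ 2 := by
  rw [hB.apply_sum_smul hW u fun k => (e k)⁻¹]
  refine Finset.sum_congr rfl fun k _ => ?_
  rw [sq (e k)⁻¹, mul_inv_cancel_left₀ (he k).ne']

theorem IsDiagonal.apply_sum_inv_smul_right (hB : IsDiagonal W B e) (hW : Monotone W)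
    (he : ∀ k, 0 < e k) (u h : H) (K : ℕ) :
    B h (∑ k ∈ Finset.range K, (e k)⁻¹ • pureComponent W u k)
      = inner ℝ (∑ k ∈ Finset.range K, pureComponent W u k) h := by
  rw [map_sum, real_inner_comm, inner_sum]
  refine Finset.sum_congr rfl fun k _ => ?_
  rw [map_smul, hB k _ (isPure_pureComponent hW u k), smul_eq_mul,
    inv_mul_cancel_left₀ (he k).ne']

theorem IsDiagonal.apply_self_nonneg (hB : IsDiagonal W B e) (hW : Monotone W)
    (hdense : ⊤ ≤ (⨆ k, W k).topologicalClosure) (he : ∀ k, 0 ≤ e k) (u : H) : 0 ≤ B u u := by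
  have hcont : Continuous fun v : H => B v v := by fun_prop
  refine ge_of_tendsto' ((hcont.tendsto u).comp (tendsto_sum_pureComponent hW hdense u)) fun K => ?_
  have happly := hB.apply_sum_smul hW u 1 (K + 1)
  simp only [Pi.one_apply, one_smul, one_pow, mul_one] at happly
  rw [Function.comp_apply, happly]
  exact Finset.sum_nonneg fun k _ => mul_nonneg (he k) (sq_nonneg _)

-- Test the bound on `u` against `∑ (e' k)⁻¹ • pureComponent W u k`.
theorem IsDiagonal.sum_inv_mul_le (hB' : IsDiagonal W B' e') (hW : Monotone W)
    (he' : ∀ k, 0 < e' k) {N : ℝ} (hN : 0 ≤ N) {u : H}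
    (hu : ∀ k, ∀ g ∈ W k, inner ℝ u g ^ 2 ≤ N * B' g g) (K : ℕ) :
    ∑ k ∈ Finset.range (K + 1), (e' k)⁻¹ * ‖pureComponent W u k‖ ^ 2 ≤ N := by
  have htest := hu K (∑ k ∈ Finset.range (K + 1), (e' k)⁻¹ • pureComponent W u k)
    (Submodule.sum_mem _ fun k hk => Submodule.smul_mem _ _
      (hW (Finset.mem_range_succ_iff.1 hk) (isPure_pureComponent hW u k).1))
  rw [inner_sum_smul_pureComponent hW u fun k => (e' k)⁻¹, hB'.apply_sum_inv_smul hW he', sq]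
    at htest
  by_contra! hlt
  nlinarith [hN.trans_lt hlt]

theorem IsDiagonal.inner_sq_le_of_inv_le (hB : IsDiagonal W B e)
    (hB' : IsDiagonal W B' e') (hW : Monotone W) (hdense : ⊤ ≤ (⨆ k, W k).topologicalClosure)
    (hsymm : ∀ u v, B u v = B v u) (he : ∀ k, 0 < e k) (he' : ∀ k, 0 < e' k)
    {θ N : ℝ} (hθ : θ ∈ Set.Icc (0 : ℝ) 1) (hinv : ∀ k, (e k)⁻¹ ≤ (1 - θ) + θ * (e' k)⁻¹)
    (hN : 0 ≤ N) {u : H} (hu : ∀ k, ∀ g ∈ W k, inner ℝ u g ^ 2 ≤ N * B' g g) (h : H) :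
    inner ℝ u h ^ 2 ≤ ((1 - θ) * ‖u‖ ^ 2 + θ * N) * B h h := by
  have hnonneg := hB.apply_self_nonneg hW hdense fun k => (he k).le
  have hcont : Continuous fun v : H => (inner ℝ v h : ℝ) ^ 2 := by fun_prop
  refine le_of_tendsto' ((hcont.tendsto u).comp (tendsto_sum_pureComponent hW hdense u))
    fun K => ?_
  rw [Function.comp_apply, ← hB.apply_sum_inv_smul_right hW he]
  set w := ∑ k ∈ Finset.range (K + 1), (e k)⁻¹ • pureComponent W u k
  have hBw : B w w ≤ (1 - θ) * ‖u‖ ^ 2 + θ * N :=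
    calc B w w = ∑ k ∈ Finset.range (K + 1), (e k)⁻¹ * ‖pureComponent W u k‖ ^ 2 :=
          hB.apply_sum_inv_smul hW he u (K + 1)
      _ ≤ ∑ k ∈ Finset.range (K + 1), ((1 - θ) + θ * (e' k)⁻¹) * ‖pureComponent W u k‖ ^ 2 :=
          Finset.sum_le_sum fun k _ => by gcongr; exact hinv k
      _ = (1 - θ) * ∑ k ∈ Finset.range (K + 1), ‖pureComponent W u k‖ ^ 2
            + θ * ∑ k ∈ Finset.range (K + 1), (e' k)⁻¹ * ‖pureComponent W u k‖ ^ 2 := by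
          simp only [add_mul, mul_assoc, Finset.sum_add_distrib, Finset.mul_sum]
      _ ≤ (1 - θ) * ‖u‖ ^ 2 + θ * N :=
          add_le_add
            (mul_le_mul_of_nonneg_left (sum_norm_pureComponent_sq_le hW u K) (sub_nonneg.2 hθ.2))
            (mul_le_mul_of_nonneg_left (hB'.sum_inv_mul_le hW he' hN hu K) hθ.1)
  calc B h w ^ 2 ≤ B h h * B w w :=
        B.toBilinForm.apply_sq_le_of_symm hnonneg ⟨hsymm⟩ h w
    _ ≤ B h h * ((1 - θ) * ‖u‖ ^ 2 + θ * N) := by gcongr; exact hnonneg h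
    _ = _ := mul_comm _ _

end Diagonalization

section Density

open BoundedContinuousFunction

theorem ae_eq_zero_of_forall_integral_mul_eq_zero {E : Type*} [PseudoEMetricSpace E]
    [MeasurableSpace E] [BorelSpace E] [CompleteSpace E] [SecondCountableTopology E]
    {μ : Measure E} [SigmaFinite μ] {A : StarSubalgebra ℝ (BoundedContinuousFunction E ℝ)}
    (hA : (A.map (toContinuousMapStarₐ ℝ)).SeparatesPoints) {F : E → ℝ} (hF : Integrable F μ)
    (horth : ∀ g ∈ A, ∫ x, F x * g x ∂μ = 0) : F =ᵐ[μ] 0 := by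
  have hpos : AEMeasurable (fun x => ENNReal.ofReal (F x)) μ := hF.1.aemeasurable.ennreal_ofReal
  have hneg : AEMeasurable (fun x => ENNReal.ofReal (-F x)) μ :=
    hF.neg.1.aemeasurable.ennreal_ofReal
  have : IsFiniteMeasure (μ.withDensity fun x => ENNReal.ofReal (F x)) :=
    isFiniteMeasure_withDensity_ofReal hF.2
  have : IsFiniteMeasure (μ.withDensity fun x => ENNReal.ofReal (-F x)) :=
    isFiniteMeasure_withDensity_ofReal hF.neg.2
  have hint {G : E → ℝ} (hG : Integrable G μ) (g : BoundedContinuousFunction E ℝ) :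
      Integrable (fun x => max (G x) 0 * g x) μ :=
    hG.pos_part.mul_bdd (c := ‖g‖) g.continuous.aestronglyMeasurable (.of_forall g.norm_coe_le_norm)
  have hmeasure : μ.withDensity (fun x => ENNReal.ofReal (F x)) =
      μ.withDensity fun x => ENNReal.ofReal (-F x) := by
    refine ext_of_forall_mem_subalgebra_integral_eq_of_pseudoEMetric_complete_countable hA
      fun g hg => ?_
    rw [integral_withDensity_eq_integral_toReal_smul₀ hpos (by simp),
      integral_withDensity_eq_integral_toReal_smul₀ hneg (by simp), ← sub_eq_zero]
    simp only [ENNReal.toReal_ofReal', smul_eq_mul]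
    rw [← integral_sub (hint hF g) (by exact hint hF.neg g)]
    simp only [← sub_mul, max_zero_sub_max_neg_zero_eq_self]
    exact horth g hg
  rw [withDensity_eq_iff_of_sigmaFinite hpos hneg] at hmeasure
  filter_upwards [hmeasure] with x hx
  have hparts := congrArg ENNReal.toReal hx
  simp only [ENNReal.toReal_ofReal'] at hparts
  rw [Pi.zero_apply, ← max_zero_sub_max_neg_zero_eq_self (F x), hparts, sub_self]

theorem sphereCoord_injective {x y : 𝔼 n} (h : ∀ i, ω i x = ω i y) : x = y := by
  have hfactor : ρ x = ρ y := by
    have := h none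
    simp only [sphereCoord_none] at this
    linarith
  ext i
  have hi := h (some i)
  rw [sphereCoord_some, sphereCoord_some, hfactor] at hi
  exact mul_left_cancel₀ (conformalFactor_pos y).ne' hi

/-- The algebra of restrictions to `Sⁿ` of polynomials on `ℝⁿ⁺¹`, as bounded continuous functions in
the stereographic coordinate. -/
noncomputable def sphericalPolyAlgebra (n : ℕ) :
    StarSubalgebra ℝ (BoundedContinuousFunction (𝔼 n) ℝ) where
  carrier := {f | ∃ k, ⇑f ∈ sphericalPoly n k}
  mul_mem' := fun ⟨k, hk⟩ ⟨l, hl⟩ => ⟨k + l, mul_mem_sphericalPoly hk hl⟩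
  add_mem' := fun ⟨k, hk⟩ ⟨l, hl⟩ => ⟨max k l, add_mem (sphericalPoly_mono (le_max_left k l) hk)
    (sphericalPoly_mono (le_max_right k l) hl)⟩
  algebraMap_mem' := fun c => ⟨0, mem_sphericalPoly_zero.2 ⟨c, by ext; simp⟩⟩
  star_mem' := fun {f} ⟨k, hk⟩ => ⟨k, by rwa [show ⇑(star f) = ⇑f by ext; simp]⟩

theorem separatesPoints_sphericalPolyAlgebra :
    ((sphericalPolyAlgebra n).map (toContinuousMapStarₐ ℝ)).SeparatesPoints := by
  intro x y hxy
  obtain ⟨i, hi⟩ : ∃ i, ω i x ≠ ω i y := by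
    by_contra! h
    exact hxy (sphereCoord_injective h)
  let g : BoundedContinuousFunction (𝔼 n) ℝ := .ofNormedAddCommGroup (ω i)
    (contDiff_sphereCoord i).continuous 1 (abs_sphereCoord_le_one i)
  exact ⟨ω i, ⟨toContinuousMapStarₐ ℝ g,
    ⟨g, ⟨1, sphereCoord_mem_sphericalPoly_one i⟩, rfl⟩, rfl⟩, hi⟩

instance (k : ℕ) : FiniteDimensional ℝ (sphericalPoly n k) :=
  Module.Finite.iff_fg.2 (fg_sphericalPoly k)

variable [NeZero n]

/-- The space of spherical polynomials of degree at most `k` in `L²(Sⁿ)`. -/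
noncomputable def sphericalPolyL2 (n : ℕ) [NeZero n] (k : ℕ) : Submodule ℝ (Lp ℝ 2 (σ n)) :=
  LinearMap.range
    ({ toFun := fun P => (memLp_of_mem_sphericalPoly P.2 2).toLp (P : 𝔼 n → ℝ)
       map_add' := fun _ _ => rfl
       map_smul' := fun _ _ => rfl } : sphericalPoly n k →ₗ[ℝ] Lp ℝ 2 (σ n))

instance (k : ℕ) : FiniteDimensional ℝ (sphericalPolyL2 n k) := by
  unfold sphericalPolyL2
  infer_instance

theorem mem_sphericalPolyL2 {k : ℕ} {w : Lp ℝ 2 (σ n)} :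
    w ∈ sphericalPolyL2 n k ↔
      ∃ P, ∃ hP : P ∈ sphericalPoly n k, (memLp_of_mem_sphericalPoly hP 2).toLp P = w :=
  ⟨fun ⟨P, hP⟩ => ⟨P, P.2, hP⟩, fun ⟨P, hP, hw⟩ => ⟨⟨P, hP⟩, hw⟩⟩

theorem sphericalPolyL2_mono : Monotone (sphericalPolyL2 n) := by
  intro k l hkl w hw
  obtain ⟨P, hP, rfl⟩ := mem_sphericalPolyL2.1 hw
  exact mem_sphericalPolyL2.2 ⟨P, sphericalPoly_mono hkl hP, rfl⟩

theorem topologicalClosure_iSup_sphericalPolyL2 :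
    ⊤ ≤ (⨆ k, sphericalPolyL2 n k).topologicalClosure := by
  rw [top_le_iff, Submodule.topologicalClosure_eq_top_iff, Submodule.eq_bot_iff]
  refine fun F hF => Lp.eq_zero_iff_ae_eq_zero.2 (ae_eq_zero_of_forall_integral_mul_eq_zero
    separatesPoints_sphericalPolyAlgebra ((Lp.memLp F).integrable one_le_two) ?_)
  rintro P ⟨k, hP⟩
  rw [← (Submodule.mem_orthogonal _ _).1 hF _
    (Submodule.mem_iSup_of_mem k (mem_sphericalPolyL2.2 ⟨P, hP, rfl⟩)), L2.inner_def]
  refine integral_congr_ae ?_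
  filter_upwards [(memLp_of_mem_sphericalPoly hP 2).coeFn_toLp] with x hx
  simp [hx]

end Density

section Spectrum

theorem inner_toLp_toLp {f g : 𝔼 n → ℝ} (hf : MemLp f 2 (σ n)) (hg : MemLp g 2 (σ n)) :
    inner ℝ (hf.toLp f) (hg.toLp g) = sphereInner f g := by
  rw [L2.inner_def]
  refine integral_congr_ae ?_
  filter_upwards [hf.coeFn_toLp, hg.coeFn_toLp] with x hfx hgx
  simp [hfx, hgx, mul_comm]

theorem rieszEigenvalue_pos {a : ℝ} (ha₀ : 0 < a) (ha : a < n / 2) (k : ℕ) :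
    0 < rieszEigenvalue n a k := by
  induction k with
  | zero => exact chordalMass_pos ha
  | succ k ih =>
    have : 0 < k + n - a := by linarith [k.cast_nonneg (α := ℝ)]
    rw [rieszEigenvalue_succ]
    positivity

theorem rieszEigenvalue_zero_succ (n k : ℕ) : rieszEigenvalue n 0 (k + 1) = 0 := by
  induction k with
  | zero => simp [rieszEigenvalue]
  | succ k ih => rw [rieszEigenvalue_succ, ih, mul_zero]

theorem memLp_sphereCoord_mul {i : Option (Fin n)} {f : 𝔼 n → ℝ} {p : ENNReal}
    (hf : MemLp f p (σ n)) : MemLp (ω i * f) p (σ n) := by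
  refine hf.mono ((contDiff_sphereCoord i).continuous.aestronglyMeasurable.mul hf.1)
    (.of_forall fun x => ?_)
  rw [Pi.mul_apply, norm_mul]
  exact mul_le_of_le_one_left (norm_nonneg _) (abs_sphereCoord_le_one i x)

theorem chordalKernel_sub_one (a : ℝ) {x y : 𝔼 n} (hxy : x ≠ y) :
    chordalKernel (a - 1) x y = ‖x - y‖ ^ 2 * (ρ x * ρ y) * chordalKernel a x y := by
  have hnorm : 0 < ‖x - y‖ := norm_pos_iff.2 (sub_ne_zero.2 hxy)
  have hx := conformalFactor_pos x
  have hy := conformalFactor_pos y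
  unfold chordalKernel
  rw [show -(a - 1) = 1 + -a by ring, rpow_add (by positivity), rpow_one]

variable [NeZero n]

theorem isDiagonal_rieszFormL2 {a : ℝ} (ha : a < n / 2) :
    IsDiagonal (sphericalPolyL2 n) (rieszFormL2 n ha) (rieszEigenvalue n a) := by
  refine isDiagonal_of_triangular sphericalPolyL2_mono topologicalClosure_iSup_sphericalPolyL2
    (rieszFormL2_comm ha) fun k w hw => ?_
  obtain ⟨P, hP, rfl⟩ := mem_sphericalPolyL2.1 hw
  obtain ⟨P', hP', h⟩ := isRieszTriangular_of_mem_sphericalPoly ha hP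
  refine ⟨(memLp_of_mem_sphericalPoly (sphericalPolyLT_le k hP') 2).toLp P', ?_, fun l v hv => ?_⟩
  · cases k with
    | zero =>
      obtain rfl := (Submodule.mem_bot ℝ).1 hP'
      exact Or.inl (MemLp.toLp_zero _)
    | succ k => exact Or.inr ⟨k, k.lt_succ_self, mem_sphericalPolyL2.2 ⟨P', hP', rfl⟩⟩
  · obtain ⟨R, hR, rfl⟩ := mem_sphericalPolyL2.1 hv
    rw [rieszFormL2_toLp, inner_toLp_toLp, inner_toLp_toLp, h R hR]

theorem chordalMass_sub_one {a : ℝ} (ha : a < n / 2) :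
    chordalMass n (a - 1) = 2 * ((n - 2 * a) / (n - a)) * chordalMass n a := by
  have hn := natCast_half_pos (n := n)
  have h₁ : 0 < n - a := by linarith
  have h₂ : 0 < n - a - n / 2 := by linarith
  have hGamma := (Gamma_pos_of_pos h₁).ne'
  unfold chordalMass
  rw [show n - (a - 1) - n / 2 = (n - a - n / 2) + 1 by ring,
    show n - (a - 1) = (n - a) + 1 by ring, Gamma_add_one h₂.ne', Gamma_add_one h₁.ne',
    show n - 2 * (a - 1) = (n - 2 * a) + 2 by ring, rpow_add (by norm_num)]
  norm_num
  field_simp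
  ring

theorem half_mul_rieszEigenvalue_sub_one_le {a : ℝ} (ha₀ : 0 < a) (ha : a < n / 2) (k : ℕ) :
    1 / 2 * rieszEigenvalue n (a - 1) (k + 1)
      ≤ (n - 2 * a) / (n - a + 1) * rieszEigenvalue n a (k + 1) := by
  have h₁ : 0 < n - a := by linarith
  have h₂ : 0 < n - 2 * a := by linarith
  induction k with
  | zero =>
    have hmass := chordalMass_pos ha
    simp only [rieszEigenvalue, chordalMass_sub_one ha, Nat.cast_zero, zero_add]
    have hdiff : (n - 2 * a) / (n - a + 1) * (a / (n - a) * chordalMass n a)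
        - 1 / 2 * ((a - 1) / (n - (a - 1)) * (2 * ((n - 2 * a) / (n - a)) * chordalMass n a))
        = (n - 2 * a) / ((n - a) * (n - a + 1)) * chordalMass n a := by
      rw [show n - (a - 1) = n - a + 1 by ring]
      field_simp
      ring
    rw [← sub_nonneg, hdiff]
    positivity
  | succ k ih =>
    have heig := rieszEigenvalue_pos ha₀ ha (k + 1)
    rw [rieszEigenvalue_succ n (a - 1), rieszEigenvalue_succ n a]
    push_cast
    have hratio_nonneg : 0 ≤ (k + 1 + (a - 1)) / (k + 1 + n - (a - 1)) :=
      div_nonneg (by linarith) (by linarith)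
    have hratio : (k + 1 + (a - 1)) / (k + 1 + n - (a - 1)) ≤ (k + 1 + a) / (k + 1 + n - a) := by
      rw [div_le_div_iff₀ (by linarith) (by linarith)]
      nlinarith
    calc _ = (k + 1 + (a - 1)) / (k + 1 + n - (a - 1))
            * (1 / 2 * rieszEigenvalue n (a - 1) (k + 1)) := by ring
      _ ≤ (k + 1 + (a - 1)) / (k + 1 + n - (a - 1))
            * ((n - 2 * a) / (n - a + 1) * rieszEigenvalue n a (k + 1)) := by gcongr
      _ ≤ (k + 1 + a) / (k + 1 + n - a)
            * ((n - 2 * a) / (n - a + 1) * rieszEigenvalue n a (k + 1)) := by gcongr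
      _ = _ := by ring

theorem ae_fst_ne_snd : ∀ᵐ z : 𝔼 n × 𝔼 n ∂(σ n).prod (σ n), z.1 ≠ z.2 := by
  have hdiag : MeasurableSet {z : 𝔼 n × 𝔼 n | z.1 = z.2} :=
    measurableSet_eq_fun measurable_fst measurable_snd
  have hslice (x : 𝔼 n) : Prod.mk x ⁻¹' {z : 𝔼 n × 𝔼 n | z.1 = z.2} = {x} := by
    ext y
    simp [eq_comm]
  simp only [ae_iff, ne_eq, not_not]
  rw [Measure.measure_prod_null hdiag]
  filter_upwards with x
  rw [hslice]
  exact sphereMeasure_absolutelyContinuous (measure_singleton x)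

theorem sum_rieszForm_sphereCoord_mul {a : ℝ} (ha : a < n / 2) {h : 𝔼 n → ℝ}
    (hh : MemLp h 2 (σ n)) :
    ∑ i, rieszForm a (ω i * h) (ω i * h) = rieszForm a h h - 1 / 2 * rieszForm (a - 1) h h := by
  unfold rieszForm
  rw [← integral_finsetSum _ fun i _ =>
      integrable_rieszForm ha (memLp_sphereCoord_mul hh) (memLp_sphereCoord_mul hh),
    ← integral_const_mul, ← integral_sub (integrable_rieszForm ha hh hh)
      ((integrable_rieszForm (by linarith) hh hh).const_mul _)]
  refine integral_congr_ae ?_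
  filter_upwards [ae_fst_ne_snd] with z hz
  calc ∑ i, (ω i * h : 𝔼 n → ℝ) z.1 * (ω i * h : 𝔼 n → ℝ) z.2 * chordalKernel a z.1 z.2
      = (∑ i, ω i z.1 * ω i z.2) * (h z.1 * h z.2 * chordalKernel a z.1 z.2) := by
        rw [Finset.sum_mul]
        refine Finset.sum_congr rfl fun i _ => ?_
        simp only [Pi.mul_apply]
        ring
    _ = _ := by
        rw [sum_sphereCoord_mul, chordalKernel_sub_one a hz]
        ring

/-- The spectral gap behind the second variation argument: multiplication by the coordinates of
`Sⁿ` loses at most the constant functions. -/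
theorem le_sum_rieszForm_sphereCoord_mul {a : ℝ} (ha₀ : 0 < a) (ha : a < n / 2) {h : 𝔼 n → ℝ}
    (hh : MemLp h 2 (σ n)) {τ c : ℝ} (hτ : τ = (n - 2 * a) / (n - a))
    (hc : c = τ / (n - a + 1)) :
    (1 - τ + c) * rieszForm a h h
        - c * (chordalMass n a / chordalMass n 0 * (∫ x, h x ∂(σ n)) ^ 2)
      ≤ ∑ i, rieszForm a (ω i * h) (ω i * h) := by
  have hn := natCast_half_pos (n := n)
  have h₁ : 0 < n - a := by linarith
  have hmass := (chordalMass_pos hn).ne'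
  have hdiag := (((isDiagonal_rieszFormL2 ha).smul (τ - c)).add
    ((isDiagonal_rieszFormL2 (a := a - 1) (by linarith)).smul (-(1 / 2)))).add
    ((isDiagonal_rieszFormL2 hn).smul (c * (chordalMass n a / chordalMass n 0)))
  have hnonneg := hdiag.apply_self_nonneg sphericalPolyL2_mono
    topologicalClosure_iSup_sphericalPolyL2 (fun k => ?_) (hh.toLp h)
  · simp only [add_apply, smul_apply, smul_eq_mul, rieszFormL2_toLp, rieszForm_zero] at hnonneg
    rw [sum_rieszForm_sphereCoord_mul ha hh]
    linarith
  · simp only [Pi.add_apply, Pi.smul_apply, smul_eq_mul]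
    cases k with
    | zero =>
      simp only [rieszEigenvalue]
      rw [chordalMass_sub_one ha, ← hτ, mul_assoc c, div_mul_cancel₀ _ hmass]
      linarith
    | succ k =>
      have hgap : (n - 2 * a) / (n - a + 1) = τ - c := by
        rw [hc, hτ]
        field_simp
        ring
      have hle := half_mul_rieszEigenvalue_sub_one_le ha₀ ha k
      rw [hgap] at hle
      rw [rieszEigenvalue_zero_succ]
      linarith

end Spectrum

/-- The reciprocals `∏_{j<k} (j + n - a) / (j + a)` of the eigenvalues of the Riesz form on `Sⁿ`,
normalised to be `1` at `k = 0` and parametrised by `a = n / (t + 2)`. -/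
noncomputable def reciprocalEigenvalue (n : ℕ) (t : ℝ) (k : ℕ) : ℝ :=
  ∏ j ∈ Finset.range k, (n + 2 * j + (n + j) * t) / (n + 2 * j + j * t)

theorem reciprocalEigenvalue_succ (n : ℕ) (t : ℝ) (k : ℕ) :
    reciprocalEigenvalue n t (k + 1)
      = reciprocalEigenvalue n t k * ((n + 2 * k + (n + k) * t) / (n + 2 * k + k * t)) :=
  Finset.prod_range_succ _ _

theorem reciprocalEigenvalue_eq_one_add_mul_sum [NeZero n] {t : ℝ} (ht : 0 < t) (k : ℕ) :
    reciprocalEigenvalue n t k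
      = 1 + t * ∑ j ∈ Finset.range k, reciprocalEigenvalue n t j * (n / (n + 2 * j + j * t)) := by
  have hn : (0 : ℝ) < n := by linarith [natCast_half_pos (n := n)]
  induction k with
  | zero => simp [reciprocalEigenvalue]
  | succ k ih =>
    have : 0 < n + 2 * k + k * t := by positivity
    rw [Finset.sum_range_succ, mul_add, ← add_assoc, ← ih, reciprocalEigenvalue_succ]
    field_simp
    ring

theorem reciprocalEigenvalue_mul_div_mono [NeZero n] {t T : ℝ} (ht : 0 < t) (hT : t ≤ T) (k : ℕ) :
    reciprocalEigenvalue n t k * (n / (n + 2 * k + k * t))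
      ≤ reciprocalEigenvalue n T k * (n / (n + 2 * k + k * T)) := by
  have hn : (0 : ℝ) < n := by linarith [natCast_half_pos (n := n)]
  have hT₀ : 0 < T := ht.trans_le hT
  cases k with
  | zero => simp [reciprocalEigenvalue]
  | succ k =>
    have hfirst (s : ℝ) : (n + 2 * (0 : ℕ) + (n + (0 : ℕ)) * s) / (n + 2 * (0 : ℕ) + (0 : ℕ) * s)
        = 1 + s := by
      push_cast
      rw [div_eq_iff (by linarith)]
      ring
    -- The factor `1 + t` from `j = 0` compensates for the decrease of `n / (n + 2 k + k t)`.
    have hfactor {m : ℝ} (hm : 0 ≤ m) :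
        (n + 2 * m + (n + m) * t) / (n + 2 * m + m * t)
          ≤ (n + 2 * m + (n + m) * T) / (n + 2 * m + m * T) := by
      rw [div_le_div_iff₀ (by positivity) (by positivity)]
      linarith [mul_nonneg (mul_nonneg hn.le (by positivity : 0 ≤ n + 2 * m)) (sub_nonneg.2 hT)]
    have hlast {m : ℝ} (hm : 0 ≤ m) :
        (1 + t) * (n / (n + 2 * m + m * t)) ≤ (1 + T) * (n / (n + 2 * m + m * T)) := by
      rw [← mul_div_assoc, ← mul_div_assoc, div_le_div_iff₀ (by positivity) (by positivity)]
      linarith [mul_nonneg (mul_nonneg hn.le (by positivity : 0 ≤ n + m)) (sub_nonneg.2 hT)]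
    unfold reciprocalEigenvalue
    rw [Finset.prod_range_succ', Finset.prod_range_succ', mul_assoc, mul_assoc, hfirst, hfirst]
    exact mul_le_mul
      (Finset.prod_le_prod (fun j _ => by positivity) fun j _ => hfactor (j + 1).cast_nonneg)
      (hlast (k + 1).cast_nonneg) (by positivity) (Finset.prod_nonneg fun j _ => by positivity)

theorem reciprocalEigenvalue_le_convexCombination [NeZero n] {t T : ℝ} (ht : 0 < t) (hT : t ≤ T)
    (k : ℕ) : reciprocalEigenvalue n t k ≤ (1 - t / T) + t / T * reciprocalEigenvalue n T k := by
  have hT₀ : 0 < T := ht.trans_le hT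
  calc reciprocalEigenvalue n t k
      = 1 + t * ∑ j ∈ Finset.range k, reciprocalEigenvalue n t j * (n / (n + 2 * j + j * t)) :=
        reciprocalEigenvalue_eq_one_add_mul_sum ht k
    _ ≤ 1 + t * ∑ j ∈ Finset.range k, reciprocalEigenvalue n T j * (n / (n + 2 * j + j * T)) := by
        gcongr 1 + t * ?_
        exact Finset.sum_le_sum fun j _ => reciprocalEigenvalue_mul_div_mono ht hT j
    _ = (1 - t / T) + t / T * reciprocalEigenvalue n T k := by
        rw [reciprocalEigenvalue_eq_one_add_mul_sum hT₀ k]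
        rw [← mul_right_inj' hT₀.ne']
        generalize (∑ j ∈ Finset.range k, _ : ℝ) = S
        field_simp
        ring

theorem inv_rieszEigenvalue_eq_reciprocalEigenvalue [NeZero n] {t : ℝ} (ht : 0 < t) (k : ℕ) :
    ((chordalMass n (n / (t + 2)))⁻¹ * rieszEigenvalue n (n / (t + 2)) k)⁻¹
      = reciprocalEigenvalue n t k := by
  have hn : (0 : ℝ) < n := by linarith [natCast_half_pos (n := n)]
  have hlt : (n : ℝ) / (t + 2) < n / 2 :=
    div_lt_div_of_pos_left (by linarith) two_pos (by linarith)
  induction k with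
  | zero => simp [rieszEigenvalue, reciprocalEigenvalue, (chordalMass_pos hlt).ne']
  | succ k ih =>
    have : 0 < n + 2 * k + k * t := by positivity
    rw [reciprocalEigenvalue_succ, ← ih, rieszEigenvalue_succ, mul_left_comm, mul_inv, mul_comm,
      inv_div, show (k : ℝ) + n - n / (t + 2) = (n + 2 * k + (n + k) * t) / (t + 2) by
        field_simp; ring,
      show (k : ℝ) + n / (t + 2) = (n + 2 * k + k * t) / (t + 2) by field_simp; ring]
    field_simp

/-- Bounded measurable functions. -/
structure IsBoundedMeasurable (h : 𝔼 n → ℝ) : Prop where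
  measurable : Measurable h
  exists_abs_le : ∃ M, ∀ x, |h x| ≤ M

namespace IsBoundedMeasurable

theorem memLp [NeZero n] {h : 𝔼 n → ℝ} (hh : IsBoundedMeasurable h) (p : ENNReal) :
    MemLp h p (σ n) :=
  let ⟨M, hM⟩ := hh.exists_abs_le
  MemLp.of_bound hh.measurable.aestronglyMeasurable M (.of_forall hM)

theorem integrable [NeZero n] {h : 𝔼 n → ℝ} (hh : IsBoundedMeasurable h) : Integrable h (σ n) :=
  (hh.memLp 1).integrable le_rfl

theorem abs {h : 𝔼 n → ℝ} (hh : IsBoundedMeasurable h) : IsBoundedMeasurable fun x => |h x| := by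
  obtain ⟨M, hM⟩ := hh.exists_abs_le
  exact ⟨hh.measurable.abs, M, fun x => by rw [abs_abs]; exact hM x⟩

theorem rpow {h : 𝔼 n → ℝ} (hh : IsBoundedMeasurable h) {p : ℝ} (hp : 0 ≤ p) :
    IsBoundedMeasurable fun x => |h x| ^ p := by
  obtain ⟨M, hM⟩ := hh.exists_abs_le
  refine ⟨hh.measurable.abs.pow_const p, M ^ p, fun x => ?_⟩
  rw [abs_of_nonneg (by positivity)]
  exact rpow_le_rpow (abs_nonneg _) (hM x) hp

theorem mul {h g : 𝔼 n → ℝ} (hh : IsBoundedMeasurable h) (hg : IsBoundedMeasurable g) :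
    IsBoundedMeasurable (h * g) := by
  obtain ⟨M, hM⟩ := hh.exists_abs_le
  obtain ⟨M', hM'⟩ := hg.exists_abs_le
  refine ⟨hh.measurable.mul hg.measurable, M * M', fun x => ?_⟩
  rw [Pi.mul_apply, abs_mul]
  exact mul_le_mul (hM x) (hM' x) (abs_nonneg _) ((abs_nonneg _).trans (hM x))

end IsBoundedMeasurable

/-- The integral of the Riesz kernel at the origin, truncated at infinity by the conformal
weight. -/
noncomputable def truncatedRieszMass (n : ℕ) (a : ℝ) : ℝ :=
  ∫ w : 𝔼 n, rieszKernel a 0 w * conformalWeight a w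

theorem truncatedRieszMass_nonneg (n : ℕ) (a : ℝ) : 0 ≤ truncatedRieszMass n a :=
  integral_nonneg fun w => mul_nonneg (rieszKernel_nonneg a 0 w) (conformalWeight_pos a w).le

theorem integrable_rieszKernel_zero_mul_conformalWeight [NeZero n] {a : ℝ} (ha : a < n / 2) :
    Integrable fun w : 𝔼 n => rieszKernel a 0 w * conformalWeight a w := by
  have h := integrable_sphereMeasure_iff.1 (integrable_chordalKernel (n := n) ha 0)
  refine (h.const_mul (ρ (0 : 𝔼 n) ^ n / conformalWeight a (0 : 𝔼 n))).congr
    (.of_forall fun w => ?_)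
  change _ / _ * (chordalKernel a 0 w * ρ w ^ n) = _
  rw [div_mul_eq_mul_div, div_eq_iff (conformalWeight_pos a 0).ne']
  linear_combination chordalKernel_mul_pow a 0 w

theorem lintegral_rieszKernel_mul_conformalWeight_smul [NeZero n] {a : ℝ} (ha : a < n / 2)
    (x : 𝔼 n) {r : ℝ} (hr : 0 < r) :
    ∫⁻ y, ENNReal.ofReal (rieszKernel a x y * conformalWeight a (r⁻¹ • (x - y)))
      = ENNReal.ofReal (r ^ (n - 2 * a) * truncatedRieszMass n a) := by
  set f : 𝔼 n → ℝ := fun w => rieszKernel a 0 w * conformalWeight a w with hf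
  have hscale (y : 𝔼 n) : rieszKernel a x y * conformalWeight a (r⁻¹ • (x - y))
      = r ^ (-(2 * a)) * f (r⁻¹ • (x - y)) := by
    have hkernel : rieszKernel a 0 (r⁻¹ • (x - y)) = r ^ (2 * a) * rieszKernel a x y := by
      unfold rieszKernel
      rw [zero_sub, norm_neg, norm_smul, norm_inv, norm_of_nonneg hr.le, mul_pow,
        mul_rpow (by positivity) (by positivity), inv_pow, inv_rpow (by positivity),
        rpow_neg (by positivity), inv_inv, ← rpow_natCast_mul hr.le, Nat.cast_two]
    simp only [hf]
    rw [hkernel, ← mul_assoc, ← mul_assoc, ← rpow_add hr, neg_add_cancel, rpow_zero, one_mul]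
  have hint : Integrable fun y => r ^ (-(2 * a)) * f (r⁻¹ • (x - y)) :=
    (((integrable_rieszKernel_zero_mul_conformalWeight ha).comp_smul
      (inv_ne_zero hr.ne')).comp_sub_left x).const_mul _
  have hpow : r ^ (-(2 * a)) * r ^ n = r ^ (n - 2 * a) := by
    rw [← rpow_natCast, ← rpow_add hr, neg_add_eq_sub]
  simp_rw [hscale]
  rw [← ofReal_integral_eq_lintegral_ofReal hint (.of_forall fun y => mul_nonneg (by positivity)
      (mul_nonneg (rieszKernel_nonneg _ _ _) (conformalWeight_pos _ _).le)), integral_const_mul,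
    integral_sub_left_eq_self (fun z => f (r⁻¹ • z)), Measure.integral_comp_smul,
    finrank_euclideanSpace_fin, smul_eq_mul, ← mul_assoc, inv_pow, inv_inv,
    abs_of_pos (by positivity), hpow, truncatedRieszMass]

theorem min_one_inv_sq_norm_rpow_le_conformalWeight {a : ℝ} (ha : a ≤ n) (w : 𝔼 n) :
    min 1 ((‖w‖ ^ 2)⁻¹ ^ (n - a)) ≤ conformalWeight a w := by
  have ha' : 0 ≤ n - a := sub_nonneg.2 ha
  unfold conformalWeight conformalFactor
  rcases le_or_gt ‖w‖ 1 with hw | hw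
  · refine (min_le_left _ _).trans (one_le_rpow ?_ ha')
    rw [one_le_div₀ (by positivity)]
    linarith [pow_le_one₀ (n := 2) (norm_nonneg w) hw]
  · refine (min_le_right _ _).trans (rpow_le_rpow (by positivity) ?_ ha')
    rw [inv_eq_one_div, div_le_div_iff₀ (by positivity) (by positivity)]
    linarith [one_le_pow₀ (n := 2) hw.le]

-- Hedberg's trick: the kernel is cut at the radius where the two resulting bounds balance.
theorem mul_rieszKernel_le_hedberg {a : ℝ} (ha₀ : 0 < a) (ha : a < n / 2) {A H : ℝ} (hA : 0 < A)
    (hH : 0 ≤ H) (hHA : H ≤ A) (x y : 𝔼 n) :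
    H * rieszKernel a x y ≤ A ^ (a / (n - a)) * H ^ (n / (n - a))
      + A * (rieszKernel a x y
        * conformalWeight a ((A ^ (-1 / (n - a)))⁻¹ • (x - y))) := by
  have hna : 0 < n - a := by linarith
  set r := A ^ (-1 / (n - a))
  set z := x - y
  set k := rieszKernel a x y
  have hr : 0 < r := by positivity
  have hk : 0 ≤ k := rieszKernel_nonneg a x y
  have hweight := (conformalWeight_pos a (r⁻¹ • z)).le
  rcases le_or_gt ((‖z‖ ^ 2) ^ (-(n - a))) (A * H) with hfar | hnear
  · refine le_add_of_le_of_nonneg ?_ (by positivity)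
    have hkle : k ≤ A ^ (a / (n - a)) * H ^ (a / (n - a)) := by
      calc k = ((‖z‖ ^ 2) ^ (-(n - a))) ^ (a / (n - a)) := by
            rw [← rpow_mul (by positivity), neg_mul, mul_div_cancel₀ _ hna.ne']
            rfl
        _ ≤ (A * H) ^ (a / (n - a)) := by gcongr
        _ = A ^ (a / (n - a)) * H ^ (a / (n - a)) := mul_rpow hA.le hH
    calc H * k ≤ H * (A ^ (a / (n - a)) * H ^ (a / (n - a))) := by gcongr
      _ = A ^ (a / (n - a)) * (H ^ (1 : ℝ) * H ^ (a / (n - a))) := by rw [rpow_one]; ring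
      _ = A ^ (a / (n - a)) * H ^ (n / (n - a)) := by
        rw [← rpow_add_of_nonneg hH zero_le_one (by positivity), one_add_div hna.ne',
          sub_add_cancel]
  · refine le_add_of_nonneg_of_le (by positivity) ?_
    have hpow : (‖r⁻¹ • z‖ ^ 2)⁻¹ ^ (n - a) = (‖z‖ ^ 2) ^ (-(n - a)) / A ^ 2 := by
      have hr2 : (r ^ 2) ^ (n - a) = (A ^ 2)⁻¹ := by
        rw [← rpow_natCast_mul hr.le, ← rpow_mul hA.le, ← rpow_natCast, ← rpow_neg hA.le]
        congr 1
        field_simp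
      rw [norm_smul, norm_inv, norm_of_nonneg hr.le, mul_pow, inv_pow, mul_inv, inv_inv,
        mul_rpow (by positivity) (by positivity), hr2, inv_rpow (by positivity),
        rpow_neg (by positivity), mul_comm, div_eq_mul_inv]
    have hHle : H ≤ A * conformalWeight a (r⁻¹ • z) := by
      refine le_trans ?_ (mul_le_mul_of_nonneg_left
        (min_one_inv_sq_norm_rpow_le_conformalWeight (by linarith) _) hA.le)
      rw [mul_min_of_nonneg _ _ hA.le, mul_one, hpow]
      refine le_min hHA ?_
      rw [← mul_div_assoc, le_div_iff₀ (by positivity)]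
      nlinarith
    calc H * k ≤ A * conformalWeight a (r⁻¹ • z) * k := by gcongr
      _ = A * (k * conformalWeight a (r⁻¹ • z)) := by ring

theorem conformalWeight_rpow {a : ℝ} (ha : a < n) (x : 𝔼 n) :
    conformalWeight a x ^ (n / (n - a)) = ρ x ^ n := by
  unfold conformalWeight
  rw [← rpow_mul (conformalFactor_pos x).le, mul_div_cancel₀ _ (sub_pos.2 ha).ne', rpow_natCast]

section

variable [NeZero n]

theorem lintegral_mul_mul_rieszKernel_le_of_le {a : ℝ} (ha₀ : 0 < a) (ha : a < n / 2)
    {H : 𝔼 n → ℝ} (hm : Measurable H) (hH : ∀ x, 0 ≤ H x)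
    (hN : ∫⁻ x, ENNReal.ofReal (H x ^ (n / (n - a))) = 1) (x : 𝔼 n) :
    ∫⁻ y, (if H y ≤ H x then ENNReal.ofReal (H x * H y * rieszKernel a x y) else 0)
      ≤ ENNReal.ofReal (1 + truncatedRieszMass n a)
        * ENNReal.ofReal (H x ^ (n / (n - a))) := by
  have hna : 0 < n - a := by linarith
  rcases (hH x).eq_or_lt with hx | hx
  · simp [← hx]
  set A := H x
  set p := n / (n - a) with hp
  set r := A ^ (-1 / (n - a)) with hr
  have hr₀ : 0 < r := by positivity
  have hmass := truncatedRieszMass_nonneg n a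
  have hA : A * A ^ (a / (n - a)) = A ^ p := by
    rw [← rpow_one_add' hx.le (by positivity), one_add_div hna.ne', sub_add_cancel]
  have hAr : A ^ 2 * r ^ (n - 2 * a) = A ^ p := by
    rw [hr, ← rpow_mul hx.le, ← rpow_natCast, ← rpow_add hx, hp]
    congr 1
    push_cast
    field_simp
    ring
  have hpoint (y : 𝔼 n) (hy : H y ≤ A) : A * H y * rieszKernel a x y ≤
      A ^ p * H y ^ p + A ^ 2 * (rieszKernel a x y * conformalWeight a (r⁻¹ • (x - y))) := by
    rw [mul_assoc, ← hA]
    refine (mul_le_mul_of_nonneg_left (mul_rieszKernel_le_hedberg ha₀ ha hx (hH y) hy x y)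
      hx.le).trans_eq ?_
    ring
  calc _ ≤ ∫⁻ y, (ENNReal.ofReal (A ^ p) * ENNReal.ofReal (H y ^ p) + ENNReal.ofReal (A ^ 2)
        * ENNReal.ofReal (rieszKernel a x y * conformalWeight a (r⁻¹ • (x - y)))) := by
        refine lintegral_mono fun y => ?_
        split_ifs with hy
        · rw [← ENNReal.ofReal_mul (by positivity), ← ENNReal.ofReal_mul (by positivity),
            ← ENNReal.ofReal_add (mul_nonneg (by positivity) (rpow_nonneg (hH y) _))
              (mul_nonneg (by positivity)
                (mul_nonneg (rieszKernel_nonneg _ _ _) (conformalWeight_pos _ _).le))]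
          exact ENNReal.ofReal_le_ofReal (hpoint y hy)
        · exact zero_le
    _ = ENNReal.ofReal (A ^ p)
        + ENNReal.ofReal (A ^ 2) * ENNReal.ofReal (r ^ (n - 2 * a) * truncatedRieszMass n a) := by
        rw [lintegral_add_left (by fun_prop), lintegral_const_mul _ (by fun_prop), hN, mul_one,
          lintegral_const_mul' _ _ (by simp),
          lintegral_rieszKernel_mul_conformalWeight_smul ha x hr₀]
    _ = _ := by
        rw [← ENNReal.ofReal_mul (by positivity), ← ENNReal.ofReal_add (by positivity)
          (by positivity), ← ENNReal.ofReal_mul (by positivity), ← mul_assoc, hAr]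
        ring_nf

theorem lintegral_mul_mul_rieszKernel_le {a : ℝ} (ha₀ : 0 < a) (ha : a < n / 2)
    {H : 𝔼 n → ℝ} (hm : Measurable H) (hH : ∀ x, 0 ≤ H x)
    (hN : ∫⁻ x, ENNReal.ofReal (H x ^ (n / (n - a))) = 1) :
    ∫⁻ z : 𝔼 n × 𝔼 n, ENNReal.ofReal (H z.1 * H z.2 * rieszKernel a z.1 z.2)
      ≤ ENNReal.ofReal (2 * (1 + truncatedRieszMass n a)) := by
  have hmass := truncatedRieszMass_nonneg n a
  have hkernel := measurable_rieszKernel (n := n) a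
  set F : 𝔼 n × 𝔼 n → ENNReal := fun z =>
    if H z.2 ≤ H z.1 then ENNReal.ofReal (H z.1 * H z.2 * rieszKernel a z.1 z.2) else 0 with hF
  have hFm : Measurable F :=
    Measurable.ite (measurableSet_le (by fun_prop) (by fun_prop)) (by fun_prop) measurable_const
  have hhalf : ∫⁻ z, F z ≤ ENNReal.ofReal (1 + truncatedRieszMass n a) := by
    rw [Measure.volume_eq_prod, lintegral_prod _ hFm.aemeasurable]
    refine (lintegral_mono (lintegral_mul_mul_rieszKernel_le_of_le ha₀ ha hm hH hN)).trans_eq ?_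
    rw [lintegral_const_mul _ (by fun_prop), hN, mul_one]
  calc _ ≤ ∫⁻ z, (F z + F z.swap) := by
        refine lintegral_mono fun z => ?_
        simp only [hF, Prod.fst_swap, Prod.snd_swap]
        rcases le_total (H z.2) (H z.1) with h | h
        · rw [if_pos h]
          exact le_self_add
        · rw [if_pos h, mul_comm (H z.1), rieszKernel, norm_sub_rev]
          exact le_add_self
    _ = (∫⁻ z, F z) + ∫⁻ z, F z := by
        rw [lintegral_add_left hFm, Measure.volume_eq_prod, lintegral_prod_swap]
    _ ≤ ENNReal.ofReal (1 + truncatedRieszMass n a)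
        + ENNReal.ofReal (1 + truncatedRieszMass n a) := add_le_add hhalf hhalf
    _ = _ := by rw [← ENNReal.ofReal_add (by positivity) (by positivity), two_mul]

theorem rieszForm_self_le_rieszForm_abs {a : ℝ} (ha : a < n / 2) {h : 𝔼 n → ℝ}
    (hh : MemLp h 2 (σ n)) : rieszForm a h h ≤ rieszForm a (fun x => |h x|) fun x => |h x| := by
  refine integral_mono (integrable_rieszForm ha hh hh) (integrable_rieszForm ha hh.abs hh.abs)
    fun z => mul_le_mul_of_nonneg_right ?_ (chordalKernel_nonneg _ _ _)
  rw [← abs_mul]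
  exact le_abs_self _

theorem rieszForm_self_le_of_integral_rpow_eq_one {a : ℝ} (ha₀ : 0 < a) (ha : a < n / 2)
    {h : 𝔼 n → ℝ} (hh : IsBoundedMeasurable h)
    (hN : ∫ x, |h x| ^ (n / (n - a)) ∂(σ n) = 1) :
    rieszForm a h h ≤ 2 * (1 + truncatedRieszMass n a) := by
  have hna : 0 < n - a := by linarith
  have hmass := truncatedRieszMass_nonneg n a
  set H : 𝔼 n → ℝ := (fun x => |h x|) * conformalWeight a
  have hH (x : 𝔼 n) : 0 ≤ H x := mul_nonneg (abs_nonneg _) (conformalWeight_pos a x).le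
  have hHm : Measurable H := hh.measurable.abs.mul (measurable_conformalWeight a)
  have hHN : ∫⁻ x, ENNReal.ofReal (H x ^ (n / (n - a))) = 1 := by
    have hpow (x : 𝔼 n) : H x ^ (n / (n - a)) = |h x| ^ (n / (n - a)) * ρ x ^ n := by
      rw [show H x = |h x| * conformalWeight a x from rfl,
        mul_rpow (abs_nonneg _) (conformalWeight_pos a x).le, conformalWeight_rpow (by linarith)]
    rw [integral_sphereMeasure] at hN
    simp_rw [hpow]
    rw [← ofReal_integral_eq_lintegral_ofReal
      (integrable_sphereMeasure_iff.1 (hh.rpow (by positivity)).integrable)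
      (.of_forall fun x => mul_nonneg (by positivity) (pow_nonneg (conformalFactor_pos x).le _)),
      hN, ENNReal.ofReal_one]
  refine (rieszForm_self_le_rieszForm_abs ha (hh.memLp 2)).trans ?_
  rw [rieszForm_eq_euclideanRieszForm, euclideanRieszForm, integral_eq_lintegral_of_nonneg_ae
    (.of_forall fun z => mul_nonneg (mul_nonneg (hH _) (hH _)) (rieszKernel_nonneg _ _ _))
    (((hHm.comp measurable_fst).mul (hHm.comp measurable_snd)).mul
      (measurable_rieszKernel a)).aestronglyMeasurable]
  exact ENNReal.toReal_le_of_le_ofReal (by positivity)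
    (lintegral_mul_mul_rieszKernel_le ha₀ ha hHm hH hHN)

end

/-- The factor by which the similarity `x ↦ δ • x + b`, viewed as a conformal map of the sphere
through stereographic projection, scales lengths at `x`. -/
noncomputable def affineConformalFactor (δ : ℝ) (b x : 𝔼 n) : ℝ :=
  δ * ρ (δ • x + b) / ρ x

theorem affineConformalFactor_pos {δ : ℝ} (hδ : 0 < δ) (b x : 𝔼 n) :
    0 < affineConformalFactor δ b x :=
  div_pos (mul_pos hδ (conformalFactor_pos _)) (conformalFactor_pos x)

theorem affineConformalFactor_mul (δ δ' : ℝ) (b b' x : 𝔼 n) :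
    affineConformalFactor δ' b' (δ • x + b) * affineConformalFactor δ b x
      = affineConformalFactor (δ' * δ) (δ' • b + b') x := by
  have hx := conformalFactor_pos x
  have hy := conformalFactor_pos (δ • x + b)
  have hcomp : δ' • (δ • x + b) + b' = (δ' * δ) • x + (δ' • b + b') := by
    rw [smul_add, mul_smul, add_assoc]
  unfold affineConformalFactor
  rw [hcomp]
  field_simp

theorem inv_affineConformalFactor {δ : ℝ} (hδ : 0 < δ) (b x : 𝔼 n) :
    (affineConformalFactor δ b x)⁻¹ = affineConformalFactor δ⁻¹ (-(δ⁻¹ • b)) (δ • x + b) := by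
  have h := affineConformalFactor_mul δ δ⁻¹ b (-(δ⁻¹ • b)) x
  have hone : affineConformalFactor 1 0 x = 1 := by
    simp [affineConformalFactor, (conformalFactor_pos x).ne']
  rw [inv_mul_cancel₀ hδ.ne', add_neg_cancel, hone] at h
  exact (eq_inv_of_mul_eq_one_left h).symm

theorem inv_affineConformalFactor_eq {δ : ℝ} (hδ : 0 < δ) (b x : 𝔼 n) :
    (affineConformalFactor δ b x)⁻¹ = ρ x * (1 + ‖δ • x + b‖ ^ 2) / (2 * δ) := by
  have hx := conformalFactor_pos x
  unfold affineConformalFactor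
  rw [show ρ (δ • x + b) = 2 / (1 + ‖δ • x + b‖ ^ 2) from rfl]
  field_simp

theorem sq_add_norm_sub_sq_le (δ : ℝ) (b y : 𝔼 n) :
    δ ^ 2 + ‖y - b‖ ^ 2 ≤ (δ ^ 2 + 2 + 2 * ‖b‖ ^ 2) * (1 + ‖y‖ ^ 2) := by
  have hsq : ‖y - b‖ ^ 2 ≤ 2 * ‖y‖ ^ 2 + 2 * ‖b‖ ^ 2 := by
    nlinarith [norm_sub_le y b, norm_nonneg (y - b), sq_nonneg (‖y‖ - ‖b‖)]
  nlinarith [mul_nonneg (sq_nonneg δ) (sq_nonneg ‖y‖), mul_nonneg (sq_nonneg ‖b‖) (sq_nonneg ‖y‖)]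

theorem affineConformalFactor_le {δ : ℝ} (hδ : 0 < δ) (b x : 𝔼 n) :
    affineConformalFactor δ b x ≤ (δ ^ 2 + 2 + 2 * ‖b‖ ^ 2) / δ := by
  have h := sq_add_norm_sub_sq_le δ b (δ • x + b)
  rw [add_sub_cancel_right, norm_smul, norm_of_nonneg hδ.le] at h
  have hx : ρ x * (1 + ‖x‖ ^ 2) = 2 := by
    rw [show ρ x = 2 / (1 + ‖x‖ ^ 2) from rfl]; field_simp
  rw [← inv_le_inv₀ (by positivity) (affineConformalFactor_pos hδ b x),
    inv_affineConformalFactor_eq hδ, inv_div, div_le_div_iff₀ (by positivity) (by positivity)]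
  calc δ * (2 * δ) = ρ x * (δ ^ 2 + (δ * ‖x‖) ^ 2) := by linear_combination -δ ^ 2 * hx
    _ ≤ ρ x * ((δ ^ 2 + 2 + 2 * ‖b‖ ^ 2) * (1 + ‖δ • x + b‖ ^ 2)) := by
        gcongr
        exact (conformalFactor_pos x).le
    _ = ρ x * (1 + ‖δ • x + b‖ ^ 2) * (δ ^ 2 + 2 + 2 * ‖b‖ ^ 2) := by ring

theorem measurable_affineConformalFactor (δ : ℝ) (b : 𝔼 n) :
    Measurable (affineConformalFactor δ b) := by
  have := measurable_conformalFactor (n := n)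
  unfold affineConformalFactor
  fun_prop

theorem isBoundedMeasurable_affineConformalFactor {δ : ℝ} (hδ : 0 < δ) (b : 𝔼 n) :
    IsBoundedMeasurable (affineConformalFactor δ b) :=
  ⟨measurable_affineConformalFactor δ b, _, fun x => by
    rw [abs_of_pos (affineConformalFactor_pos hδ b x)]
    exact affineConformalFactor_le hδ b x⟩

theorem isBoundedMeasurable_inv_affineConformalFactor {δ : ℝ} (hδ : 0 < δ) (b : 𝔼 n) :
    IsBoundedMeasurable fun x => (affineConformalFactor δ b x)⁻¹ := by
  obtain ⟨M, hM⟩ :=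
    (isBoundedMeasurable_affineConformalFactor (inv_pos.2 hδ) (-(δ⁻¹ • b))).exists_abs_le
  exact ⟨(measurable_affineConformalFactor δ b).inv, M, fun x => by
    rw [inv_affineConformalFactor hδ]; exact hM _⟩

theorem isBoundedMeasurable_log_affineConformalFactor {δ : ℝ} (hδ : 0 < δ) (b : 𝔼 n) :
    IsBoundedMeasurable fun x => log (affineConformalFactor δ b x) := by
  obtain ⟨M, hM⟩ := (isBoundedMeasurable_affineConformalFactor hδ b).exists_abs_le
  obtain ⟨M', hM'⟩ := (isBoundedMeasurable_inv_affineConformalFactor hδ b).exists_abs_le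
  refine ⟨(measurable_affineConformalFactor δ b).log, max M M', fun x => abs_le.2 ⟨?_, ?_⟩⟩
  · have hlog := log_le_self (inv_pos.2 (affineConformalFactor_pos hδ b x)).le
    rw [log_inv] at hlog
    linarith [le_abs_self (affineConformalFactor δ b x)⁻¹, hM' x, le_max_right M M']
  · linarith [log_le_self (affineConformalFactor_pos hδ b x).le,
      le_abs_self (affineConformalFactor δ b x), hM x, le_max_left M M']

theorem isBoundedMeasurable_sphereCoord (i : Option (Fin n)) : IsBoundedMeasurable (ω i) :=
  ⟨(contDiff_sphereCoord i).continuous.measurable, 1, abs_sphereCoord_le_one i⟩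

/-- The action of the similarity `x ↦ δ • x + b` on functions, normalised so as to preserve the
Riesz form of exponent `a`. -/
noncomputable def conformalAction (a δ : ℝ) (b : 𝔼 n) (h : 𝔼 n → ℝ) (x : 𝔼 n) : ℝ :=
  h (δ • x + b) * affineConformalFactor δ b x ^ (n - a)

theorem conformalAction_mul_conformalWeight {a δ : ℝ} (hδ : 0 < δ) (b : 𝔼 n) (h : 𝔼 n → ℝ)
    (x : 𝔼 n) :
    conformalAction a δ b h x * conformalWeight a x
      = δ ^ (n - a) * (h (δ • x + b) * conformalWeight a (δ • x + b)) := by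
  have hx := conformalFactor_pos x
  have hy := conformalFactor_pos (δ • x + b)
  have : ρ x ^ (n - a) ≠ 0 := by positivity
  unfold conformalAction affineConformalFactor conformalWeight
  rw [div_rpow (by positivity) hx.le, mul_rpow hδ.le hy.le]
  field_simp

theorem rieszKernel_smul_add {δ : ℝ} (hδ : 0 < δ) (a : ℝ) (b x y : 𝔼 n) :
    rieszKernel a (δ • x + b) (δ • y + b) = δ ^ (-(2 * a)) * rieszKernel a x y := by
  unfold rieszKernel
  rw [add_sub_add_right_eq_sub, ← smul_sub, norm_smul, norm_of_nonneg hδ.le, mul_pow,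
    mul_rpow (by positivity) (by positivity), ← rpow_natCast δ, ← rpow_mul hδ.le]
  congr 2
  push_cast
  ring

theorem IsBoundedMeasurable.conformalAction {a δ : ℝ} (ha : a < n / 2) (hδ : 0 < δ) (b : 𝔼 n)
    {h : 𝔼 n → ℝ} (hh : IsBoundedMeasurable h) :
    IsBoundedMeasurable (conformalAction a δ b h) := by
  have hna : 0 ≤ n - a := by linarith [(Nat.cast_nonneg n : (0 : ℝ) ≤ n)]
  obtain ⟨M, hM⟩ := hh.exists_abs_le
  have hJ := (isBoundedMeasurable_affineConformalFactor hδ b).rpow hna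
  simp only [abs_of_pos (affineConformalFactor_pos hδ b _)] at hJ
  have hmeas : Measurable fun x => h (δ • x + b) := hh.measurable.comp (by fun_prop)
  exact IsBoundedMeasurable.mul ⟨hmeas, M, fun x => hM _⟩ hJ

theorem rieszForm_conformalAction {a δ : ℝ} (hδ : 0 < δ) (b : 𝔼 n) (h : 𝔼 n → ℝ) :
    rieszForm a (conformalAction a δ b h) (conformalAction a δ b h) = rieszForm a h h := by
  rw [rieszForm_eq_euclideanRieszForm, rieszForm_eq_euclideanRieszForm]
  set G : 𝔼 n × 𝔼 n → ℝ := fun z => (h * conformalWeight a : 𝔼 n → ℝ) z.1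
    * (h * conformalWeight a : 𝔼 n → ℝ) z.2 * rieszKernel a z.1 z.2 with hG
  have hpow : δ ^ (n - a) * δ ^ (n - a) = δ ^ (2 * n) * δ ^ (-(2 * a)) := by
    rw [← rpow_natCast, ← rpow_add hδ, ← rpow_add hδ]
    congr 1
    push_cast
    ring
  have hpoint (z : 𝔼 n × 𝔼 n) :
      (conformalAction a δ b h * conformalWeight a : 𝔼 n → ℝ) z.1
          * (conformalAction a δ b h * conformalWeight a : 𝔼 n → ℝ) z.2 * rieszKernel a z.1 z.2
        = δ ^ (2 * n) * G (δ • z + (b, b)) := by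
    simp only [hG, Prod.fst_add, Prod.snd_add, Prod.smul_fst, Prod.smul_snd, Pi.mul_apply,
      conformalAction_mul_conformalWeight hδ, rieszKernel_smul_add hδ]
    linear_combination h (δ • z.1 + b) * conformalWeight a (δ • z.1 + b)
      * (h (δ • z.2 + b) * conformalWeight a (δ • z.2 + b)) * rieszKernel a z.1 z.2 * hpow
  unfold euclideanRieszForm
  simp_rw [hpoint]
  rw [integral_const_mul, Measure.volume_eq_prod,
    Measure.integral_comp_smul _ (fun z => G (z + (b, b))), integral_add_right_eq_self G,
    Module.finrank_prod, finrank_euclideanSpace, Fintype.card_fin, smul_eq_mul, ← mul_assoc,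
    ← two_mul, abs_of_pos (by positivity), mul_inv_cancel₀ (by positivity), one_mul]

theorem integral_mul_abs_conformalAction_rpow {a δ : ℝ} (ha : a < n / 2) (hδ : 0 < δ) (b : 𝔼 n)
    (h F : 𝔼 n → ℝ) :
    ∫ x, F x * |conformalAction a δ b h x| ^ (n / (n - a)) ∂(σ n)
      = ∫ y, F (δ⁻¹ • (y - b)) * |h y| ^ (n / (n - a)) ∂(σ n) := by
  have hna : 0 < n - a := by linarith [(Nat.cast_nonneg n : (0 : ℝ) ≤ n)]
  have hweight (g : 𝔼 n → ℝ) (x : 𝔼 n) :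
      |g x| ^ (n / (n - a)) * ρ x ^ n = |g x * conformalWeight a x| ^ (n / (n - a)) := by
    rw [abs_mul, mul_rpow (abs_nonneg _) (abs_nonneg _), abs_of_pos (conformalWeight_pos a x),
      conformalWeight_rpow (by linarith)]
  rw [integral_sphereMeasure, integral_sphereMeasure]
  simp_rw [mul_assoc, hweight, conformalAction_mul_conformalWeight hδ]
  set G : 𝔼 n → ℝ := fun y =>
    F (δ⁻¹ • (y - b)) * |h y * conformalWeight a y| ^ (n / (n - a)) with hG
  have hpoint (x : 𝔼 n) :
      F x * |δ ^ (n - a) * (h (δ • x + b) * conformalWeight a (δ • x + b))| ^ (n / (n - a))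
        = δ ^ n * G (δ • x + b) := by
    simp only [hG]
    rw [add_sub_cancel_right, inv_smul_smul₀ hδ.ne', abs_mul,
      abs_of_pos (by positivity : 0 < δ ^ (n - a)), mul_rpow (by positivity) (abs_nonneg _),
      ← rpow_mul hδ.le, mul_div_cancel₀ _ hna.ne', rpow_natCast]
    ring
  simp_rw [hpoint]
  rw [integral_const_mul, Measure.integral_comp_smul volume (fun z => G (z + b)),
    integral_add_right_eq_self G, finrank_euclideanSpace, Fintype.card_fin, smul_eq_mul,
    ← mul_assoc, abs_of_pos (by positivity), mul_inv_cancel₀ (by positivity), one_mul]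

theorem integral_abs_conformalAction_rpow {a δ : ℝ} (ha : a < n / 2) (hδ : 0 < δ) (b : 𝔼 n)
    (h : 𝔼 n → ℝ) :
    ∫ x, |conformalAction a δ b h x| ^ (n / (n - a)) ∂(σ n)
      = ∫ x, |h x| ^ (n / (n - a)) ∂(σ n) := by
  simpa only [one_mul] using integral_mul_abs_conformalAction_rpow ha hδ b h fun _ => 1

section

variable [NeZero n]

theorem integral_affineConformalFactor_pow {δ : ℝ} (hδ : 0 < δ) (b : 𝔼 n) :
    ∫ x, affineConformalFactor δ b x ^ n ∂(σ n) = chordalMass n 0 := by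
  have hn : (0 : ℝ) < n := by linarith [natCast_half_pos (n := n)]
  have h := integral_abs_conformalAction_rpow (a := 0) (by positivity) hδ b fun _ => 1
  simp only [abs_one, one_rpow, integral_const, smul_eq_mul, mul_one,
    sphereMeasure_real_univ] at h
  rw [← h]
  congr 1 with x
  rw [conformalAction, sub_zero, one_mul, rpow_natCast, div_self hn.ne', rpow_one,
    abs_of_pos (pow_pos (affineConformalFactor_pos hδ b x) n)]

theorem integral_log_affineConformalFactor_mul_le {w : 𝔼 n → ℝ} (hw : IsBoundedMeasurable w)
    (hw₀ : ∀ x, 0 ≤ w x) {M δ : ℝ} (hM : ∀ x, w x ≤ M) (hδ : 0 < δ) (b : 𝔼 n) :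
    ∫ x, log (affineConformalFactor δ b x) * w x ∂(σ n) ≤ M * chordalMass n 0 / n := by
  have hn : (0 : ℝ) < n := by linarith [natCast_half_pos (n := n)]
  rw [le_div_iff₀ hn, ← integral_affineConformalFactor_pow hδ b, ← integral_const_mul,
    ← integral_mul_const]
  have hJn : Integrable (fun x => affineConformalFactor δ b x ^ n) (σ n) := by
    have := ((isBoundedMeasurable_affineConformalFactor hδ b).rpow (Nat.cast_nonneg n)).integrable
    simpa only [abs_of_pos (affineConformalFactor_pos hδ b _), rpow_natCast] using this
  refine integral_mono
    (((isBoundedMeasurable_log_affineConformalFactor hδ b).mul hw).integrable.mul_const _)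
    (hJn.const_mul _) fun x => ?_
  have hJ := pow_pos (affineConformalFactor_pos hδ b x) n
  calc log (affineConformalFactor δ b x) * w x * n
      = log (affineConformalFactor δ b x ^ n) * w x := by rw [log_pow]; ring
    _ ≤ affineConformalFactor δ b x ^ n * w x :=
        mul_le_mul_of_nonneg_right (log_le_self hJ.le) (hw₀ x)
    _ ≤ M * affineConformalFactor δ b x ^ n := by rw [mul_comm M]; gcongr; exact hM x

/-- Since `log` of the conformal factor is an additive cocycle, a near-maximiser of
`(δ, b) ↦ ∫ log (J δ b) |h|^p` transports `h` to a function for which every such integral is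
nearly nonpositive. -/
theorem exists_conformalAction_integral_log_le {a : ℝ} (ha : a < n / 2) {h : 𝔼 n → ℝ}
    (hh : IsBoundedMeasurable h) {ε : ℝ} (hε : 0 < ε) :
    ∃ δ > 0, ∃ b : 𝔼 n, ∀ d > 0, ∀ c : 𝔼 n,
      ∫ x, log (affineConformalFactor d c x) * |conformalAction a δ b h x| ^ (n / (n - a)) ∂(σ n)
        ≤ ε := by
  have hn := natCast_half_pos (n := n)
  have hw := hh.rpow (p := n / (n - a)) (div_nonneg (by linarith) (by linarith))
  set Φ : Set.Ioi (0 : ℝ) × 𝔼 n → ℝ := fun g =>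
    ∫ x, log (affineConformalFactor g.1 g.2 x) * |h x| ^ (n / (n - a)) ∂(σ n) with hΦ
  obtain ⟨M, hM⟩ := hw.exists_abs_le
  have hbdd : BddAbove (Set.range Φ) := by
    refine ⟨M * chordalMass n 0 / n, ?_⟩
    rintro _ ⟨⟨⟨δ, hδ⟩, b⟩, rfl⟩
    exact integral_log_affineConformalFactor_mul_le hw (fun x => by positivity)
      (fun x => (le_abs_self _).trans (hM x)) hδ b
  have : Nonempty (Set.Ioi (0 : ℝ) × 𝔼 n) := ⟨⟨1, Set.mem_Ioi.2 one_pos⟩, 0⟩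
  obtain ⟨⟨⟨δ, hδ⟩, b⟩, hmax⟩ := exists_lt_of_lt_ciSup (sub_lt_self (⨆ g, Φ g) hε)
  have hδ : 0 < δ := hδ
  refine ⟨δ⁻¹, inv_pos.2 hδ, -(δ⁻¹ • b), fun d hd c => ?_⟩
  have hpoint (y : 𝔼 n) : δ⁻¹⁻¹ • (y - -(δ⁻¹ • b)) = δ • y + b := by
    rw [inv_inv, sub_neg_eq_add, smul_add, smul_inv_smul₀ hδ.ne']
  rw [integral_mul_abs_conformalAction_rpow ha (inv_pos.2 hδ) _ h
    fun x => log (affineConformalFactor d c x)]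
  simp_rw [hpoint]
  calc ∫ y, log (affineConformalFactor d c (δ • y + b)) * |h y| ^ (n / (n - a)) ∂(σ n)
      = Φ (⟨d * δ, mul_pos hd hδ⟩, d • b + c) - Φ (⟨δ, hδ⟩, b) := by
        simp only [hΦ]
        rw [← integral_sub
          (by exact ((isBoundedMeasurable_log_affineConformalFactor (mul_pos hd hδ) _).mul
            hw).integrable)
          (by exact ((isBoundedMeasurable_log_affineConformalFactor hδ b).mul hw).integrable)]
        congr 1 with y
        rw [← affineConformalFactor_mul, log_mul (affineConformalFactor_pos hd _ _).ne'
          (affineConformalFactor_pos hδ _ _).ne']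
        ring
    _ ≤ ε := by linarith [le_ciSup hbdd (⟨d * δ, mul_pos hd hδ⟩, d • b + c)]

theorem mul_integral_sphereCoord_mul_sub_le {w : 𝔼 n → ℝ} (hw : IsBoundedMeasurable w)
    (hw₀ : ∀ x, 0 ≤ w x) (hw₁ : ∫ x, w x ∂(σ n) = 1) {d : ℝ} (hd : 0 < d) {c : 𝔼 n}
    {i : Option (Fin n)} {A B : ℝ}
    (hAB : ∀ x, A * ω i x - B ≤ 1 - (affineConformalFactor d c x)⁻¹) :
    A * (∫ x, ω i x * w x ∂(σ n)) - B
      ≤ ∫ x, log (affineConformalFactor d c x) * w x ∂(σ n) := by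
  have hω : Integrable (fun x => ω i x * w x) (σ n) :=
    ((isBoundedMeasurable_sphereCoord i).mul hw).integrable
  calc A * (∫ x, ω i x * w x ∂(σ n)) - B
      = ∫ x, (A * (ω i x * w x) - B * w x) ∂(σ n) := by
        rw [integral_sub (hω.const_mul _) (hw.integrable.const_mul _), integral_const_mul,
          integral_const_mul, hw₁, mul_one]
    _ ≤ ∫ x, log (affineConformalFactor d c x) * w x ∂(σ n) := by
        refine integral_mono ((hω.const_mul _).sub (hw.integrable.const_mul _))
          ((isBoundedMeasurable_log_affineConformalFactor hd c).mul hw).integrable fun x => ?_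
        have hlog := (hAB x).trans (one_sub_inv_le_log_of_pos (affineConformalFactor_pos hd c x))
        simpa only [sub_mul, mul_assoc] using mul_le_mul_of_nonneg_right hlog (hw₀ x)

end

theorem neg_mul_sphereCoord_some_sub_sq_le (i : Fin n) (u : ℝ) (x : 𝔼 n) :
    -u * ω (some i) x - u ^ 2
      ≤ 1 - (affineConformalFactor 1 (EuclideanSpace.single i u) x)⁻¹ := by
  have hnorm : ‖x + EuclideanSpace.single i u‖ ^ 2 = ‖x‖ ^ 2 + 2 * (u * x i) + u ^ 2 := by
    rw [norm_add_sq_real, EuclideanSpace.inner_single_right, PiLp.norm_single, norm_eq_abs, sq_abs]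
    simp
  rw [inv_affineConformalFactor_eq one_pos, one_smul, hnorm, sphereCoord_some]
  nlinarith [conformalFactor_mul_norm_sq x, conformalFactor_le_two x, sq_nonneg u]

theorem neg_sinh_mul_sphereCoord_none_sub_eq (u : ℝ) (x : 𝔼 n) :
    -sinh u * ω none x - (cosh u - 1) = 1 - (affineConformalFactor (exp u) 0 x)⁻¹ := by
  have hcancel : exp u * exp (-u) = 1 := by rw [← exp_add, add_neg_cancel, exp_zero]
  rw [inv_affineConformalFactor_eq (exp_pos u), add_zero, norm_smul, norm_of_nonneg (exp_pos u).le,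
    sphereCoord_none, sinh_eq, cosh_eq, eq_sub_iff_add_eq, ← eq_sub_iff_add_eq',
    div_eq_iff (by positivity)]
  linear_combination exp u ^ 2 * conformalFactor_mul_norm_sq x - ρ x * hcancel

theorem cosh_sub_one_le_sq {t : ℝ} (ht₀ : 0 ≤ t) (ht : t ≤ 1) : cosh t - 1 ≤ t ^ 2 := by
  have hexp := (le_abs_self _).trans (abs_exp_sub_one_le (x := t ^ 2 / 2)
    (by rw [abs_of_nonneg (by positivity)]; nlinarith))
  rw [abs_of_nonneg (by positivity)] at hexp
  linarith [cosh_le_exp_half_sq t]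

theorem abs_integral_sphereCoord_mul_le [NeZero n] {w : 𝔼 n → ℝ} (hw : IsBoundedMeasurable w)
    (hw₀ : ∀ x, 0 ≤ w x) (hw₁ : ∫ x, w x ∂(σ n) = 1) {t : ℝ} (ht₀ : 0 < t) (ht : t ≤ 1)
    (hlog : ∀ d > 0, ∀ c, ∫ x, log (affineConformalFactor d c x) * w x ∂(σ n) ≤ t ^ 2)
    (i : Option (Fin n)) :
    |∫ x, ω i x * w x ∂(σ n)| ≤ 2 * t := by
  suffices h : ∃ s ≥ t, s * |∫ x, ω i x * w x ∂(σ n)| ≤ 2 * t ^ 2 by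
    obtain ⟨s, hs, h⟩ := h
    nlinarith [abs_nonneg (∫ x, ω i x * w x ∂(σ n))]
  rcases i with _ | i
  · have key (u : ℝ) :=
      (mul_integral_sphereCoord_mul_sub_le hw hw₀ hw₁ (exp_pos u)
        fun x => (neg_sinh_mul_sphereCoord_none_sub_eq u x).le).trans (hlog _ (exp_pos u) 0)
    have hneg := key (-t)
    rw [sinh_neg, cosh_neg] at hneg
    refine ⟨sinh t, self_le_sinh_iff.2 ht₀.le, ?_⟩
    have hcosh := cosh_sub_one_le_sq ht₀.le ht
    rcases abs_cases (∫ x, ω none x * w x ∂(σ n)) with ⟨h, -⟩ | ⟨h, -⟩ <;> rw [h] <;>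
      linarith [key t]
  · have key (u : ℝ) :=
      (mul_integral_sphereCoord_mul_sub_le hw hw₀ hw₁ one_pos
        fun x => neg_mul_sphereCoord_some_sub_sq_le i u x).trans (hlog _ one_pos _)
    refine ⟨t, le_rfl, ?_⟩
    rcases abs_cases (∫ x, ω (some i) x * w x ∂(σ n)) with ⟨h, -⟩ | ⟨h, -⟩ <;> rw [h] <;>
      linarith [key t, key (-t)]

theorem exists_conformalAction_abs_integral_sphereCoord_mul_le [NeZero n] {a : ℝ} (ha : a < n / 2)
    {h : 𝔼 n → ℝ} (hh : IsBoundedMeasurable h)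
    (hN : ∫ x, |h x| ^ (n / (n - a)) ∂(σ n) = 1) {ε : ℝ} (hε : 0 < ε) (hε' : ε ≤ 2) :
    ∃ δ > 0, ∃ b : 𝔼 n, ∀ i,
      |∫ x, ω i x * |conformalAction a δ b h x| ^ (n / (n - a)) ∂(σ n)| ≤ ε := by
  have hn := natCast_half_pos (n := n)
  obtain ⟨δ, hδ, b, hlog⟩ :=
    exists_conformalAction_integral_log_le ha hh (by positivity : 0 < (ε / 2) ^ 2)
  refine ⟨δ, hδ, b, fun i => ?_⟩
  have hw := (hh.conformalAction ha hδ b).rpow (p := n / (n - a))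
    (div_nonneg (by linarith) (by linarith))
  have := abs_integral_sphereCoord_mul_le hw (fun x => by positivity)
    ((integral_abs_conformalAction_rpow ha hδ b h).trans hN) (half_pos hε) (by linarith) hlog i
  linarith

/-- The power function `(1 + y) ^ r` lies below the parabola `1 + r y + C y ^ 2` for
`|y| ≤ δ`. -/
def RpowLeParabola (r C δ : ℝ) : Prop :=
  ∀ y, |y| ≤ δ → 0 ≤ 1 + y ∧ (1 + y) ^ r ≤ 1 + r * y + C * y ^ 2

theorem hasDerivAt_one_add_rpow (r : ℝ) {y : ℝ} (hy : -1 < y) :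
    HasDerivAt (fun y : ℝ => (1 + y) ^ r) (r * (1 + y) ^ (r - 1)) y := by
  simpa using ((hasDerivAt_id y).const_add 1).rpow_const (p := r) (Or.inl (by simp; linarith))

theorem exists_rpowLeParabola {r C : ℝ} (hC : r * (r - 1) / 2 < C) :
    ∃ δ > 0, RpowLeParabola r C δ := by
  set φ : ℝ → ℝ := fun y => 1 + r * y + C * y ^ 2 - (1 + y) ^ r with hφ
  set φ' : ℝ → ℝ := fun y => r + C * (2 * y) - r * (1 + y) ^ (r - 1) with hφ'
  have hderiv {y : ℝ} (hy : -1 < y) : HasDerivAt φ (φ' y) y := by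
    have hlin : HasDerivAt (fun y : ℝ => 1 + r * y) r y := by
      simpa using ((hasDerivAt_id y).const_mul r).const_add 1
    have hquad : HasDerivAt (fun y : ℝ => C * y ^ 2) (C * (2 * y)) y := by
      simpa using (hasDerivAt_pow 2 y).const_mul C
    exact (hlin.add hquad).sub (hasDerivAt_one_add_rpow r hy)
  have hderiv₂ : HasDerivAt φ' (2 * C - r * (r - 1)) 0 := by
    have hlin : HasDerivAt (fun y : ℝ => r + C * (2 * y)) (C * 2) 0 := by
      simpa using (((hasDerivAt_id (0 : ℝ)).const_mul 2).const_mul C).const_add r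
    refine (hlin.sub ((hasDerivAt_one_add_rpow (r - 1) neg_one_lt_zero).const_mul r)).congr_deriv ?_
    rw [add_zero, one_rpow]
    ring
  have hev : deriv φ =ᶠ[nhds 0] φ' := by
    filter_upwards [lt_mem_nhds neg_one_lt_zero] with y hy using (hderiv hy).deriv
  have hmin : IsLocalMin φ 0 := by
    refine isLocalMin_of_deriv_deriv_pos ?_ ?_ (hderiv neg_one_lt_zero).continuousAt
    · rw [hev.deriv_eq, hderiv₂.deriv]
      linarith
    · rw [(hderiv neg_one_lt_zero).deriv]
      simp [hφ']
  obtain ⟨δ, hδ, hball⟩ := Metric.eventually_nhds_iff.1 hmin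
  refine ⟨min (δ / 2) 1, by positivity, fun y hy => ⟨?_, ?_⟩⟩
  · linarith [(abs_le.1 (hy.trans (min_le_right _ _))).1]
  · have hdist : dist y 0 < δ := by
      rw [dist_zero_right, norm_eq_abs]
      linarith [hy.trans (min_le_left _ _)]
    have hle := hball hdist
    norm_num [hφ] at hle
    linarith

theorem IsBoundedMeasurable.const_smul {h : 𝔼 n → ℝ} (hh : IsBoundedMeasurable h) (c : ℝ) :
    IsBoundedMeasurable (c • h) :=
  IsBoundedMeasurable.mul (h := fun _ => c) ⟨measurable_const, |c|, fun _ => le_rfl⟩ hh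

theorem IsBoundedMeasurable.add {h g : 𝔼 n → ℝ} (hh : IsBoundedMeasurable h)
    (hg : IsBoundedMeasurable g) : IsBoundedMeasurable (h + g) := by
  obtain ⟨M, hM⟩ := hh.exists_abs_le
  obtain ⟨M', hM'⟩ := hg.exists_abs_le
  exact ⟨hh.measurable.add hg.measurable, M + M', fun x =>
    (abs_add_le _ _).trans (add_le_add (hM x) (hM' x))⟩

section

variable [NeZero n]

theorem sq_integral_le_of_integral_rpow_eq_one {p : ℝ} (hp : 1 < p) {h : 𝔼 n → ℝ}
    (hh : IsBoundedMeasurable h) (hN : ∫ x, |h x| ^ p ∂(σ n) = 1) :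
    (∫ x, h x ∂(σ n)) ^ 2 ≤ chordalMass n 0 ^ (2 - 2 / p) := by
  have hmass : 0 < chordalMass n 0 := chordalMass_pos natCast_half_pos
  have hpq := HolderConjugate.conjExponent hp
  have hconst : IsBoundedMeasurable fun _ : 𝔼 n => (1 : ℝ) := ⟨measurable_const, 1, by simp⟩
  have hholder := integral_mul_le_Lp_mul_Lq_of_nonneg hpq (μ := σ n) (f := fun x => |h x|)
    (g := fun _ => 1) (.of_forall fun _ => abs_nonneg _) (.of_forall fun _ => zero_le_one)
    (hh.abs.memLp _) (hconst.memLp _)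
  simp only [mul_one, hN, one_rpow, one_mul, integral_const, smul_eq_mul,
    sphereMeasure_real_univ] at hholder
  have hexp : 1 / p.conjExponent * 2 = 2 - 2 / p := by
    rw [one_div, eq_sub_of_add_eq' hpq.inv_add_inv_eq_one]
    ring
  calc (∫ x, h x ∂(σ n)) ^ 2 = |∫ x, h x ∂(σ n)| ^ 2 := (sq_abs _).symm
    _ ≤ (chordalMass n 0 ^ (1 / p.conjExponent)) ^ 2 := by
        gcongr
        exact abs_integral_le_integral_abs.trans hholder
    _ = chordalMass n 0 ^ (2 - 2 / p) := by
        rw [← rpow_natCast, ← rpow_mul hmass.le, Nat.cast_ofNat, hexp]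

theorem rieszForm_self_le_mul_integral_rpow {a p S : ℝ} (hp : 1 < p)
    (hS : ∀ h : 𝔼 n → ℝ, IsBoundedMeasurable h → ∫ x, |h x| ^ p ∂(σ n) = 1 →
      rieszForm a h h ≤ S)
    {h : 𝔼 n → ℝ} (hh : IsBoundedMeasurable h) :
    rieszForm a h h ≤ S * (∫ x, |h x| ^ p ∂(σ n)) ^ (2 / p) := by
  have hp₀ : 0 < p := by linarith
  have hnonneg : 0 ≤ ∫ x, |h x| ^ p ∂(σ n) := integral_nonneg fun x => by positivity
  set I := ∫ x, |h x| ^ p ∂(σ n) with hI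
  rcases hnonneg.eq_or_lt with hI₀ | hI₀
  · have hae := (integral_eq_zero_iff_of_nonneg (fun x => by positivity)
      (hh.rpow hp₀.le).integrable).1 hI₀.symm
    have hzero : h =ᵐ[σ n] (0 : ℝ) • h := by
      filter_upwards [hae] with x hx
      simpa using (rpow_eq_zero (abs_nonneg _) hp₀.ne').1 hx
    rw [rieszForm_congr_ae hzero hzero, rieszForm_smul_left, ← hI₀, zero_rpow (by positivity)]
    simp
  · set c := I ^ (-1 / p) with hc
    have hc₀ : 0 < c := by positivity
    have hnorm : ∫ x, |(c • h) x| ^ p ∂(σ n) = 1 := by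
      simp only [Pi.smul_apply, smul_eq_mul, abs_mul, abs_of_pos hc₀,
        mul_rpow hc₀.le (abs_nonneg _)]
      rw [integral_const_mul, ← hI, hc, ← rpow_mul hI₀.le, div_mul_cancel₀ _ hp₀.ne',
        rpow_neg_one, inv_mul_cancel₀ hI₀.ne']
    have hle := hS _ (hh.const_smul c) hnorm
    rw [rieszForm_smul_left, rieszForm_smul_right] at hle
    have hpow : c * c * I ^ (2 / p) = 1 := by
      rw [hc, ← rpow_add hI₀, ← rpow_add hI₀]
      ring_nf
      exact rpow_zero _
    calc rieszForm a h h = c * (c * rieszForm a h h) * I ^ (2 / p) := by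
          linear_combination -(rieszForm a h h) * hpow
      _ ≤ S * I ^ (2 / p) := by gcongr

theorem rieszForm_add_smul_self {a : ℝ} (ha : a < n / 2) {h g : 𝔼 n → ℝ}
    (hh : IsBoundedMeasurable h) (hg : IsBoundedMeasurable g) (u : ℝ) :
    rieszForm a (h + u • g) (h + u • g)
      = rieszForm a h h + 2 * u * rieszForm a h g + u ^ 2 * rieszForm a g g := by
  have hh₂ := hh.memLp 2
  have hug := (hg.const_smul u).memLp 2
  rw [rieszForm_add_left ha hh₂ hug (hh₂.add hug), rieszForm_add_right ha hh₂ hh₂ hug,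
    rieszForm_add_right ha hug hh₂ hug, rieszForm_smul_left, rieszForm_smul_left,
    rieszForm_smul_right, rieszForm_smul_right, rieszForm_comm a g h]
  ring

theorem integral_abs_add_smul_mul_rpow_le {p C δ u : ℝ} (hp : 0 ≤ p)
    (hT : RpowLeParabola p C δ) {h φ : 𝔼 n → ℝ} (hh : IsBoundedMeasurable h)
    (hφ : IsBoundedMeasurable φ) (hφ₁ : ∀ x, |φ x| ≤ 1) (hu : |u| ≤ δ) :
    ∫ x, |(h + u • (φ * h)) x| ^ p ∂(σ n)
      ≤ (∫ x, |h x| ^ p ∂(σ n)) + (p * u * (∫ x, φ x * |h x| ^ p ∂(σ n))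
        + C * u ^ 2 * ∫ x, φ x ^ 2 * |h x| ^ p ∂(σ n)) := by
  have hw : Integrable (fun x => |h x| ^ p) (σ n) := (hh.rpow hp).integrable
  have hlin : Integrable (fun x => p * u * (φ x * |h x| ^ p)) (σ n) :=
    (hφ.mul (hh.rpow hp)).integrable.const_mul _
  have hquad : Integrable (fun x => C * u ^ 2 * (φ x ^ 2 * |h x| ^ p)) (σ n) := by
    simp only [sq (φ _)]
    exact ((hφ.mul hφ).mul (hh.rpow hp)).integrable.const_mul _
  rw [← integral_const_mul, ← integral_const_mul, ← integral_add hlin hquad,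
    ← integral_add hw (by exact hlin.add hquad)]
  refine integral_mono ((hh.add ((hφ.mul hh).const_smul u)).rpow hp).integrable
    (hw.add (hlin.add hquad)) fun x => ?_
  obtain ⟨hpos, hle⟩ := hT (u * φ x) (by
    rw [abs_mul]
    exact (mul_le_of_le_one_right (abs_nonneg u) (hφ₁ x)).trans hu)
  have hfactor : (h + u • (φ * h)) x = h x * (1 + u * φ x) := by
    simp only [Pi.add_apply, Pi.smul_apply, Pi.mul_apply, smul_eq_mul]
    ring
  simp only [hfactor]
  rw [abs_mul, abs_of_nonneg hpos, mul_rpow (abs_nonneg _) hpos]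
  calc |h x| ^ p * (1 + u * φ x) ^ p
      ≤ |h x| ^ p * (1 + p * (u * φ x) + C * (u * φ x) ^ 2) := by gcongr
    _ = |h x| ^ p + (p * u * (φ x * |h x| ^ p) + C * u ^ 2 * (φ x ^ 2 * |h x| ^ p)) := by ring

theorem integral_abs_add_smul_mul_rpow_rpow_le {p C δ δ' ε u : ℝ} (hp₁ : 1 < p) (hp₂ : p ≤ 2)
    (hC₀ : 0 ≤ C) (hC : C ≤ 2) (hT : RpowLeParabola p C δ) (hT' : RpowLeParabola (2 / p) 2 δ')
    (hεδ : ε ≤ δ) (hεδ' : 4 * ε ^ 2 ≤ δ') (hε : ε ≤ 1) {h φ : 𝔼 n → ℝ}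
    (hh : IsBoundedMeasurable h) (hN : ∫ x, |h x| ^ p ∂(σ n) = 1) (hφ : IsBoundedMeasurable φ)
    (hφ₁ : ∀ x, |φ x| ≤ 1) (hm : |∫ x, φ x * |h x| ^ p ∂(σ n)| ≤ ε ^ 2) (hu : |u| = ε) :
    (∫ x, |(h + u • (φ * h)) x| ^ p ∂(σ n)) ^ (2 / p)
      ≤ 1 + 2 / p * (p * u * (∫ x, φ x * |h x| ^ p ∂(σ n))
        + C * ε ^ 2 * ∫ x, φ x ^ 2 * |h x| ^ p ∂(σ n)) + 32 * ε ^ 4 := by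
  have hp₀ : 0 < p := by linarith
  have hε₀ : 0 ≤ ε := hu ▸ abs_nonneg u
  have hupper := integral_abs_add_smul_mul_rpow_le hp₀.le hT hh hφ hφ₁ (hu.trans_le hεδ)
  rw [hN, ← sq_abs u, hu] at hupper
  set m := ∫ x, φ x * |h x| ^ p ∂(σ n)
  set v := ∫ x, φ x ^ 2 * |h x| ^ p ∂(σ n)
  have : 0 ≤ v := integral_nonneg fun x => by positivity
  have hv₁ : v ≤ 1 := by
    rw [← hN]
    refine integral_mono_of_nonneg (.of_forall fun x => by positivity) (hh.rpow hp₀.le).integrable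
      (.of_forall fun x => mul_le_of_le_one_left (by positivity) ?_)
    rw [← sq_abs]
    exact pow_le_one₀ (abs_nonneg _) (hφ₁ x)
  have hX : |p * u * m + C * ε ^ 2 * v| ≤ 4 * ε ^ 2 := by
    refine (abs_add_le _ _).trans ?_
    rw [abs_mul, abs_mul, hu, abs_of_pos hp₀, abs_of_nonneg (by positivity : 0 ≤ C * ε ^ 2 * v)]
    have hlin : p * ε * |m| ≤ 2 * 1 * ε ^ 2 := by gcongr
    have hquad : C * ε ^ 2 * v ≤ 2 * ε ^ 2 * 1 := by gcongr
    linarith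
  have hX₂ : (p * u * m + C * ε ^ 2 * v) ^ 2 ≤ (4 * ε ^ 2) ^ 2 := by
    rw [← sq_abs]
    gcongr
  have : 0 ≤ ∫ x, |(h + u • (φ * h)) x| ^ p ∂(σ n) := integral_nonneg fun x => by positivity
  calc (∫ x, |(h + u • (φ * h)) x| ^ p ∂(σ n)) ^ (2 / p)
      ≤ (1 + (p * u * m + C * ε ^ 2 * v)) ^ (2 / p) := by gcongr
    _ ≤ 1 + 2 / p * (p * u * m + C * ε ^ 2 * v) + 2 * (p * u * m + C * ε ^ 2 * v) ^ 2 :=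
        (hT' _ (hX.trans hεδ')).2
    _ ≤ 1 + 2 / p * (p * u * m + C * ε ^ 2 * v) + 32 * ε ^ 4 := by linarith

/-- Expand both sides of the inequality for `h ± ε φ h` to second order: near a maximiser the
first-order terms cancel after averaging the two signs. -/
theorem exists_rieszForm_mul_self_le {a p S η : ℝ} (ha : a < n / 2) (hp₁ : 1 < p) (hp₂ : p < 2)
    (hS₀ : 0 ≤ S)
    (hS : ∀ h : 𝔼 n → ℝ, IsBoundedMeasurable h → ∫ x, |h x| ^ p ∂(σ n) = 1 →
      rieszForm a h h ≤ S)
    (hη : 0 < η) (hη₁ : η ≤ 1) :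
    ∃ ε₀ > 0, ∀ ε, 0 < ε → ε ≤ ε₀ → ∀ h φ : 𝔼 n → ℝ, IsBoundedMeasurable h →
      ∫ x, |h x| ^ p ∂(σ n) = 1 → S - ε ^ 4 ≤ rieszForm a h h → IsBoundedMeasurable φ →
      (∀ x, |φ x| ≤ 1) → |∫ x, φ x * |h x| ^ p ∂(σ n)| ≤ ε ^ 2 →
      rieszForm a (φ * h) (φ * h)
        ≤ ε ^ 2 + S * ((p - 1 + 2 * η) * (∫ x, φ x ^ 2 * |h x| ^ p ∂(σ n)) + 32 * ε ^ 2) := by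
  have hp₀ : 0 < p := by linarith
  have hr : 2 / p * (2 / p - 1) / 2 < 2 := by
    have : 0 < 2 / p := by positivity
    have : 2 / p < 2 := by rw [div_lt_iff₀ hp₀]; linarith
    nlinarith
  obtain ⟨δ, hδ, hT⟩ := exists_rpowLeParabola (lt_add_of_pos_right (p * (p - 1) / 2) hη)
  obtain ⟨δ', hδ', hT'⟩ := exists_rpowLeParabola hr
  refine ⟨min (min 1 δ) (δ' / 4), by positivity, fun ε hε hεε₀ h φ hh hN hQ hφ hφ₁ hm => ?_⟩
  simp only [le_min_iff] at hεε₀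
  obtain ⟨⟨hε₁, hεδ⟩, hεδ'⟩ := hεε₀
  set C := p * (p - 1) / 2 + η with hC
  set m := ∫ x, φ x * |h x| ^ p ∂(σ n)
  set v := ∫ x, φ x ^ 2 * |h x| ^ p ∂(σ n)
  have : 0 ≤ v := integral_nonneg fun x => by positivity
  have hexpand (u : ℝ) (hu : |u| = ε) :
      rieszForm a h h + 2 * u * rieszForm a h (φ * h) + ε ^ 2 * rieszForm a (φ * h) (φ * h)
        ≤ S * (1 + 2 / p * (p * u * m + C * ε ^ 2 * v) + 32 * ε ^ 4) := by
    rw [← hu, sq_abs, ← rieszForm_add_smul_self ha hh (hφ.mul hh) u, ← sq_abs u, hu]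
    refine (rieszForm_self_le_mul_integral_rpow hp₁ hS
      (hh.add ((hφ.mul hh).const_smul u))).trans (mul_le_mul_of_nonneg_left ?_ hS₀)
    exact integral_abs_add_smul_mul_rpow_rpow_le hp₁ hp₂.le (by nlinarith) (by nlinarith) hT hT'
      hεδ (by nlinarith) hε₁ hh hN hφ hφ₁ hm hu
  have hplus := hexpand ε (abs_of_pos hε)
  have hminus := hexpand (-ε) (by rw [abs_neg, abs_of_pos hε])
  have haverage : rieszForm a (φ * h) (φ * h) ≤ ε ^ 2 + S * (2 / p * C * v + 32 * ε ^ 2) := by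
    refine le_of_mul_le_mul_left ?_ (by positivity : 0 < 2 * ε ^ 2)
    nlinarith
  refine haverage.trans ?_
  have hcoef : 2 / p * C ≤ p - 1 + 2 * η := by
    rw [hC, div_mul_eq_mul_div, div_le_iff₀ hp₀]
    nlinarith
  gcongr

/-- The best constant in the Hardy–Littlewood–Sobolev inequality on the sphere with kernel
exponent `a`, over bounded functions. -/
noncomputable def hlsConstant (n : ℕ) (a : ℝ) : ℝ :=
  sSup {r | ∃ h : 𝔼 n → ℝ, IsBoundedMeasurable h ∧ ∫ x, |h x| ^ (n / (n - a)) ∂(σ n) = 1 ∧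
    rieszForm a h h = r}

theorem exists_integral_rpow_eq_one {p : ℝ} (hp : 0 < p) :
    ∃ c : ℝ, 0 ≤ c ∧ ∫ _ : 𝔼 n, |c| ^ p ∂(σ n) = 1 := by
  have hmass : 0 < chordalMass n 0 := chordalMass_pos natCast_half_pos
  refine ⟨chordalMass n 0 ^ (-1 / p), by positivity, ?_⟩
  rw [integral_const, sphereMeasure_real_univ, abs_of_pos (by positivity), ← rpow_mul hmass.le,
    div_mul_cancel₀ _ hp.ne', rpow_neg_one, smul_eq_mul, mul_inv_cancel₀ hmass.ne']

theorem rieszForm_self_le_hlsConstant {a : ℝ} (ha₀ : 0 < a) (ha : a < n / 2) {h : 𝔼 n → ℝ}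
    (hh : IsBoundedMeasurable h) (hN : ∫ x, |h x| ^ (n / (n - a)) ∂(σ n) = 1) :
    rieszForm a h h ≤ hlsConstant n a := by
  refine le_csSup ⟨2 * (1 + truncatedRieszMass n a), ?_⟩ ⟨h, hh, hN, rfl⟩
  rintro _ ⟨g, hg, hgN, rfl⟩
  exact rieszForm_self_le_of_integral_rpow_eq_one ha₀ ha hg hgN

theorem hlsConstant_nonneg {a : ℝ} (ha₀ : 0 < a) (ha : a < n / 2) : 0 ≤ hlsConstant n a := by
  obtain ⟨c, hc, hN⟩ := exists_integral_rpow_eq_one (n := n) (p := n / (n - a))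
    (div_pos (by linarith) (by linarith))
  refine le_trans (integral_nonneg fun z => ?_)
    (rieszForm_self_le_hlsConstant ha₀ ha (h := fun _ => c) ⟨measurable_const, |c|, by simp⟩ hN)
  exact mul_nonneg (mul_nonneg hc hc) (chordalKernel_nonneg a z.1 z.2)

theorem exists_centered_near_maximizer {a : ℝ} (ha : a < n / 2) {ε : ℝ} (hε : 0 < ε)
    (hε₁ : ε ≤ 1) :
    ∃ h : 𝔼 n → ℝ, IsBoundedMeasurable h ∧ ∫ x, |h x| ^ (n / (n - a)) ∂(σ n) = 1 ∧
      hlsConstant n a - ε ^ 4 ≤ rieszForm a h h ∧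
      ∀ i, |∫ x, ω i x * |h x| ^ (n / (n - a)) ∂(σ n)| ≤ ε ^ 2 := by
  have hn := natCast_half_pos (n := n)
  obtain ⟨c, -, hc⟩ := exists_integral_rpow_eq_one (n := n) (p := n / (n - a))
    (div_pos (by linarith) (by linarith))
  have hconst : IsBoundedMeasurable fun _ : 𝔼 n => c := ⟨measurable_const, |c|, by simp⟩
  obtain ⟨_, ⟨g, hg, hgN, rfl⟩, hgQ⟩ := exists_lt_of_lt_csSup
    (by exact ⟨_, _, hconst, hc, rfl⟩)
    (sub_lt_self (hlsConstant n a) (by positivity : 0 < ε ^ 4))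
  obtain ⟨δ, hδ, b, hcenter⟩ := exists_conformalAction_abs_integral_sphereCoord_mul_le ha hg hgN
    (by positivity : 0 < ε ^ 2) (by nlinarith)
  refine ⟨conformalAction a δ b g, hg.conformalAction ha hδ b, ?_, ?_, hcenter⟩
  · rw [integral_abs_conformalAction_rpow ha hδ, hgN]
  · rw [rieszForm_conformalAction hδ]
    exact hgQ.le

theorem sum_integral_sphereCoord_sq_mul {w : 𝔼 n → ℝ} (hw : IsBoundedMeasurable w) :
    ∑ i, ∫ x, ω i x ^ 2 * w x ∂(σ n) = ∫ x, w x ∂(σ n) := by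
  rw [← integral_finsetSum]
  · simp_rw [← Finset.sum_mul, sum_sphereCoord_sq, one_mul]
  · intro i _
    have hω := isBoundedMeasurable_sphereCoord i
    simp only [sq]
    exact ((hω.mul hω).mul hw).integrable

theorem div_chordalMass_mul_sq_integral_le {a p : ℝ} (ha : a < n / 2) (hp : 1 < p) {h : 𝔼 n → ℝ}
    (hh : IsBoundedMeasurable h) (hN : ∫ x, |h x| ^ p ∂(σ n) = 1) :
    chordalMass n a / chordalMass n 0 * (∫ x, h x ∂(σ n)) ^ 2
      ≤ chordalMass n a * chordalMass n 0 ^ (1 - 2 / p) := by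
  have hmass : 0 < chordalMass n 0 := chordalMass_pos natCast_half_pos
  have hmass' : 0 < chordalMass n a := chordalMass_pos ha
  calc chordalMass n a / chordalMass n 0 * (∫ x, h x ∂(σ n)) ^ 2
      ≤ chordalMass n a / chordalMass n 0 * chordalMass n 0 ^ (2 - 2 / p) := by
        gcongr
        exact sq_integral_le_of_integral_rpow_eq_one hp hh hN
    _ = chordalMass n a * chordalMass n 0 ^ (1 - 2 / p) := by
        rw [show 2 - 2 / p = 1 + (1 - 2 / p) by ring, rpow_add hmass, rpow_one]
        field_simp

/-- Summing the second variation over the coordinates of a centred near-maximiser contradicts the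
spectral gap unless the constant function is optimal up to an arbitrarily small error. -/
theorem exists_mul_hlsConstant_sub_le {a : ℝ} (ha₀ : 0 < a) (ha : a < n / 2) {p τ c : ℝ}
    (hp : p = n / (n - a)) (hτ : τ = (n - 2 * a) / (n - a)) (hc : c = τ / (n - a + 1)) {η : ℝ}
    (hη : 0 < η) (hη₁ : η ≤ 1) :
    ∃ ε₀ > 0, ∀ ε, 0 < ε → ε ≤ ε₀ →
      c * (hlsConstant n a - chordalMass n a * chordalMass n 0 ^ (1 - 2 / p))
        ≤ 2 * η * hlsConstant n a
          + ((n + 1) * (1 + 32 * hlsConstant n a) + (p - 1 + c)) * ε ^ 2 := by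
  have hna : 0 < n - a := by linarith
  have hp₁ : 1 < p := by rw [hp, one_lt_div hna]; linarith
  have hp₂ : p < 2 := by rw [hp, div_lt_iff₀ hna]; linarith
  have hτp : 1 - τ = p - 1 := by rw [hτ, hp]; field_simp; ring
  have hc₀ : 0 ≤ c := by
    rw [hc, hτ]
    exact div_nonneg (div_nonneg (by linarith) hna.le) (by linarith)
  obtain ⟨ε₀, hε₀, hvar⟩ := exists_rieszForm_mul_self_le ha hp₁ hp₂ (hlsConstant_nonneg ha₀ ha)
    (fun h hh hN => rieszForm_self_le_hlsConstant ha₀ ha hh (hp ▸ hN)) hη hη₁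
  refine ⟨min 1 ε₀, by positivity, fun ε hε hεε₀ => ?_⟩
  obtain ⟨hε₁, hεε₀⟩ := le_min_iff.1 hεε₀
  obtain ⟨h, hh, hN, hQ, hcenter⟩ := exists_centered_near_maximizer ha hε hε₁
  rw [← hp] at hN
  simp only [← hp] at hcenter
  set S := hlsConstant n a
  have hsum : ∑ i, rieszForm a (ω i * h) (ω i * h)
      ≤ (n + 1) * ε ^ 2 * (1 + 32 * S) + S * (p - 1 + 2 * η) := by
    refine (Finset.sum_le_sum fun i _ => hvar ε hε hεε₀ h (ω i) hh hN hQ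
      (isBoundedMeasurable_sphereCoord i) (abs_sphereCoord_le_one i) (hcenter i)).trans_eq ?_
    rw [Finset.sum_add_distrib, ← Finset.mul_sum, Finset.sum_add_distrib, ← Finset.mul_sum,
      sum_integral_sphereCoord_sq_mul (hh.rpow (by linarith)), hN]
    simp only [Finset.sum_const, Finset.card_univ, Fintype.card_option, Fintype.card_fin,
      nsmul_eq_mul]
    push_cast
    ring
  have hgap := (le_sum_rieszForm_sphereCoord_mul ha₀ ha (hh.memLp 2) hτ hc).trans hsum
  rw [hτp] at hgap
  have hε₄ : ε ^ 4 ≤ ε ^ 2 := pow_le_pow_of_le_one hε.le hε₁ (by norm_num)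
  have hQ' : (p - 1 + c) * (S - ε ^ 2) ≤ (p - 1 + c) * rieszForm a h h :=
    mul_le_mul_of_nonneg_left (by linarith) (by linarith)
  nlinarith [mul_le_mul_of_nonneg_left (div_chordalMass_mul_sq_integral_le ha hp₁ hh hN) hc₀]

theorem le_apply_zero_of_forall_mem_Ioc {f : ℝ → ℝ} (hf : Continuous f) {x δ : ℝ} (hδ : 0 < δ)
    (h : ∀ ε, 0 < ε → ε ≤ δ → x ≤ f ε) : x ≤ f 0 := by
  refine ge_of_tendsto ((hf.tendsto 0).mono_left (nhdsWithin_le_nhds (s := Set.Ioi 0))) ?_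
  filter_upwards [Ioc_mem_nhdsGT hδ] with ε hε using h ε hε.1 hε.2

theorem hlsConstant_le {a : ℝ} (ha₀ : 0 < a) (ha : a < n / 2) :
    hlsConstant n a ≤ chordalMass n a * chordalMass n 0 ^ (1 - 2 / (n / (n - a))) := by
  have hna : 0 < n - a := by linarith
  have hc : 0 < (n - 2 * a) / (n - a) / (n - a + 1) :=
    div_pos (div_pos (by linarith) hna) (by linarith)
  refine sub_nonpos.1 (nonpos_of_mul_nonpos_right ?_ hc)
  have hη (η : ℝ) (hη : 0 < η) (hη₁ : η ≤ 1) :=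
    let ⟨_, hε₀, hle⟩ := exists_mul_hlsConstant_sub_le ha₀ ha rfl rfl rfl hη hη₁
    le_apply_zero_of_forall_mem_Ioc (by fun_prop) hε₀ hle
  simpa using le_apply_zero_of_forall_mem_Ioc (by fun_prop) one_pos hη

theorem rieszForm_self_le_chordalMass_mul {a : ℝ} (ha₀ : 0 < a) (ha : a < n / 2) {h : 𝔼 n → ℝ}
    (hh : IsBoundedMeasurable h) :
    rieszForm a h h ≤ chordalMass n a * chordalMass n 0 ^ (1 - 2 / (n / (n - a))) *
      (∫ x, |h x| ^ (n / (n - a)) ∂(σ n)) ^ (2 / (n / (n - a))) := by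
  have hp : 1 < n / (n - a) := by rw [one_lt_div] <;> linarith
  exact rieszForm_self_le_mul_integral_rpow hp
    (fun g hg hN => (rieszForm_self_le_hlsConstant ha₀ ha hg hN).trans (hlsConstant_le ha₀ ha)) hh

end

section Fourier

theorem integral_rpow_neg_mul_exp_neg_div_Ioi {r b : ℝ} (hr : 0 < r) (hb : 0 < b) :
    ∫ t in Set.Ioi (0 : ℝ), t ^ (-r - 1) * exp (-(b / t)) = Gamma r * b ^ (-r) := by
  have hcomp := integral_comp_rpow_Ioi (fun t : ℝ => t ^ (r - 1) * exp (-(b * t)))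
    (neg_ne_zero.2 one_ne_zero)
  rw [Real.integral_rpow_mul_exp_neg_mul_Ioi hr hb, one_div, inv_rpow hb.le, ← rpow_neg hb.le,
    mul_comm] at hcomp
  rw [← hcomp]
  refine setIntegral_congr_fun measurableSet_Ioi fun t (ht : 0 < t) => ?_
  simp only [abs_neg, abs_one, one_mul, smul_eq_mul]
  rw [← rpow_mul ht.le, ← mul_assoc, ← rpow_add ht, rpow_neg_one, div_eq_mul_inv]
  ring_nf

variable {V : Type*} [NormedAddCommGroup V] [InnerProductSpace ℝ V] [FiniteDimensional ℝ V]
  [MeasurableSpace V] [BorelSpace V]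

/-- The Fourier transform of a real-valued function. -/
noncomputable def fourierOfReal (g : V → ℝ) : V → ℂ := 𝓕 fun x => (g x : ℂ)

theorem continuous_fourierOfReal {g : V → ℝ} (hg : Integrable g) : Continuous (fourierOfReal g) :=
  VectorFourier.fourierIntegral_continuous Real.continuous_fourierChar
    (L := innerₗ V) continuous_inner (hg.ofReal (𝕜 := ℂ))

theorem norm_fourierOfReal_le (g : V → ℝ) (ξ : V) : ‖fourierOfReal g ξ‖ ≤ ∫ x, |g x| := by
  simp only [← norm_eq_abs, ← Complex.norm_real (g _)]
  exact VectorFourier.norm_fourierIntegral_le_integral_norm _ _ (innerₗ V) _ ξ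

theorem conj_fourierOfReal (g : V → ℝ) (ξ : V) :
    starRingEnd ℂ (fourierOfReal g ξ) = 𝓕⁻ (fun x => (g x : ℂ)) ξ := by
  rw [fourierOfReal, Real.fourier_eq', Real.fourierInv_eq', ← integral_conj]
  congr with x
  simp only [smul_eq_mul, map_mul, ← Complex.exp_conj, Complex.conj_ofReal, Complex.conj_I]
  push_cast
  ring_nf

theorem ofReal_sq_norm_fourierOfReal (g : V → ℝ) (ξ : V) :
    ((‖fourierOfReal g ξ‖ ^ 2 : ℝ) : ℂ)
      = ∫ z : V × V, Complex.exp (↑(-2 * π * inner ℝ ξ (z.1 - z.2)) * Complex.I)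
          * ((g z.1 * g z.2 : ℝ) : ℂ) := by
  rw [← Complex.normSq_eq_norm_sq, Complex.normSq_eq_conj_mul_self, mul_comm, conj_fourierOfReal,
    fourierOfReal, Real.fourier_eq', Real.fourierInv_eq', Measure.volume_eq_prod,
    ← integral_prod_mul]
  congr with z
  have hexp : Complex.exp (↑(-2 * π * inner ℝ ξ (z.1 - z.2)) * Complex.I)
      = Complex.exp (↑(-2 * π * inner ℝ z.1 ξ) * Complex.I)
        * Complex.exp (↑(2 * π * inner ℝ z.2 ξ) * Complex.I) := by
    rw [← Complex.exp_add, inner_sub_right, real_inner_comm ξ, real_inner_comm ξ]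
    push_cast
    ring_nf
  rw [hexp, smul_eq_mul, smul_eq_mul]
  push_cast
  ring

theorem integral_cexp_inner_mul_exp_neg_mul_sq_norm {t : ℝ} (ht : 0 < t) (w : V) :
    ∫ ξ : V, Complex.exp (↑(-2 * π * inner ℝ ξ w) * Complex.I)
        * ((exp (-(π / t * ‖ξ‖ ^ 2)) : ℝ) : ℂ)
      = ((t ^ ((Module.finrank ℝ V : ℝ) / 2) * exp (-(π * ‖w‖ ^ 2 * t)) : ℝ) : ℂ) := by
  have hπ : (π : ℂ) ≠ 0 := by exact_mod_cast pi_ne_zero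
  have ht' : (t : ℂ) ≠ 0 := by exact_mod_cast ht.ne'
  have hfourier := fourier_gaussian_innerProductSpace (V := V) (b := ((π / t : ℝ) : ℂ))
    (by rw [Complex.ofReal_re]; positivity) w
  rw [Real.fourier_eq'] at hfourier
  have hbase : (π : ℂ) / ((π / t : ℝ) : ℂ) = t := by
    push_cast
    field_simp
  have hexp : -(π : ℂ) ^ 2 * ‖w‖ ^ 2 / ((π / t : ℝ) : ℂ) = ((-(π * ‖w‖ ^ 2 * t) : ℝ) : ℂ) := by
    push_cast
    field_simp
  rw [hbase, hexp] at hfourier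
  rw [Complex.ofReal_mul, Complex.ofReal_cpow ht.le, Complex.ofReal_exp (-(π * ‖w‖ ^ 2 * t))]
  push_cast at hfourier ⊢
  rw [← hfourier]
  congr with ξ
  rw [smul_eq_mul]
  ring_nf

theorem integrable_exp_mul_sq_norm_fourierOfReal {g : V → ℝ} (hg : Integrable g) {t : ℝ}
    (ht : 0 < t) : Integrable fun ξ => exp (-(π / t * ‖ξ‖ ^ 2)) * ‖fourierOfReal g ξ‖ ^ 2 := by
  refine (integrable_exp_neg_mul_sq_norm (div_pos pi_pos ht)).mul_bdd (c := (∫ x, |g x|) ^ 2)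
    ((continuous_fourierOfReal hg).norm.pow 2).aestronglyMeasurable (ae_of_all _ fun ξ => ?_)
  rw [norm_pow, norm_norm]
  gcongr
  exact norm_fourierOfReal_le g ξ

theorem integral_exp_mul_sq_norm_fourierOfReal {g : V → ℝ} (hg : Integrable g) {t : ℝ}
    (ht : 0 < t) :
    ∫ ξ, exp (-(π / t * ‖ξ‖ ^ 2)) * ‖fourierOfReal g ξ‖ ^ 2
      = t ^ ((Module.finrank ℝ V : ℝ) / 2)
        * ∫ z : V × V, g z.1 * g z.2 * exp (-(π * ‖z.1 - z.2‖ ^ 2 * t)) := by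
  have hint : Integrable (Function.uncurry fun (ξ : V) (z : V × V) =>
      ((exp (-(π / t * ‖ξ‖ ^ 2)) : ℝ) : ℂ)
        * (Complex.exp (↑(-2 * π * inner ℝ ξ (z.1 - z.2)) * Complex.I)
          * ((g z.1 * g z.2 : ℝ) : ℂ))) (volume.prod (volume.prod volume)) := by
    have hgauss := ((integrable_exp_neg_mul_sq_norm (V := V) (div_pos pi_pos ht)).ofReal
      (𝕜 := ℂ)).mul_prod ((hg.mul_prod hg).ofReal (𝕜 := ℂ))
    have hcont : Continuous fun p : V × V × V =>
      Complex.exp (↑(-2 * π * inner ℝ p.1 (p.2.1 - p.2.2)) * Complex.I) := by fun_prop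
    refine (hgauss.bdd_mul (c := 1) hcont.aestronglyMeasurable (ae_of_all _ fun p => ?_)).congr
      (ae_of_all _ fun p => ?_)
    · rw [Complex.norm_exp_ofReal_mul_I]
    · simp only [Function.uncurry, Complex.coe_algebraMap]
      ring
  apply Complex.ofReal_injective
  rw [← integral_complex_ofReal]
  simp_rw [Complex.ofReal_mul _ (‖fourierOfReal g _‖ ^ 2), ofReal_sq_norm_fourierOfReal,
    Measure.volume_eq_prod, ← integral_const_mul]
  rw [integral_integral_swap hint, ← integral_complex_ofReal]
  congr with z
  have hgauss := integral_cexp_inner_mul_exp_neg_mul_sq_norm ht (z.1 - z.2)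
  calc _ = ∫ ξ : V, ((g z.1 * g z.2 : ℝ) : ℂ)
        * (Complex.exp (↑(-2 * π * inner ℝ ξ (z.1 - z.2)) * Complex.I)
          * ((exp (-(π / t * ‖ξ‖ ^ 2)) : ℝ) : ℂ)) := by
        congr with ξ
        ring
    _ = _ := by
        rw [integral_const_mul, hgauss]
        push_cast
        ring

theorem ofReal_integral_mul_eq_integral_fourierOfReal (f : 𝓢(V, ℝ)) {g : V → ℝ}
    (hg : Integrable g) :
    ((∫ x, f x * g x : ℝ) : ℂ)
      = ∫ ξ, starRingEnd ℂ (fourierOfReal f ξ) * fourierOfReal g ξ := by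
  set fc : 𝓢(V, ℂ) := f.postcompCLM Complex.ofRealCLM
  set φ : 𝓢(V, ℂ) := 𝓕⁻ fc with hφ
  have hconj (ξ : V) : starRingEnd ℂ (fourierOfReal f ξ) = φ ξ := by
    rw [conj_fourierOfReal, hφ, SchwartzMap.fourierInv_coe]
    rfl
  have hfourier (x : V) : 𝓕 (⇑φ) x = f x := by
    rw [← SchwartzMap.fourier_coe, hφ, FourierTransform.fourier_fourierInv_eq]
    rfl
  have hflip := VectorFourier.integral_fourierIntegral_smul_eq_flip (V := V) (W := V)
    Real.continuous_fourierChar (L := innerₗ V) continuous_inner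
    (φ.integrable (μ := volume)) (hg.ofReal (𝕜 := ℂ))
  rw [flip_innerₗ] at hflip
  rw [← integral_complex_ofReal]
  simp_rw [hconj, Complex.ofReal_mul, ← hfourier]
  exact hflip

theorem integrable_rpow_mul_sq_norm_fourierOfReal (f : 𝓢(V, ℝ)) {s : ℝ} (hs : 0 ≤ s) :
    Integrable fun ξ => (2 * π * ‖ξ‖) ^ s * ‖fourierOfReal f ξ‖ ^ 2 := by
  set φ : 𝓢(V, ℂ) := 𝓕 (f.postcompCLM Complex.ofRealCLM)
  have hφ : fourierOfReal f = φ := rfl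
  set k := ⌈s⌉₊
  have hrpow (ξ : V) : (2 * π * ‖ξ‖) ^ s ≤ 1 + (2 * π) ^ k * ‖ξ‖ ^ k := by
    rw [← mul_pow]
    rcases le_total (2 * π * ‖ξ‖) 1 with h | h
    · exact (rpow_le_one (by positivity) h hs).trans (le_add_of_nonneg_right (by positivity))
    · have := rpow_le_rpow_of_exponent_le h (Nat.le_ceil s)
      rw [rpow_natCast] at this
      linarith
  have hmaj := ((φ.integrable.norm.add ((φ.integrable_pow_mul volume k).const_mul
    ((2 * π) ^ k))).const_mul (∫ x, |f x|))
  refine hmaj.mono' (by rw [hφ]; fun_prop) (ae_of_all _ fun ξ => ?_)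
  rw [norm_of_nonneg (by positivity)]
  calc (2 * π * ‖ξ‖) ^ s * ‖fourierOfReal f ξ‖ ^ 2
      ≤ (1 + (2 * π) ^ k * ‖ξ‖ ^ k) * (‖φ ξ‖ * ∫ x, |f x|) := by
        rw [sq, hφ]
        gcongr
        · exact hrpow ξ
        · exact norm_fourierOfReal_le f ξ
    _ = _ := by
        simp only [Pi.add_apply]
        ring

end Fourier

section RieszPotential

theorem integral_rpow_mul_exp_neg_sq_norm_sub_mul {a : ℝ} (ha₀ : 0 < a) {x y : 𝔼 n} (hxy : x ≠ y) :
    ∫ t in Set.Ioi (0 : ℝ), t ^ (a - 1) * exp (-(π * ‖x - y‖ ^ 2 * t))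
      = Gamma a * π ^ (-a) * rieszKernel a x y := by
  have := norm_pos_iff.2 (sub_ne_zero.2 hxy)
  rw [Real.integral_rpow_mul_exp_neg_mul_Ioi ha₀ (by positivity), rieszKernel, one_div,
    inv_rpow (by positivity), ← rpow_neg (by positivity), mul_rpow pi_pos.le (by positivity)]
  ring

theorem integrableOn_rpow_mul_exp_neg_sq_norm_sub_mul {a : ℝ} (ha₀ : 0 < a) {x y : 𝔼 n}
    (hxy : x ≠ y) :
    IntegrableOn (fun t => t ^ (a - 1) * exp (-(π * ‖x - y‖ ^ 2 * t))) (Set.Ioi 0) := by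
  refine Integrable.of_integral_ne_zero
    ((integral_rpow_mul_exp_neg_sq_norm_sub_mul ha₀ hxy).trans_ne ?_)
  have := norm_pos_iff.2 (sub_ne_zero.2 hxy)
  have := Gamma_pos_of_pos ha₀
  unfold rieszKernel
  positivity

theorem ae_fst_ne_snd_volume [NeZero n] : ∀ᵐ z : 𝔼 n × 𝔼 n, z.1 ≠ z.2 :=
  (absolutelyContinuous_sphereMeasure.prod absolutelyContinuous_sphereMeasure).ae_le ae_fst_ne_snd

/-- The integrand of the subordination formula, writing `|x - y|^(-2a)` as a superposition over
`t > 0` of the Gaussians `exp (-π |x - y|² t)`, tested against `g ⊗ g`. -/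
noncomputable def subordinationIntegrand (a : ℝ) (g : 𝔼 n → ℝ) (t : ℝ) (z : 𝔼 n × 𝔼 n) : ℝ :=
  g z.1 * g z.2 * (t ^ (a - 1) * exp (-(π * ‖z.1 - z.2‖ ^ 2 * t)))

theorem integral_subordinationIntegrand {a : ℝ} (ha₀ : 0 < a) (g : 𝔼 n → ℝ) {z : 𝔼 n × 𝔼 n}
    (hz : z.1 ≠ z.2) :
    ∫ t in Set.Ioi (0 : ℝ), subordinationIntegrand a g t z
      = Gamma a * π ^ (-a) * (g z.1 * g z.2 * rieszKernel a z.1 z.2) := by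
  unfold subordinationIntegrand
  rw [integral_const_mul, integral_rpow_mul_exp_neg_sq_norm_sub_mul ha₀ hz]
  ring

theorem integral_prod_subordinationIntegrand (a : ℝ) {g : 𝔼 n → ℝ} (hg : Integrable g) {t : ℝ}
    (ht : 0 < t) :
    ∫ z, subordinationIntegrand a g t z
      = ∫ ξ, t ^ (-((n : ℝ) / 2 - a) - 1)
        * (exp (-(π / t * ‖ξ‖ ^ 2)) * ‖fourierOfReal g ξ‖ ^ 2) := by
  unfold subordinationIntegrand
  rw [integral_const_mul, integral_exp_mul_sq_norm_fourierOfReal hg ht, finrank_euclideanSpace_fin,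
    ← mul_assoc, ← rpow_add ht, ← integral_const_mul]
  congr with z
  ring_nf

theorem integral_rpow_mul_exp_mul_sq_norm_fourierOfReal {a : ℝ} (ha : a < n / 2) (g : 𝔼 n → ℝ)
    {ξ : 𝔼 n} (hξ : ξ ≠ 0) :
    ∫ t in Set.Ioi (0 : ℝ), t ^ (-((n : ℝ) / 2 - a) - 1)
        * (exp (-(π / t * ‖ξ‖ ^ 2)) * ‖fourierOfReal g ξ‖ ^ 2)
      = Gamma (n / 2 - a) * (2 ^ (n - 2 * a) * π ^ ((n : ℝ) / 2 - a))
        * ((2 * π * ‖ξ‖) ^ (-(n - 2 * a)) * ‖fourierOfReal g ξ‖ ^ 2) := by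
  have hb : 0 < (n : ℝ) / 2 - a := by linarith
  have hnorm := norm_pos_iff.2 hξ
  have hgamma := integral_rpow_neg_mul_exp_neg_div_Ioi hb (b := π * ‖ξ‖ ^ 2) (by positivity)
  have hrpow : (π * ‖ξ‖ ^ 2) ^ (-((n : ℝ) / 2 - a))
      = 2 ^ (n - 2 * a) * π ^ ((n : ℝ) / 2 - a) * (2 * π * ‖ξ‖) ^ (-(n - 2 * a)) := by
    rw [show (n : ℝ) - 2 * a = 2 * (n / 2 - a) by ring]
    generalize (n : ℝ) / 2 - a = b
    rw [rpow_neg (by positivity), rpow_neg (by positivity), mul_rpow pi_pos.le (by positivity),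
      mul_rpow (by positivity) hnorm.le, mul_rpow two_pos.le pi_pos.le, two_mul b,
      rpow_add hnorm, rpow_add pi_pos, ← rpow_natCast ‖ξ‖, ← rpow_mul hnorm.le, Nat.cast_ofNat,
      two_mul b, rpow_add hnorm]
    field_simp
  calc _ = ∫ t in Set.Ioi (0 : ℝ), ‖fourierOfReal g ξ‖ ^ 2
          * (t ^ (-((n : ℝ) / 2 - a) - 1) * exp (-(π * ‖ξ‖ ^ 2 / t))) := by
        congr with t
        ring_nf
    _ = _ := by
        rw [integral_const_mul, hgamma, hrpow]
        ring

variable [NeZero n] {a : ℝ} {g : 𝔼 n → ℝ}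

theorem integrable_subordinationIntegrand (ha₀ : 0 < a) (hg : Integrable g)
    (hgg : Integrable fun z : 𝔼 n × 𝔼 n => g z.1 * g z.2 * rieszKernel a z.1 z.2) :
    Integrable (Function.uncurry (subordinationIntegrand a g))
      ((volume.restrict (Set.Ioi 0)).prod volume) := by
  have hmeas : AEStronglyMeasurable (Function.uncurry (subordinationIntegrand a g))
      ((volume.restrict (Set.Ioi 0)).prod volume) := by
    have hkernel : Measurable fun p : ℝ × 𝔼 n × 𝔼 n =>
        p.1 ^ (a - 1) * exp (-(π * ‖p.2.1 - p.2.2‖ ^ 2 * p.1)) := by fun_prop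
    exact (hg.mul_prod hg).aestronglyMeasurable.comp_snd.mul hkernel.aestronglyMeasurable
  refine (integrable_prod_iff' hmeas).2 ⟨?_, ?_⟩
  · filter_upwards [ae_fst_ne_snd_volume] with z hz
    exact (integrableOn_rpow_mul_exp_neg_sq_norm_sub_mul ha₀ hz).integrable.const_mul
      (g z.1 * g z.2)
  · refine (hgg.norm.const_mul (Gamma a * π ^ (-a))).congr ?_
    filter_upwards [ae_fst_ne_snd_volume] with z hz
    have habs : ∀ t ∈ Set.Ioi (0 : ℝ), ‖subordinationIntegrand a g t z‖
        = subordinationIntegrand a (fun x => |g x|) t z := fun t (ht : 0 < t) => by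
      unfold subordinationIntegrand
      rw [norm_mul, norm_of_nonneg (by positivity : 0 ≤ t ^ (a - 1) * _), norm_eq_abs, abs_mul]
    simp only [Function.uncurry]
    rw [setIntegral_congr_fun measurableSet_Ioi habs, integral_subordinationIntegrand ha₀ _ hz,
      norm_mul, norm_of_nonneg (rieszKernel_nonneg a _ _), norm_eq_abs, abs_mul]

theorem integrable_rpow_mul_exp_mul_sq_norm_fourierOfReal (ha₀ : 0 < a) (hg : Integrable g)
    (hgg : Integrable fun z : 𝔼 n × 𝔼 n => g z.1 * g z.2 * rieszKernel a z.1 z.2) :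
    Integrable (Function.uncurry fun (t : ℝ) (ξ : 𝔼 n) => t ^ (-((n : ℝ) / 2 - a) - 1)
        * (exp (-(π / t * ‖ξ‖ ^ 2)) * ‖fourierOfReal g ξ‖ ^ 2))
      ((volume.restrict (Set.Ioi 0)).prod volume) := by
  have hfourier := (continuous_fourierOfReal hg).measurable
  refine (integrable_prod_iff (by fun_prop)).2 ⟨?_, ?_⟩
  · filter_upwards [ae_restrict_mem measurableSet_Ioi] with t (ht : 0 < t)
    exact (integrable_exp_mul_sq_norm_fourierOfReal hg ht).const_mul (t ^ (-((n : ℝ) / 2 - a) - 1))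
  · refine (integrable_subordinationIntegrand ha₀ hg hgg).integral_prod_left.congr ?_
    filter_upwards [ae_restrict_mem measurableSet_Ioi] with t (ht : 0 < t)
    simp only [Function.uncurry]
    rw [integral_prod_subordinationIntegrand a hg ht]
    congr with ξ
    rw [norm_of_nonneg (by positivity)]

theorem gamma_div_gamma_mul_inv_chordalMass (ha : a < n / 2) :
    Gamma a / Gamma (n - a) * (chordalMass n a)⁻¹
      = Gamma a * π ^ (-a) / (Gamma (n / 2 - a) * (2 ^ (n - 2 * a) * π ^ ((n : ℝ) / 2 - a))) := by
  have hn := natCast_half_pos (n := n)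
  have := Gamma_pos_of_pos (show 0 < n - a by linarith)
  unfold chordalMass
  rw [show (n : ℝ) - a - n / 2 = n / 2 - a by ring, rpow_sub pi_pos, rpow_neg pi_pos.le]
  field_simp

theorem integrable_rpow_neg_mul_sq_norm_fourierOfReal (ha₀ : 0 < a) (ha : a < n / 2)
    (hg : Integrable g)
    (hgg : Integrable fun z : 𝔼 n × 𝔼 n => g z.1 * g z.2 * rieszKernel a z.1 z.2) :
    Integrable fun ξ => (2 * π * ‖ξ‖) ^ (-(n - 2 * a)) * ‖fourierOfReal g ξ‖ ^ 2 := by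
  have := Gamma_pos_of_pos (show 0 < n / 2 - a by linarith)
  refine (integrable_const_mul_iff
    (c := Gamma (n / 2 - a) * (2 ^ (n - 2 * a) * π ^ ((n : ℝ) / 2 - a)))
    (isUnit_iff_ne_zero.2 (by positivity)) _).1 ?_
  refine (integrable_rpow_mul_exp_mul_sq_norm_fourierOfReal ha₀ hg hgg).integral_prod_right.congr ?_
  filter_upwards [Measure.ae_ne volume 0] with ξ hξ
  exact integral_rpow_mul_exp_mul_sq_norm_fourierOfReal ha g hξ

theorem integral_rpow_neg_mul_sq_norm_fourierOfReal (ha₀ : 0 < a) (ha : a < n / 2)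
    (hg : Integrable g)
    (hgg : Integrable fun z : 𝔼 n × 𝔼 n => g z.1 * g z.2 * rieszKernel a z.1 z.2) :
    ∫ ξ, (2 * π * ‖ξ‖) ^ (-(n - 2 * a)) * ‖fourierOfReal g ξ‖ ^ 2
      = Gamma a / Gamma (n - a) * (chordalMass n a)⁻¹ * euclideanRieszForm a g g := by
  have := Gamma_pos_of_pos (show 0 < n / 2 - a by linarith)
  rw [gamma_div_gamma_mul_inv_chordalMass ha, div_mul_eq_mul_div, eq_div_iff (by positivity),
    mul_comm, ← integral_const_mul]
  calc _ = ∫ ξ, ∫ t in Set.Ioi (0 : ℝ), t ^ (-((n : ℝ) / 2 - a) - 1)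
          * (exp (-(π / t * ‖ξ‖ ^ 2)) * ‖fourierOfReal g ξ‖ ^ 2) := by
        refine integral_congr_ae ?_
        filter_upwards [Measure.ae_ne volume 0] with ξ hξ
        exact (integral_rpow_mul_exp_mul_sq_norm_fourierOfReal ha g hξ).symm
    _ = ∫ t in Set.Ioi (0 : ℝ), ∫ z, subordinationIntegrand a g t z := by
        rw [← integral_integral_swap (integrable_rpow_mul_exp_mul_sq_norm_fourierOfReal ha₀ hg hgg)]
        exact setIntegral_congr_fun measurableSet_Ioi fun t ht =>
          (integral_prod_subordinationIntegrand a hg ht).symm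
    _ = ∫ z : 𝔼 n × 𝔼 n, Gamma a * π ^ (-a) * (g z.1 * g z.2 * rieszKernel a z.1 z.2) := by
        rw [integral_integral_swap (integrable_subordinationIntegrand ha₀ hg hgg)]
        refine integral_congr_ae ?_
        filter_upwards [ae_fst_ne_snd_volume] with z hz
        exact integral_subordinationIntegrand ha₀ g hz
    _ = _ := integral_const_mul _ _

theorem sq_integral_abs_mul_abs_le {α : Type*} {m : MeasurableSpace α} {μ : Measure α} {f g : α → ℝ}
    (hf : MemLp f 2 μ) (hg : MemLp g 2 μ) :
    (∫ x, |f x| * |g x| ∂μ) ^ 2 ≤ (∫ x, f x ^ 2 ∂μ) * ∫ x, g x ^ 2 ∂μ := by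
  have hholder := integral_mul_norm_le_Lp_mul_Lq (p := 2) (q := 2) (μ := μ) (f := f) (g := g)
    HolderConjugate.two_two (by simpa using hf) (by simpa using hg)
  simp only [norm_eq_abs, rpow_two, sq_abs, ← sqrt_eq_rpow] at hholder
  calc (∫ x, |f x| * |g x| ∂μ) ^ 2 ≤ (√(∫ x, f x ^ 2 ∂μ) * √(∫ x, g x ^ 2 ∂μ)) ^ 2 := by
        gcongr
    _ = _ := by
        rw [mul_pow, sq_sqrt (integral_nonneg fun x => sq_nonneg _),
          sq_sqrt (integral_nonneg fun x => sq_nonneg _)]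

theorem sq_integral_mul_le_homogSobolevNormSq_mul (ha₀ : 0 < a) (ha : a < n / 2) (f : 𝓢(𝔼 n, ℝ))
    (hg : Integrable g)
    (hgg : Integrable fun z : 𝔼 n × 𝔼 n => g z.1 * g z.2 * rieszKernel a z.1 z.2) :
    (∫ x, f x * g x) ^ 2 ≤ homogSobolevNormSq n (n - 2 * a) f
      * (Gamma a / Gamma (n - a) * (chordalMass n a)⁻¹ * euclideanRieszForm a g g) := by
  have hint₁ := integrable_rpow_mul_sq_norm_fourierOfReal f (s := n - 2 * a) (by linarith)
  have hint₂ := integrable_rpow_neg_mul_sq_norm_fourierOfReal ha₀ ha hg hgg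
  have hsq (r : ℝ) (h : 𝔼 n → ℝ) (ξ : 𝔼 n) : ((2 * π * ‖ξ‖) ^ (r / 2) * ‖fourierOfReal h ξ‖) ^ 2
      = (2 * π * ‖ξ‖) ^ r * ‖fourierOfReal h ξ‖ ^ 2 := by
    rw [mul_pow, ← rpow_mul_natCast (by positivity), Nat.cast_ofNat, div_mul_cancel₀ _ two_ne_zero]
  have hmemLp {r : ℝ} {h : 𝔼 n → ℝ} (hh : Integrable h)
      (hr : Integrable fun ξ => (2 * π * ‖ξ‖) ^ r * ‖fourierOfReal h ξ‖ ^ 2) :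
      MemLp (fun ξ => (2 * π * ‖ξ‖) ^ (r / 2) * ‖fourierOfReal h ξ‖) 2 := by
    have := (continuous_fourierOfReal hh).measurable
    exact (memLp_two_iff_integrable_sq (by fun_prop)).2 (by simpa only [hsq] using hr)
  have hcauchy := sq_integral_abs_mul_abs_le (hmemLp f.integrable hint₁) (hmemLp hg hint₂)
  simp only [hsq, integral_rpow_neg_mul_sq_norm_fourierOfReal ha₀ ha hg hgg] at hcauchy
  have hpointwise : ∀ᵐ ξ : 𝔼 n, ‖starRingEnd ℂ (fourierOfReal f ξ) * fourierOfReal g ξ‖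
      = |(2 * π * ‖ξ‖) ^ ((n - 2 * a) / 2) * ‖fourierOfReal f ξ‖|
        * |(2 * π * ‖ξ‖) ^ (-(n - 2 * a) / 2) * ‖fourierOfReal g ξ‖| := by
    filter_upwards [Measure.ae_ne volume 0] with ξ hξ
    have := norm_pos_iff.2 hξ
    rw [abs_of_nonneg (by positivity), abs_of_nonneg (by positivity), norm_mul,
      RCLike.norm_conj, neg_div, rpow_neg (by positivity)]
    field_simp
  refine le_trans ?_ hcauchy
  rw [← integral_congr_ae hpointwise, ← sq_abs, ← norm_eq_abs, ← Complex.norm_real,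
    ofReal_integral_mul_eq_integral_fourierOfReal f hg]
  gcongr
  exact norm_integral_le_integral_norm _

end RieszPotential

section SphereLift

/-- The conformal lift `ρ^(-a) f` of a function on `ℝⁿ` to a function on `Sⁿ` in stereographic
coordinates. -/
noncomputable def sphereLift (a : ℝ) (f : 𝔼 n → ℝ) (x : 𝔼 n) : ℝ := f x * ρ x ^ (-a)

theorem isBoundedMeasurable_sphereLift {a : ℝ} (ha : 0 ≤ a) (f : 𝓢(𝔼 n, ℝ)) :
    IsBoundedMeasurable (sphereLift a f) := by
  have hf : Measurable f := f.continuous.measurable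
  have hρ : Measurable (ρ : 𝔼 n → ℝ) := measurable_conformalFactor
  set k := ⌈2 * a⌉₊
  refine ⟨hf.mul (hρ.pow_const _),
    2 ^ k * (Finset.Iic (k, 0)).sup (fun m => SchwartzMap.seminorm ℝ m.1 m.2) f, fun x => ?_⟩
  have hseminorm := SchwartzMap.one_add_le_sup_seminorm_apply (𝕜 := ℝ) (m := (k, 0)) (k := k)
    (n := 0) le_rfl le_rfl f x
  rw [norm_iteratedFDeriv_zero] at hseminorm
  have hpow : ρ x ^ (-a) ≤ (1 + ‖x‖) ^ k := by
    have hnorm := norm_nonneg x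
    unfold conformalFactor
    rw [rpow_neg (by positivity), ← inv_rpow (by positivity), inv_div]
    calc ((1 + ‖x‖ ^ 2) / 2) ^ a ≤ ((1 + ‖x‖) ^ 2) ^ a :=
          rpow_le_rpow (by positivity) (by nlinarith) ha
      _ = (1 + ‖x‖) ^ (2 * a) := by
          rw [← rpow_natCast, ← rpow_mul (by positivity), Nat.cast_ofNat]
      _ ≤ (1 + ‖x‖) ^ (k : ℝ) :=
          rpow_le_rpow_of_exponent_le (by linarith) (Nat.le_ceil _)
      _ = (1 + ‖x‖) ^ k := rpow_natCast _ _
  refine le_trans ?_ hseminorm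
  have := conformalFactor_pos x
  rw [sphereLift, abs_mul, abs_of_pos (by positivity : 0 < ρ x ^ (-a)), mul_comm, norm_eq_abs]
  gcongr

theorem integral_abs_sphereLift_rpow (a q : ℝ) (f : 𝔼 n → ℝ) :
    ∫ x, |sphereLift a f x| ^ q ∂(σ n)
      = 2 ^ (n - a * q) * ∫ x, |f x| ^ q * (1 + ‖x‖ ^ 2) ^ (-(n - a * q)) := by
  rw [integral_sphereMeasure, ← integral_const_mul]
  congr with x
  have hρ := conformalFactor_pos x
  rw [sphereLift, abs_mul, abs_of_pos (by positivity : 0 < ρ x ^ (-a)),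
    mul_rpow (abs_nonneg _) (by positivity), ← rpow_mul hρ.le, mul_assoc, ← rpow_natCast,
    ← rpow_add hρ, show -a * q + n = n - a * q by ring, conformalFactor,
    div_rpow two_pos.le (by positivity), rpow_neg (by positivity)]
  ring

theorem sphereInner_sphereLift (a : ℝ) (f P : 𝔼 n → ℝ) :
    sphereInner (sphereLift a f) P = ∫ x, f x * (P * conformalWeight a : 𝔼 n → ℝ) x := by
  rw [sphereInner, integral_sphereMeasure]
  congr with x
  rw [sphereLift, Pi.mul_apply, conformalWeight, show (n : ℝ) - a = -a + n by ring,
    rpow_add (conformalFactor_pos x), rpow_natCast]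
  ring

theorem IsBoundedMeasurable.conformalDecay {P : 𝔼 n → ℝ} (hP : IsBoundedMeasurable P) (a : ℝ) :
    ConformalDecay a (P * conformalWeight a) := by
  obtain ⟨C, hC⟩ := hP.exists_abs_le
  refine ⟨hP.measurable.mul (measurable_conformalWeight a), C, fun x => ?_⟩
  have := conformalWeight_pos a x
  rw [Pi.mul_apply, abs_mul, abs_of_pos this]
  gcongr
  exact hC x

theorem isBoundedMeasurable_of_mem_sphericalPoly {k : ℕ} {P : 𝔼 n → ℝ}
    (hP : P ∈ sphericalPoly n k) : IsBoundedMeasurable P :=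
  ⟨(contDiff_of_mem_sphericalPoly hP).continuous.measurable, exists_abs_le_of_mem_sphericalPoly hP⟩

theorem ConformalDecay.integrable {a : ℝ} (ha : a < n / 2) {r : 𝔼 n → ℝ}
    (hr : ConformalDecay a r) : Integrable r := by
  obtain ⟨C, hC⟩ := hr.exists_abs_le
  have hweight : Integrable (conformalWeight a : 𝔼 n → ℝ) := by
    have hdim : (Module.finrank ℝ (𝔼 n) : ℝ) < 2 * (n - a) := by
      rw [finrank_euclideanSpace_fin]
      linarith
    refine ((integrable_rpow_neg_one_add_norm_sq hdim).const_mul (2 ^ ((n : ℝ) - a))).congr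
      (.of_forall fun x => ?_)
    dsimp only
    rw [conformalWeight, conformalFactor, div_rpow two_pos.le (by positivity),
      div_eq_mul_inv _ (_ ^ _), ← rpow_neg (by positivity), neg_div,
      mul_div_cancel_left₀ _ two_ne_zero]
  exact (hweight.const_mul C).mono' hr.measurable.aestronglyMeasurable (.of_forall hC)

theorem sq_sphereInner_sphereLift_le [NeZero n] {a : ℝ} (ha₀ : 0 < a) (ha : a < n / 2)
    (f : 𝓢(𝔼 n, ℝ)) {P : 𝔼 n → ℝ} (hP : IsBoundedMeasurable P) :
    sphereInner (sphereLift a f) P ^ 2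
      ≤ (Gamma a / Gamma (n - a) * homogSobolevNormSq n (n - 2 * a) f)
        * ((chordalMass n a)⁻¹ * rieszForm a P P) := by
  have hdecay := hP.conformalDecay a
  rw [sphereInner_sphereLift, rieszForm_eq_euclideanRieszForm]
  refine (sq_integral_mul_le_homogSobolevNormSq_mul ha₀ ha f (hdecay.integrable ha)
    (hdecay.integrable_rieszKernel ha hdecay)).trans_eq ?_
  ring

end SphereLift

section Subcritical

theorem chordalMass_zero [NeZero n] :
    chordalMass n 0 = 2 * π ^ (((n : ℝ) + 1) / 2) / Gamma (((n : ℝ) + 1) / 2) := by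
  have hn := natCast_half_pos (n := n)
  have hΓ := Gamma_pos_of_pos (show (0 : ℝ) < n by linarith)
  have hΓ' := Gamma_pos_of_pos (show (0 : ℝ) < (n + 1) / 2 by positivity)
  have hdup := Gamma_mul_Gamma_add_half ((n : ℝ) / 2)
  rw [← add_div, mul_div_cancel₀ _ two_ne_zero] at hdup
  rw [chordalMass, show (n : ℝ) - 0 - n / 2 = n / 2 by ring, mul_zero, sub_zero,
    ← mul_div_assoc, div_eq_div_iff hΓ.ne' hΓ'.ne']
  calc _ = 2 ^ (n : ℝ) * π ^ ((n : ℝ) / 2) * (Gamma (n / 2) * Gamma ((n + 1) / 2)) := by ring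
    _ = (2 ^ (n : ℝ) * 2 ^ (1 - (n : ℝ))) * (π ^ ((n : ℝ) / 2) * √π) * Gamma n := by
        rw [hdup]
        ring
    _ = _ := by
        rw [← rpow_add two_pos, sqrt_eq_rpow, ← rpow_add pi_pos, add_sub_cancel, rpow_one,
          ← add_div]

theorem self_mul_abs_rpow_mul_self {q : ℝ} (hq : q ≠ 0) (x : ℝ) :
    x * (|x| ^ (q - 2) * x) = |x| ^ q := by
  rcases eq_or_ne x 0 with rfl | hx
  · rw [zero_mul, abs_zero, zero_rpow hq]
  · rw [mul_left_comm, ← sq, ← sq_abs, ← rpow_two, ← rpow_add (abs_pos.2 hx), sub_add_cancel]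

theorem abs_abs_rpow_mul_self_rpow {q : ℝ} (hq : 1 < q) (x : ℝ) :
    |(|x| ^ (q - 2) * x)| ^ (q / (q - 1)) = |x| ^ q := by
  have hq₁ : q - 1 ≠ 0 := by linarith
  have habs : |(|x| ^ (q - 2) * x)| = |x| ^ (q - 1) := by
    rw [abs_mul, abs_of_nonneg (by positivity)]
    rcases eq_or_ne x 0 with rfl | hx
    · rw [abs_zero, mul_zero, zero_rpow hq₁]
    · rw [← rpow_add_one (abs_ne_zero.2 hx), show q - 2 + 1 = q - 1 by ring]
  rw [habs, ← rpow_mul (abs_nonneg x), mul_div_cancel₀ _ hq₁]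

variable [NeZero n] {q r M N : ℝ} {u h : 𝔼 n → ℝ}

theorem natCast_div_lt_half (hq : 2 < q) : (n : ℝ) / q < n / 2 :=
  div_lt_div_of_pos_left (by linarith [natCast_half_pos (n := n)]) two_pos hq

theorem inv_rieszEigenvalue_le_convexCombination (hq : 2 < q) (hqr : q ≤ r) (k : ℕ) :
    ((chordalMass n (n / q))⁻¹ * rieszEigenvalue n (n / q) k)⁻¹
      ≤ (1 - (q - 2) / (r - 2))
        + (q - 2) / (r - 2) * ((chordalMass n (n / r))⁻¹ * rieszEigenvalue n (n / r) k)⁻¹ := by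
  have hq' := inv_rieszEigenvalue_eq_reciprocalEigenvalue (n := n) (sub_pos.2 hq) k
  have hr' := inv_rieszEigenvalue_eq_reciprocalEigenvalue (n := n) (t := r - 2) (by linarith) k
  rw [sub_add_cancel] at hq' hr'
  rw [hq', hr']
  exact reciprocalEigenvalue_le_convexCombination (sub_pos.2 hq) (by linarith) k

theorem sq_sphereInner_le_of_forall_sphericalPoly (hq : 2 < q) (hqr : q ≤ r)
    (hu : MemLp u 2 (σ n)) (hN : 0 ≤ N)
    (hdual : ∀ k, ∀ P ∈ sphericalPoly n k,
      sphereInner u P ^ 2 ≤ N * ((chordalMass n (n / r))⁻¹ * rieszForm (n / r) P P))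
    (hh : MemLp h 2 (σ n)) :
    sphereInner u h ^ 2
      ≤ ((1 - (q - 2) / (r - 2)) * sphereInner u u + (q - 2) / (r - 2) * N)
        * ((chordalMass n (n / q))⁻¹ * rieszForm (n / q) h h) := by
  have haq := natCast_div_lt_half (n := n) hq
  have har := natCast_div_lt_half (n := n) (hq.trans_le hqr)
  have hn := natCast_half_pos (n := n)
  have hθ : (q - 2) / (r - 2) ∈ Set.Icc (0 : ℝ) 1 :=
    ⟨div_nonneg (by linarith) (by linarith), div_le_one_of_le₀ (by linarith) (by linarith)⟩
  have heigen {p : ℝ} (hp : 2 < p) (k : ℕ) :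
      0 < ((chordalMass n (n / p))⁻¹ • rieszEigenvalue n (n / p)) k :=
    mul_pos (inv_pos.2 (chordalMass_pos (natCast_div_lt_half hp)))
      (rieszEigenvalue_pos (div_pos (by linarith) (by linarith)) (natCast_div_lt_half hp) k)
  have hdiagq := (isDiagonal_rieszFormL2 haq).smul (chordalMass n (n / q))⁻¹
  have hdiagr := (isDiagonal_rieszFormL2 har).smul (chordalMass n (n / r))⁻¹
  have hinterp := hdiagq.inner_sq_le_of_inv_le hdiagr sphericalPolyL2_mono
    topologicalClosure_iSup_sphericalPolyL2
    (fun v w => by simp only [smul_apply, smul_eq_mul, rieszFormL2_comm haq v w])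
    (heigen hq) (heigen (hq.trans_le hqr)) hθ (inv_rieszEigenvalue_le_convexCombination hq hqr) hN
    (u := hu.toLp u)
    (fun k g hg => by
      obtain ⟨P, hP, rfl⟩ := mem_sphericalPolyL2.1 hg
      simpa only [smul_apply, smul_eq_mul, inner_toLp_toLp, rieszFormL2_toLp] using hdual k P hP)
    (hh.toLp h)
  simpa only [smul_apply, smul_eq_mul, ← real_inner_self_eq_norm_sq, inner_toLp_toLp,
    rieszFormL2_toLp] using hinterp

theorem inv_chordalMass_mul_rieszForm_self_le (hq : 2 < q) (hh : IsBoundedMeasurable h) :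
    (chordalMass n (n / q))⁻¹ * rieszForm (n / q) h h
      ≤ chordalMass n 0 ^ (2 / q - 1) * (∫ x, |h x| ^ (q / (q - 1)) ∂(σ n)) ^ (2 - 2 / q) := by
  have hn := natCast_half_pos (n := n)
  have hq₁ : 0 < q - 1 := by linarith
  have ha := natCast_div_lt_half (n := n) hq
  have hsharp := rieszForm_self_le_chordalMass_mul (div_pos (by linarith) (by linarith)) ha hh
  have hexponent : (n : ℝ) / (n - n / q) = q / (q - 1) := by
    have : (n : ℝ) ≠ 0 := by linarith
    field_simp
  have hexponent' : 2 / (q / (q - 1)) = 2 - 2 / q := by field_simp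
  rw [hexponent, hexponent', show 1 - (2 - 2 / q) = 2 / q - 1 by ring, mul_assoc] at hsharp
  exact (inv_mul_le_iff₀ (chordalMass_pos ha)).2 hsharp

theorem rpow_integral_abs_rpow_le_of_forall_sq_sphereInner_le (hq : 2 < q)
    (hu : IsBoundedMeasurable u) (hM : 0 ≤ M)
    (hdual : ∀ h, IsBoundedMeasurable h →
      sphereInner u h ^ 2 ≤ M * ((chordalMass n (n / q))⁻¹ * rieszForm (n / q) h h)) :
    (∫ x, |u x| ^ q ∂(σ n)) ^ (2 / q) ≤ M * chordalMass n 0 ^ (2 / q - 1) := by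
  set h : 𝔼 n → ℝ := (fun x => |u x| ^ (q - 2)) * u
  have hh : IsBoundedMeasurable h := (hu.rpow (by linarith)).mul hu
  set I := ∫ x, |u x| ^ q ∂(σ n)
  have hpairing : sphereInner u h = I :=
    integral_congr_ae (.of_forall fun x => self_mul_abs_rpow_mul_self (by linarith) (u x))
  have hnorm : ∫ x, |h x| ^ (q / (q - 1)) ∂(σ n) = I :=
    integral_congr_ae (.of_forall fun x => abs_abs_rpow_mul_self_rpow (by linarith) (u x))
  have hmass := chordalMass_pos (natCast_half_pos (n := n))
  have hI : 0 ≤ I := integral_nonneg fun x => by positivity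
  have hkey : I ^ 2 ≤ M * (chordalMass n 0 ^ (2 / q - 1) * I ^ (2 - 2 / q)) := by
    rw [← hpairing]
    refine (hdual h hh).trans (mul_le_mul_of_nonneg_left ?_ hM)
    rw [hpairing, ← hnorm]
    exact inv_chordalMass_mul_rieszForm_self_le hq hh
  rcases hI.eq_or_lt with hI | hI
  · rw [← hI, zero_rpow (by positivity)]
    positivity
  refine le_of_mul_le_mul_right ?_ (rpow_pos_of_pos hI (2 - 2 / q))
  rwa [← rpow_add hI, add_sub_cancel, rpow_two, mul_assoc]

theorem rpow_integral_abs_sphereLift_rpow_le {a : ℝ} (ha₀ : 0 < a) (hq : 2 < q) (hqa : q ≤ n / a)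
    (f : 𝓢(𝔼 n, ℝ)) :
    (∫ x, |sphereLift a f x| ^ q ∂(σ n)) ^ (2 / q)
      ≤ ((1 - (q - 2) / (n / a - 2)) * ∫ x, |sphereLift a f x| ^ (2 : ℝ) ∂(σ n)
          + (q - 2) / (n / a - 2) * (Gamma a / Gamma (n - a) * homogSobolevNormSq n (n - 2 * a) f))
        * chordalMass n 0 ^ (2 / q - 1) := by
  have hn := natCast_half_pos (n := n)
  have hna : (n : ℝ) / (n / a) = a := div_div_cancel₀ (by linarith)
  have ha : a < n / 2 := hna ▸ natCast_div_lt_half (hq.trans_le hqa)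
  have hlift := isBoundedMeasurable_sphereLift ha₀.le f
  have hθ : (q - 2) / (n / a - 2) ≤ 1 := div_le_one_of_le₀ (by linarith) (by linarith)
  have hθ₀ : 0 ≤ (q - 2) / (n / a - 2) := div_nonneg (by linarith) (by linarith)
  have hN : 0 ≤ Gamma a / Gamma (n - a) * homogSobolevNormSq n (n - 2 * a) f := by
    have := Gamma_pos_of_pos ha₀
    have := Gamma_pos_of_pos (show 0 < n - a by linarith)
    exact mul_nonneg (by positivity) (integral_nonneg fun ξ => by positivity)
  have hself : ∫ x, |sphereLift a f x| ^ (2 : ℝ) ∂(σ n)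
      = sphereInner (sphereLift a f) (sphereLift a f) := by
    simp only [rpow_two, sq_abs, sphereInner, ← sq]
  refine rpow_integral_abs_rpow_le_of_forall_sq_sphereInner_le hq hlift
    (add_nonneg (mul_nonneg (by linarith) (integral_nonneg fun x => by positivity))
      (mul_nonneg hθ₀ hN)) fun h hh => ?_
  rw [hself]
  refine sq_sphereInner_le_of_forall_sphericalPoly hq hqa (hlift.memLp 2) hN
    (fun k P hP => ?_) (hh.memLp 2)
  rw [hna]
  exact sq_sphereInner_sphereLift_le ha₀ ha f (isBoundedMeasurable_of_mem_sphericalPoly hP)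

theorem rpow_integral_abs_rpow_mul_one_add_sq_norm_le {a : ℝ} (ha₀ : 0 < a) (hq : 2 < q)
    (hqa : q ≤ n / a) (f : 𝓢(𝔼 n, ℝ)) :
    (∫ x, |f x| ^ q * (1 + ‖x‖ ^ 2) ^ (-(n - a * q))) ^ (2 / q)
      ≤ (q - 2) / (n / a - 2) * (Gamma a / Gamma (n - a)) * 2 ^ (2 * a - n * (2 / q))
          * chordalMass n 0 ^ (2 / q - 1) * homogSobolevNormSq n (n - 2 * a) f
        + (1 - (q - 2) / (n / a - 2)) * 2 ^ (n * (1 - 2 / q)) * chordalMass n 0 ^ (2 / q - 1)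
          * ∫ x, |f x| ^ 2 * (1 + ‖x‖ ^ 2) ^ (-(n - 2 * a)) := by
  have hsphere := rpow_integral_abs_sphereLift_rpow_le ha₀ hq hqa f
  rw [integral_abs_sphereLift_rpow, integral_abs_sphereLift_rpow,
    mul_rpow (by positivity) (integral_nonneg fun x => by positivity), ← rpow_mul two_pos.le,
    show (n - a * q) * (2 / q) = -(2 * a - n * (2 / q)) by field_simp; ring,
    rpow_neg two_pos.le, inv_mul_le_iff₀ (by positivity), mul_comm a 2] at hsphere
  simp only [rpow_two] at hsphere
  refine hsphere.trans_eq ?_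
  rw [show n * (1 - 2 / q) = (2 * a - n * (2 / q)) + (n - 2 * a) by ring, rpow_add two_pos]
  ring

end Subcritical

end FractionalInterpolation

/-- At `q = q⋆` this is the sharp fractional Sobolev inequality. -/
theorem weighted_fractional_interpolation_general (n : ℕ) (s qstar q β κ a b : ℝ)
    (hs : s ∈ Set.Ioo (0 : ℝ) (n : ℝ))
    (hqstar : qstar = 2 * n / (n - s))
    (hq : q ∈ Set.Ioc 2 qstar)
    (hβ : β = 2 * n * (1 - q / qstar))
    (hκ : κ = Gamma ((n - s) / 2) / Gamma ((n + s) / 2))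
    (ha : a = (q - 2) / (qstar - 2) * κ * 2 ^ ((n : ℝ) * (2 / qstar - 2 / q)) *
      (2 * π ^ (((n : ℝ) + 1) / 2) / Gamma (((n : ℝ) + 1) / 2)) ^ (2 / q - 1))
    (hb : b = (qstar - q) / (qstar - 2) * 2 ^ ((n : ℝ) * (1 - 2 / q)) *
      (2 * π ^ (((n : ℝ) + 1) / 2) / Gamma (((n : ℝ) + 1) / 2)) ^ (2 / q - 1))
    (f : 𝓢(EuclideanSpace ℝ (Fin n), ℝ)) :
    (∫ x : EuclideanSpace ℝ (Fin n), |f x| ^ q * (1 + ‖x‖ ^ 2) ^ (-β / 2)) ^ (2 / q)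
      ≤ a * homogSobolevNormSq n s f
        + b * ∫ x : EuclideanSpace ℝ (Fin n), |f x| ^ 2 * (1 + ‖x‖ ^ 2) ^ (-s) := by
  obtain ⟨hs₀, hsn⟩ := hs
  obtain ⟨hq₂, hqq⟩ := hq
  have hn : (0 : ℝ) < n := hs₀.trans hsn
  have : NeZero n := ⟨by rintro rfl; simp at hn⟩
  have hqstar' : n / ((n - s) / 2) = qstar := by
    rw [hqstar]
    field_simp
  have hns : n - s = n * (2 / qstar) := by
    have : (n : ℝ) - s ≠ 0 := by linarith
    rw [hqstar]
    field_simp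
  have hθ : (qstar - q) / (qstar - 2) = 1 - (q - 2) / (qstar - 2) := by
    have : qstar - 2 ≠ 0 := by linarith
    field_simp
    ring
  have hexp : (n : ℝ) * (2 / qstar - 2 / q) = 2 * ((n - s) / 2) - n * (2 / q) := by
    rw [mul_sub, ← hns]
    ring
  have hweight : -β / 2 = -(n - (n - s) / 2 * q) := by
    rw [hβ, hns]
    ring
  have hmain := FractionalInterpolation.rpow_integral_abs_rpow_mul_one_add_sq_norm_le
    (a := (n - s) / 2) (by linarith) hq₂ (hqq.trans_eq hqstar'.symm) f
  rwa [hqstar', FractionalInterpolation.chordalMass_zero, ← hweight,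
    show n - (n - s) / 2 = (n + s) / 2 by ring, show n - 2 * ((n - s) / 2) = s by ring,
    ← hκ, ← hθ, ← hexp, ← ha, ← hb] at hmain

/-- Weighted fractional interpolation inequality on Euclidean space (Theorem 1.4). -/
theorem weighted_fractional_interpolation (n : ℕ) (hn : 1 ≤ n) (s qstar q β κ a b : ℝ)
    (hs : s ∈ Set.Ioo (0 : ℝ) (n : ℝ))
    (hqstar : qstar = 2 * n / (n - s))
    (hq : q ∈ Set.Ioo 2 qstar)
    (hβ : β = 2 * n * (1 - q / qstar))
    (hκ : κ = Gamma ((n - s) / 2) / Gamma ((n + s) / 2))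
    (ha : a = (q - 2) / (qstar - 2) * κ * 2 ^ ((n : ℝ) * (2 / qstar - 2 / q)) *
      (2 * π ^ (((n : ℝ) + 1) / 2) / Gamma (((n : ℝ) + 1) / 2)) ^ (2 / q - 1))
    (hb : b = (qstar - q) / (qstar - 2) * 2 ^ ((n : ℝ) * (1 - 2 / q)) *
      (2 * π ^ (((n : ℝ) + 1) / 2) / Gamma (((n : ℝ) + 1) / 2)) ^ (2 / q - 1)) :
    ∀ f : SchwartzMap (EuclideanSpace ℝ (Fin n)) ℝ,
      (∫ x : EuclideanSpace ℝ (Fin n), |f x| ^ q * (1 + ‖x‖ ^ 2) ^ (-β / 2)) ^ (2 / q)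
        ≤ a * homogSobolevNormSq n s f
          + b * ∫ x : EuclideanSpace ℝ (Fin n), |f x| ^ 2 * (1 + ‖x‖ ^ 2) ^ (-s) :=
  weighted_fractional_interpolation_general n s qstar q β κ a b hs hqstar
    (Set.Ioo_subset_Ioc_self hq) hβ hκ ha hb
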